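/- arXiv:math-ph/0412009 — 5 statements merged into one kernel-verified Lean document; each statement's English description precedes it below -/
import Mathlib

section
/- Quantum mutual information bounds Wehrl mutual information: Let H₁, H₂ be finite-dimensional complex Hilbert spaces, let (Ω₁,μ) and (Ω₂,ν) be measure spaces, and let a ↦ φ_a ∈ H₁ and b ↦ θ_b ∈ H₂ be measurable families of unit vectors satisfying the resolutions of identity ∫_{Ω₁} |φ_a⟩⟨φ_a| dμ(a) = id_{H₁} and ∫_{Ω₂} |θ_b⟩⟨θ_b| dν(b) = id_{H₂} (Bochner integrals of operator-valued functions). For a density matrix ρ₁₂ on H₁⊗H₂ define the Wehrl entropies S^W[ρ₁₂] = ∫∫ φ( ⟨φ_a⊗θ_b, ρ₁₂ (φ_a⊗θ_b)⟩ ) dμ(a) dν(b), S^W[ρ₁] = ∫ φ( ⟨φ_a, ρ₁ φ_a⟩ ) dμ(a), and S^W[ρ₂] = ∫ φ( ⟨θ_b, ρ₂ θ_b⟩ ) dν(b), where φ(x) = −x ln x (with φ(0)=0) and the inner products are real since ρ₁₂ is positive semidefinite. Then S^W[ρ₁] + S^W[ρ₂] − S^W[ρ₁₂] ≤ S[ρ₁]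 + S[ρ₂] − S[ρ₁₂]. -/
open Matrix Kronecker Real
open scoped ComplexOrder

/-- Von Neumann entropy of a (Hermitian) matrix: the sum of `-λ ln λ` over its
eigenvalues, with the convention `0 ln 0 = 0`. -/
noncomputable def entropy {n : Type*} [Fintype n] [DecidableEq n]
    (A : Matrix n n ℂ) : ℝ :=
  if h : A.IsHermitian then ∑ i, Real.negMulLog (h.eigenvalues i) else 0

/-- Partial trace over the first factor of a twofold tensor product. -/
noncomputable def ptraceFst {m k : Type*} [Fintype m]
    (ρ : Matrix (m × k) (m × k) ℂ) : Matrix k k ℂ :=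
  Matrix.of fun i j => ∑ a : m, ρ (a, i) (a, j)

/-- Partial trace over the second factor of a twofold tensor product. -/
noncomputable def ptraceSnd {m k : Type*} [Fintype k]
    (ρ : Matrix (m × k) (m × k) ℂ) : Matrix m m ℂ :=
  Matrix.of fun i j => ∑ a : k, ρ (i, a) (j, a)

/-- Partial trace over the first factor of a threefold tensor product
(indexed as `(H₁ ⊗ H₂) ⊗ H₃`). -/
noncomputable def ptraceFst₃ {a b c : Type*} [Fintype a]
    (ρ : Matrix ((a × b) × c) ((a × b) × c) ℂ) : Matrix (b × c) (b × c) ℂ :=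
  Matrix.of fun p q => ∑ i : a, ρ ((i, p.1), p.2) ((i, q.1), q.2)

open MeasureTheory

/-- Wehrl entropy of `ρ` with respect to the family of coherent states `φ`. -/
noncomputable def wehrlEntropy {n Ω : Type*} [Fintype n] [MeasurableSpace Ω]
    (μ : Measure Ω) (φ : Ω → n → ℂ) (ρ : Matrix n n ℂ) : ℝ :=
  ∫ a, Real.negMulLog ((star (φ a) ⬝ᵥ ρ *ᵥ (φ a)).re) ∂μ


theorem wehrl_inner_toLp {X : Type*} [MeasurableSpace X] (m : Measure X)
    (f g : X → ℂ) (hf : MemLp f 2 m) (hg : MemLp g 2 m) :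
    inner ℂ (hf.toLp f) (hg.toLp g) = ∫ x, g x * (starRingEnd ℂ) (f x) ∂m := by
  rw [MeasureTheory.L2.inner_def]
  apply integral_congr_ae
  filter_upwards [hf.coeFn_toLp, hg.coeFn_toLp] with x h1 h2
  rw [h1, h2, RCLike.inner_apply]

theorem wehrl_bessel {X κ : Type*} [MeasurableSpace X] [Fintype κ] [DecidableEq κ]
    (m : Measure X) [IsFiniteMeasure m]
    (χ : X → κ → ℂ) (hχm : ∀ j, Measurable fun x => χ x j) (hχb : ∀ x j, ‖χ x j‖ ≤ 1)
    (hχ : ∀ j j', (∫ x, χ x j * (starRingEnd ℂ) (χ x j') ∂m) = if j = j' then 1 else 0)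
    (g : X → ℂ) (hg : Measurable g) (C : ℝ) (hC : ∀ x, ‖g x‖ ≤ C) :
    ∑ j, ‖∫ x, g x * (starRingEnd ℂ) (χ x j) ∂m‖ ^ 2 ≤ ∫ x, ‖g x‖ ^ 2 ∂m := by
  have hL : ∀ j, MemLp (fun x => χ x j) 2 m := fun j =>
    MemLp.of_bound (hχm j).aestronglyMeasurable 1 (Filter.Eventually.of_forall fun x => hχb x j)
  have hG : MemLp g 2 m :=
    MemLp.of_bound hg.aestronglyMeasurable C (Filter.Eventually.of_forall hC)
  have ho : Orthonormal ℂ (fun j => (hL j).toLp _) := by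
    rw [orthonormal_iff_ite]
    intro i j
    rw [wehrl_inner_toLp, hχ]
    simp [eq_comm]
  have h := ho.sum_inner_products_le (s := Finset.univ) (hG.toLp g)
  simp only [wehrl_inner_toLp] at h
  refine h.trans (le_of_eq ?_)
  have h2 := inner_self_eq_norm_sq_to_K (𝕜 := ℂ) (hG.toLp g)
  rw [wehrl_inner_toLp] at h2
  have h3 : ∀ x, g x * (starRingEnd ℂ) (g x) = ((‖g x‖ ^ 2 : ℝ) : ℂ) := by
    intro x; rw [Complex.mul_conj, Complex.normSq_eq_norm_sq]
  simp only [h3] at h2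
  rw [integral_complex_ofReal] at h2
  have h4 : ((∫ x, ‖g x‖ ^ 2 ∂m : ℝ) : ℂ) = ((‖hG.toLp g‖ ^ 2 : ℝ) : ℂ) := by
    rw [h2]; simp
  exact (Complex.ofReal_injective h4).symm

theorem wehrl_scalar (l u t : ℝ) (hl : 0 ≤ l) (hu : 0 ≤ u) (ht : 0 < t) (c F : ℂ) :
    2 * (l * ((starRingEnd ℂ) c * F).re) - (u + t * l) * ‖F‖ ^ 2 ≤ ‖c‖ ^ 2 * (l ^ 2 / (u + t * l)) := by
  have h0 : 0 ≤ u + t * l := by positivity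
  rcases hl.eq_or_lt with h | h
  · subst h; simp; positivity
  have h1 : 0 < u + t * l := by positivity
  have h2 : ((starRingEnd ℂ) c * F).re ≤ ‖c‖ * ‖F‖ := by
    refine (Complex.re_le_norm _).trans ?_
    simp
  have h3 : ‖c‖ ^ 2 * (l ^ 2 / (u + t * l)) - (2 * (l * (‖c‖ * ‖F‖)) - (u + t * l) * ‖F‖ ^ 2)
      = (l * ‖c‖ - (u + t * l) * ‖F‖) ^ 2 / (u + t * l) := by
    field_simp; ring
  have h4 : 0 ≤ (l * ‖c‖ - (u + t * l) * ‖F‖) ^ 2 / (u + t * l) := by positivity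
  nlinarith [mul_le_mul_of_nonneg_left h2 hl]

theorem wehrl_fixed_t {X ι κ : Type*} [MeasurableSpace X] [Fintype ι] [Fintype κ]
    [DecidableEq ι] [DecidableEq κ]
    (m : Measure X) [IsFiniteMeasure m]
    (ψ : X → ι → ℂ) (hψm : ∀ j, Measurable fun x => ψ x j) (hψb : ∀ x j, ‖ψ x j‖ ≤ 1)
    (hψ : ∀ j j', (∫ x, ψ x j * (starRingEnd ℂ) (ψ x j') ∂m) = if j = j' then 1 else 0)
    (χ : X → κ → ℂ) (hχm : ∀ j, Measurable fun x => χ x j) (hχb : ∀ x j, ‖χ x j‖ ≤ 1)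
    (hχ : ∀ j j', (∫ x, χ x j * (starRingEnd ℂ) (χ x j') ∂m) = if j = j' then 1 else 0)
    (W : κ → ι → ℂ) (hW : ∀ x i, ψ x i = ∑ j, (starRingEnd ℂ) (W j i) * χ x j)
    (l : ι → ℝ) (hl : ∀ i, 0 ≤ l i) (u : κ → ℝ) (hu : ∀ j, 0 ≤ u j)
    (p q : X → ℝ) (hp : ∀ x, p x = ∑ i, l i * ‖ψ x i‖ ^ 2)
    (hq : ∀ x, q x = ∑ j, u j * ‖χ x j‖ ^ 2) (t : ℝ) (ht : 0 < t) :
    ∫ x, p x ^ 2 / (q x + t * p x) ∂m ≤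
      ∑ i, ∑ j, ‖W j i‖ ^ 2 * (l i ^ 2 / (u j + t * l i)) := by
  have hp0 : ∀ x, 0 ≤ p x := fun x => by
    rw [hp]; exact Finset.sum_nonneg fun i _ => mul_nonneg (hl i) (by positivity)
  have hq0 : ∀ x, 0 ≤ q x := fun x => by
    rw [hq]; exact Finset.sum_nonneg fun i _ => mul_nonneg (hu i) (by positivity)
  have hpm : Measurable p := by
    have : p = fun x => ∑ i, l i * ‖ψ x i‖ ^ 2 := funext hp
    rw [this]; fun_prop
  have hqm : Measurable q := by
    have : q = fun x => ∑ i, u i * ‖χ x i‖ ^ 2 := funext hq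
    rw [this]; fun_prop
  set f : X → ℝ := fun x => p x / (q x + t * p x) with hf
  have hfm : Measurable f := by fun_prop
  have hf0 : ∀ x, 0 ≤ f x := fun x =>
    div_nonneg (hp0 x) (add_nonneg (hq0 x) (mul_nonneg ht.le (hp0 x)))
  have hfb : ∀ x, f x ≤ 1 / t := by
    intro x
    rcases (hp0 x).eq_or_lt with h | h
    · simp only [hf, ← h]; simp; positivity
    · have := hq0 x
      simp only [hf]
      rw [div_le_div_iff₀ (by positivity) ht]
      nlinarith
  -- bounded functions are integrable
  have hint : ∀ (G : X → ℝ), Measurable G → (∃ C, ∀ x, ‖G x‖ ≤ C) → Integrable G m := by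
    rintro G hG ⟨C, hC⟩
    exact Integrable.of_bound hG.aestronglyMeasurable C (Filter.Eventually.of_forall hC)
  have hintC : ∀ (G : X → ℂ), Measurable G → (∃ C, ∀ x, ‖G x‖ ≤ C) → Integrable G m := by
    rintro G hG ⟨C, hC⟩
    exact Integrable.of_bound hG.aestronglyMeasurable C (Filter.Eventually.of_forall hC)
  have hfn : ∀ x, |f x| ≤ 1 / t := fun x => by rw [abs_of_nonneg (hf0 x)]; exact hfb x
  have i1 : ∀ i, Integrable (fun x => f x * ‖ψ x i‖ ^ 2) m := fun i => by
    refine hint _ (by fun_prop) ⟨1 / t * 1 ^ 2, fun x => ?_⟩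
    rw [norm_mul, norm_pow, norm_norm, Real.norm_eq_abs]
    gcongr
    · exact hfn x
    · exact hψb x i
  have i2 : ∀ i, Integrable (fun x => f x ^ 2 * ‖ψ x i‖ ^ 2) m := fun i => by
    refine hint _ (by fun_prop) ⟨(1 / t) ^ 2 * 1 ^ 2, fun x => ?_⟩
    rw [norm_mul, norm_pow, norm_pow, norm_norm, Real.norm_eq_abs]
    gcongr
    · exact hfn x
    · exact hψb x i
  have i3 : ∀ i, Integrable (fun x => f x ^ 2 * ‖χ x i‖ ^ 2) m := fun i => by
    refine hint _ (by fun_prop) ⟨(1 / t) ^ 2 * 1 ^ 2, fun x => ?_⟩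
    rw [norm_mul, norm_pow, norm_pow, norm_norm, Real.norm_eq_abs]
    gcongr
    · exact hfn x
    · exact hχb x i
  have i4 : ∀ i j, Integrable (fun x => (f x : ℂ) * χ x j * (starRingEnd ℂ) (ψ x i)) m := by
    intro i j
    refine hintC _ ?_ ⟨(1 / t) * 1 * 1, fun x => ?_⟩
    · have := hχm j
      have h2 := hψm i
      have h3 : Measurable fun x => (starRingEnd ℂ) (ψ x i) := Complex.continuous_conj.measurable.comp h2
      fun_prop
    · rw [norm_mul, norm_mul, Complex.norm_real, Complex.norm_conj, Real.norm_eq_abs]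
      gcongr
      · exact hfn x
      · exact hχb x j
      · exact hψb x i
  set F : ι → κ → ℂ := fun i j => ∫ x, (f x : ℂ) * χ x j * (starRingEnd ℂ) (ψ x i) ∂m with hF
  -- Bessel, rows
  have b1 : ∀ j, ∑ i, ‖F i j‖ ^ 2 ≤ ∫ x, f x ^ 2 * ‖χ x j‖ ^ 2 ∂m := by
    intro j
    have hm : Measurable fun x => (f x : ℂ) * χ x j := by have := hχm j; fun_prop
    have := wehrl_bessel m ψ hψm hψb hψ (fun x => (f x : ℂ) * χ x j) hm (1 / t * 1) (fun x => by
      rw [norm_mul, Complex.norm_real, Real.norm_eq_abs]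
      gcongr
      · exact hfn x
      · exact hχb x j)
    refine this.trans (le_of_eq ?_)
    congr 1; ext x; rw [norm_mul, Complex.norm_real, mul_pow, Real.norm_eq_abs, sq_abs]
  have b2 : ∀ i, ∑ j, ‖F i j‖ ^ 2 ≤ ∫ x, f x ^ 2 * ‖ψ x i‖ ^ 2 ∂m := by
    intro i
    have hm : Measurable fun x => (f x : ℂ) * ψ x i := by have := hψm i; fun_prop
    have := wehrl_bessel m χ hχm hχb hχ (fun x => (f x : ℂ) * ψ x i) hm (1 / t * 1) (fun x => by
      rw [norm_mul, Complex.norm_real, Real.norm_eq_abs]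
      gcongr
      · exact hfn x
      · exact hψb x i)
    refine le_trans (le_of_eq ?_) (this.trans (le_of_eq ?_))
    · congr 1; ext j; congr 1
      rw [← Complex.norm_conj, hF, ← integral_conj]
      congr 2; ext x; simp; ring
    · congr 1; ext x; rw [norm_mul, Complex.norm_real, mul_pow, Real.norm_eq_abs, sq_abs]
  have c1 : ∀ i, ∑ j, ((starRingEnd ℂ) (W j i) * F i j).re = ∫ x, f x * ‖ψ x i‖ ^ 2 ∂m := by
    intro i
    have e1 : ∑ j, ((starRingEnd ℂ) (W j i) * F i j) = ((∫ x, f x * ‖ψ x i‖ ^ 2 ∂m : ℝ) : ℂ) := by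
      rw [← integral_complex_ofReal]
      simp only [hF]
      simp_rw [← integral_const_mul]
      rw [← integral_finsetSum _ (fun j _ => (i4 i j).const_mul _)]
      congr 1; ext x
      have : (((f x * ‖ψ x i‖ ^ 2 : ℝ)) : ℂ) = f x * (ψ x i * (starRingEnd ℂ) (ψ x i)) := by
        rw [Complex.mul_conj, Complex.normSq_eq_norm_sq]; push_cast; ring
      rw [this]
      nth_rewrite 2 [hW x i]
      rw [Finset.sum_mul, Finset.mul_sum]
      refine Finset.sum_congr rfl fun j _ => by ring
    rw [← Complex.re_sum, e1, Complex.ofReal_re]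
  have key : ∀ x, p x ^ 2 / (q x + t * p x) =
      ∑ i, (2 * l i) * (f x * ‖ψ x i‖ ^ 2) - ∑ j, u j * (f x ^ 2 * ‖χ x j‖ ^ 2)
        - ∑ i, (t * l i) * (f x ^ 2 * ‖ψ x i‖ ^ 2) := by
    intro x
    have s1 : ∑ i, (2 * l i) * (f x * ‖ψ x i‖ ^ 2) = 2 * f x * p x := by
      rw [hp, Finset.mul_sum]; exact Finset.sum_congr rfl fun _ _ => by ring
    have s2 : ∑ j, u j * (f x ^ 2 * ‖χ x j‖ ^ 2) = f x ^ 2 * q x := by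
      rw [hq, Finset.mul_sum]; exact Finset.sum_congr rfl fun _ _ => by ring
    have s3 : ∑ i, (t * l i) * (f x ^ 2 * ‖ψ x i‖ ^ 2) = t * f x ^ 2 * p x := by
      rw [hp, Finset.mul_sum]; exact Finset.sum_congr rfl fun _ _ => by ring
    rw [s1, s2, s3]
    rcases (hp0 x).eq_or_lt with h | h
    · simp only [hf, ← h]; simp
    · have := hq0 x
      have : q x + t * p x ≠ 0 := by positivity
      simp only [hf]
      field_simp
      ring
  have I1 : Integrable (fun x => ∑ i, (2 * l i) * (f x * ‖ψ x i‖ ^ 2)) m :=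
    integrable_finsetSum _ fun i _ => (i1 i).const_mul _
  have I2 : Integrable (fun x => ∑ j, u j * (f x ^ 2 * ‖χ x j‖ ^ 2)) m :=
    integrable_finsetSum _ fun i _ => (i3 i).const_mul _
  have I3 : Integrable (fun x => ∑ i, (t * l i) * (f x ^ 2 * ‖ψ x i‖ ^ 2)) m :=
    integrable_finsetSum _ fun i _ => (i2 i).const_mul _
  have I12 : Integrable (fun x => ∑ i, (2 * l i) * (f x * ‖ψ x i‖ ^ 2) -
      ∑ j, u j * (f x ^ 2 * ‖χ x j‖ ^ 2)) m := I1.sub I2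
  simp only [key]
  rw [integral_sub I12 I3, integral_sub I1 I2,
    integral_finsetSum _ fun i _ => (i1 i).const_mul _,
    integral_finsetSum _ fun i _ => (i3 i).const_mul _,
    integral_finsetSum _ fun i _ => (i2 i).const_mul _]
  simp only [integral_const_mul]
  have d1 : ∑ j, u j * ∑ i, ‖F i j‖ ^ 2 ≤ ∑ j, u j * ∫ x, f x ^ 2 * ‖χ x j‖ ^ 2 ∂m :=
    Finset.sum_le_sum fun j _ => mul_le_mul_of_nonneg_left (b1 j) (hu j)
  have d2 : ∑ i, t * l i * ∑ j, ‖F i j‖ ^ 2 ≤ ∑ i, t * l i * ∫ x, f x ^ 2 * ‖ψ x i‖ ^ 2 ∂m :=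
    Finset.sum_le_sum fun i _ => mul_le_mul_of_nonneg_left (b2 i) (mul_nonneg ht.le (hl i))
  have d3 : ∑ i, ∑ j, (2 * (l i * ((starRingEnd ℂ) (W j i) * F i j).re)
      - (u j + t * l i) * ‖F i j‖ ^ 2) ≤ ∑ i, ∑ j, ‖W j i‖ ^ 2 * (l i ^ 2 / (u j + t * l i)) :=
    Finset.sum_le_sum fun i _ => Finset.sum_le_sum fun j _ =>
      wehrl_scalar _ _ _ (hl i) (hu j) ht _ _
  have d4 : ∑ i, ∑ j, (2 * (l i * ((starRingEnd ℂ) (W j i) * F i j).re)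
      - (u j + t * l i) * ‖F i j‖ ^ 2) =
      ∑ i, 2 * l i * ∑ j, ((starRingEnd ℂ) (W j i) * F i j).re
       - ∑ j, u j * ∑ i, ‖F i j‖ ^ 2 - ∑ i, t * l i * ∑ j, ‖F i j‖ ^ 2 := by
    simp only [Finset.mul_sum]
    rw [Finset.sum_comm (s := (Finset.univ : Finset κ)), ← Finset.sum_sub_distrib, ← Finset.sum_sub_distrib]
    refine Finset.sum_congr rfl fun i _ => ?_
    rw [← Finset.sum_sub_distrib, ← Finset.sum_sub_distrib]
    exact Finset.sum_congr rfl fun j _ => by ring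
  simp only [c1] at d4
  linarith

theorem wehrl_ii_sum {ι : Type*} [Fintype ι] (f : ι → ℝ → ℝ) (a b : ℝ)
    (h : ∀ i, IntervalIntegrable (f i) volume a b) :
    IntervalIntegrable (fun t => ∑ i, f i t) volume a b := by
  have := IntervalIntegrable.sum Finset.univ (f := f) (fun i _ => h i)
  have e : (fun t => ∑ i, f i t) = ∑ i, f i := by ext t; simp
  rw [e]; exact this

theorem wehrl_ftc (p q ε : ℝ) (hp : 0 ≤ p) (hq : 0 ≤ q) (hε : 0 < ε) (hε1 : ε ≤ 1) :
    IntervalIntegrable (fun t => p ^ 2 / (q + t * p)) volume ε (1 / ε) ∧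
    ∫ t in ε..(1 / ε), p ^ 2 / (q + t * p) =
      p * (Real.log (p + ε * q) - Real.log (q + ε * p)) - p * Real.log ε := by
  rcases hp.eq_or_lt with h | h
  · subst h; simp
  have hle : ε ≤ 1 / ε := by rw [le_div_iff₀ hε]; nlinarith
  have hpos : ∀ t ∈ Set.uIcc ε (1 / ε), 0 < q + t * p := by
    intro t ht
    rw [Set.uIcc_of_le hle] at ht
    have : 0 < t := hε.trans_le ht.1
    positivity
  have hi : IntervalIntegrable (fun t => p ^ 2 / (q + t * p)) volume ε (1 / ε) := by
    apply ContinuousOn.intervalIntegrable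
    apply ContinuousOn.div (by fun_prop) (by fun_prop)
    intro t ht; exact (hpos t ht).ne'
  refine ⟨hi, ?_⟩
  have hd : ∀ t ∈ Set.uIcc ε (1 / ε),
      HasDerivAt (fun t => p * Real.log (q + t * p)) (p ^ 2 / (q + t * p)) t := by
    intro t ht
    have h1 : HasDerivAt (fun t => q + t * p) p t := by
      simpa using ((hasDerivAt_id t).mul_const p).const_add q
    have h2 := (h1.log (hpos t ht).ne').const_mul p
    have h3 : p ^ 2 / (q + t * p) = p * (p / (q + t * p)) := by ring
    rw [h3]; exact h2
  rw [intervalIntegral.integral_eq_sub_of_hasDerivAt hd hi]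
  have : q + 1 / ε * p = (p + ε * q) / ε := by field_simp; ring
  rw [this, Real.log_div (by positivity) hε.ne']
  ring

theorem wehrl_logbound (z y : ℝ) (hz : 0 < z) (hzy : z ≤ y) (hy : y ≤ 2) :
    |Real.log y| ≤ |Real.log z| + 1 := by
  have h1 : Real.log z ≤ Real.log y := Real.log_le_log hz hzy
  have h2 : Real.log y ≤ 1 := by
    have := Real.log_le_sub_one_of_pos (hz.trans_le hzy); linarith
  rw [abs_le]
  constructor
  · have := neg_abs_le (Real.log z); linarith
  · have := abs_nonneg (Real.log z); linarith

theorem wehrl_selflog (z : ℝ) (hz : 0 ≤ z) (hz1 : z ≤ 1) : z * |Real.log z| ≤ 1 := by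
  rcases hz.eq_or_lt with h | h
  · subst h; simp
  · have := Real.abs_log_mul_self_lt z h hz1
    rw [abs_mul, abs_of_pos h] at this
    linarith

theorem wehrl_hbound (p q ε K : ℝ) (hp : 0 ≤ p) (hq : 0 ≤ q) (hp1 : p ≤ 1) (hq1 : q ≤ 1)
    (hpq : q = 0 → p = 0) (hK : p * |Real.log q| ≤ K) (hε : 0 < ε) (hε1 : ε ≤ 1) :
    ‖p * (Real.log (p + ε * q) - Real.log (q + ε * p))‖ ≤ K + 3 := by
  rcases hp.eq_or_lt with h | h
  · subst h; simp at *; linarith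
  have hq' : 0 < q := hq.lt_of_ne fun h' => h.ne' (hpq h'.symm)
  have h1 := wehrl_logbound p (p + ε * q) h (by nlinarith) (by nlinarith)
  have h2 := wehrl_logbound q (q + ε * p) hq' (by nlinarith) (by nlinarith)
  have h3 := wehrl_selflog p hp hp1
  rw [norm_mul, Real.norm_eq_abs, Real.norm_eq_abs, abs_of_pos h]
  have h4 := abs_sub (Real.log (p + ε * q)) (Real.log (q + ε * p))
  have h5 : |Real.log (p + ε * q) - Real.log (q + ε * p)| ≤ |Real.log p| + 1 + (|Real.log q| + 1) := by
    linarith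
  have := mul_le_mul_of_nonneg_left h5 hp
  nlinarith

theorem wehrl_htendsto (p q : ℝ) (hpq : q = 0 → p = 0) :
    Filter.Tendsto (fun ε => p * (Real.log (p + ε * q) - Real.log (q + ε * p)))
      (nhdsWithin 0 (Set.Ioi 0)) (nhds (p * (Real.log p - Real.log q))) := by
  by_cases h : p = 0
  · subst h; simp
  have hq : q ≠ 0 := fun h' => h (hpq h')
  apply Filter.Tendsto.mono_left _ nhdsWithin_le_nhds
  have : ContinuousAt (fun ε : ℝ => p * (Real.log (p + ε * q) - Real.log (q + ε * p))) 0 := by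
    apply ContinuousAt.mul continuousAt_const
    apply ContinuousAt.sub
    · apply ContinuousAt.log (by fun_prop); simpa using h
    · apply ContinuousAt.log (by fun_prop); simpa using hq
  simpa [ContinuousAt] using this

theorem wehrl_dpi {X ι κ : Type*} [MeasurableSpace X] [Fintype ι] [Fintype κ]
    [DecidableEq ι] [DecidableEq κ]
    (m : Measure X) [IsFiniteMeasure m]
    (ψ : X → ι → ℂ) (hψm : ∀ j, Measurable fun x => ψ x j) (hψb : ∀ x j, ‖ψ x j‖ ≤ 1)
    (hψ : ∀ j j', (∫ x, ψ x j * (starRingEnd ℂ) (ψ x j') ∂m) = if j = j' then 1 else 0)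
    (χ : X → κ → ℂ) (hχm : ∀ j, Measurable fun x => χ x j) (hχb : ∀ x j, ‖χ x j‖ ≤ 1)
    (hχ : ∀ j j', (∫ x, χ x j * (starRingEnd ℂ) (χ x j') ∂m) = if j = j' then 1 else 0)
    (W : κ → ι → ℂ) (hW : ∀ x i, ψ x i = ∑ j, (starRingEnd ℂ) (W j i) * χ x j)
    (l : ι → ℝ) (hl : ∀ i, 0 ≤ l i) (u : κ → ℝ) (hu : ∀ j, 0 ≤ u j)
    (p q : X → ℝ) (hp : ∀ x, p x = ∑ i, l i * ‖ψ x i‖ ^ 2)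
    (hq : ∀ x, q x = ∑ j, u j * ‖χ x j‖ ^ 2)
    (hp1 : ∀ x, p x ≤ 1) (hq1 : ∀ x, q x ≤ 1) (hpq : ∀ x, q x = 0 → p x = 0)
    (K : ℝ) (hK : ∀ x, p x * |Real.log (q x)| ≤ K)
    (hlu : ∀ i j, u j = 0 → ‖W j i‖ ^ 2 * l i = 0)
    (hmass : ∫ x, p x ∂m = ∑ i, ∑ j, ‖W j i‖ ^ 2 * l i) :
    ∫ x, p x * (Real.log (p x) - Real.log (q x)) ∂m ≤
      ∑ i, ∑ j, ‖W j i‖ ^ 2 * (l i * (Real.log (l i) - Real.log (u j))) := by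
  have hp0 : ∀ x, 0 ≤ p x := fun x => by
    rw [hp]; exact Finset.sum_nonneg fun i _ => mul_nonneg (hl i) (by positivity)
  have hq0 : ∀ x, 0 ≤ q x := fun x => by
    rw [hq]; exact Finset.sum_nonneg fun i _ => mul_nonneg (hu i) (by positivity)
  have hpm : Measurable p := by
    have : p = fun x => ∑ i, l i * ‖ψ x i‖ ^ 2 := funext hp
    rw [this]; fun_prop
  have hqm : Measurable q := by
    have : q = fun x => ∑ i, u i * ‖χ x i‖ ^ 2 := funext hq
    rw [this]; fun_prop
  have hpi : Integrable p m := Integrable.of_bound hpm.aestronglyMeasurable 1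
    (Filter.Eventually.of_forall fun x => by
      rw [Real.norm_eq_abs, abs_of_nonneg (hp0 x)]; exact hp1 x)
  have hev : ∀ᶠ ε : ℝ in nhdsWithin 0 (Set.Ioi 0), 0 < ε ∧ ε ≤ 1 := by
    have h1 : ∀ᶠ ε : ℝ in nhdsWithin 0 (Set.Ioi 0), ε ∈ Set.Ioc (0:ℝ) 1 :=
      Ioc_mem_nhdsGT one_pos
    exact h1
  have main : ∀ ε : ℝ, 0 < ε → ε ≤ 1 →
      ∫ x, p x * (Real.log (p x + ε * q x) - Real.log (q x + ε * p x)) ∂m ≤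
      ∑ i, ∑ j, ‖W j i‖ ^ 2 * (l i * (Real.log (l i + ε * u j) - Real.log (u j + ε * l i))) := by
    intro ε hε hε1
    have hle : ε ≤ 1 / ε := by rw [le_div_iff₀ hε]; nlinarith
    have hprod : Integrable (Function.uncurry fun (t : ℝ) (x : X) => p x ^ 2 / (q x + t * p x))
        ((volume.restrict (Set.uIoc ε (1 / ε))).prod m) := by
      have hfin : IsFiniteMeasure (volume.restrict (Set.uIoc ε (1 / ε))) := by
        rw [Set.uIoc_of_le hle]; infer_instance
      have hae : ∀ᵐ z : ℝ × X ∂((volume.restrict (Set.uIoc ε (1 / ε))).prod m), ε ≤ z.1 := by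
        have : ∀ᵐ t : ℝ ∂(volume.restrict (Set.uIoc ε (1 / ε))), ε ≤ t := by
          filter_upwards [ae_restrict_mem measurableSet_uIoc] with t ht
          rw [Set.uIoc_of_le hle] at ht
          exact ht.1.le
        exact Measure.quasiMeasurePreserving_fst.ae this
      refine Integrable.of_bound (Measurable.aestronglyMeasurable ?_) (1 / ε) ?_
      · unfold Function.uncurry; fun_prop
      · filter_upwards [hae] with z hz
        have h1 := hp0 z.2
        have h2 := hq0 z.2
        have h3 : 0 ≤ z.1 := hε.le.trans hz
        simp only [Function.uncurry]
        rw [Real.norm_eq_abs, abs_of_nonneg (by positivity)]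
        rcases h1.eq_or_lt with h | h
        · rw [← h]; simp; positivity
        · have h4 : 0 < z.1 := hε.trans_le hz
          rw [div_le_div_iff₀ (by positivity) hε]
          have := hp1 z.2
          nlinarith [mul_le_mul_of_nonneg_right hz h1, mul_nonneg h1 hε.le]
    have hsw := MeasureTheory.intervalIntegral_integral_swap hprod
    have hI : IntervalIntegrable (fun t => ∫ x, p x ^ 2 / (q x + t * p x) ∂m) volume ε (1 / ε) := by
      rw [intervalIntegrable_iff]
      exact hprod.integral_prod_left
    have hS : IntervalIntegrable (fun t => ∑ i, ∑ j, ‖W j i‖ ^ 2 * (l i ^ 2 / (u j + t * l i)))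
        volume ε (1 / ε) := by
      apply wehrl_ii_sum
      intro i
      apply wehrl_ii_sum
      intro j
      exact (wehrl_ftc (l i) (u j) ε (hl i) (hu j) hε hε1).1.const_mul _
    have hmono := intervalIntegral.integral_mono_on hle hI hS (fun t ht =>
      wehrl_fixed_t m ψ hψm hψb hψ χ hχm hχb hχ W hW l hl u hu p q hp hq t (hε.trans_le ht.1))
    rw [hsw] at hmono
    have e1 : ∀ x, ∫ t in ε..(1 / ε), p x ^ 2 / (q x + t * p x) = _ := fun x =>
      (wehrl_ftc (p x) (q x) ε (hp0 x) (hq0 x) hε hε1).2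
    simp only [e1] at hmono
    rw [intervalIntegral.integral_finsetSum (fun i _ => by
      apply wehrl_ii_sum
      intro j
      exact (wehrl_ftc (l i) (u j) ε (hl i) (hu j) hε hε1).1.const_mul _)] at hmono
    have e2 : ∀ i, ∫ t in ε..(1 / ε), ∑ j, ‖W j i‖ ^ 2 * (l i ^ 2 / (u j + t * l i)) =
        ∑ j, ‖W j i‖ ^ 2 * (l i * (Real.log (l i + ε * u j) - Real.log (u j + ε * l i)))
          - (∑ j, ‖W j i‖ ^ 2 * l i) * Real.log ε := by
      intro i
      rw [intervalIntegral.integral_finsetSum (fun j _ =>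
        (wehrl_ftc (l i) (u j) ε (hl i) (hu j) hε hε1).1.const_mul _)]
      rw [Finset.sum_mul, ← Finset.sum_sub_distrib]
      refine Finset.sum_congr rfl fun j _ => ?_
      rw [intervalIntegral.integral_const_mul, (wehrl_ftc (l i) (u j) ε (hl i) (hu j) hε hε1).2]
      ring
    simp only [e2] at hmono
    rw [Finset.sum_sub_distrib, ← Finset.sum_mul, ← hmass, integral_sub, integral_mul_const] at hmono
    · linarith
    · refine Integrable.of_bound (Measurable.aestronglyMeasurable (by fun_prop)) (K + 3)
        (Filter.Eventually.of_forall fun x => ?_)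
      exact wehrl_hbound _ _ _ _ (hp0 x) (hq0 x) (hp1 x) (hq1 x) (hpq x) (hK x) hε hε1
    · exact hpi.mul_const _
  have t1 : Filter.Tendsto (fun ε => ∫ x, p x * (Real.log (p x + ε * q x) - Real.log (q x + ε * p x)) ∂m)
      (nhdsWithin 0 (Set.Ioi 0)) (nhds (∫ x, p x * (Real.log (p x) - Real.log (q x)) ∂m)) := by
    apply MeasureTheory.tendsto_integral_filter_of_dominated_convergence (fun _ => K + 3)
    · exact Filter.Eventually.of_forall fun ε => Measurable.aestronglyMeasurable (by fun_prop)
    · filter_upwards [hev] with ε hε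
      exact Filter.Eventually.of_forall fun x =>
        wehrl_hbound _ _ _ _ (hp0 x) (hq0 x) (hp1 x) (hq1 x) (hpq x) (hK x) hε.1 hε.2
    · exact integrable_const _
    · exact Filter.Eventually.of_forall fun x => wehrl_htendsto _ _ (hpq x)
  have t2 : Filter.Tendsto (fun ε => ∑ i, ∑ j,
      ‖W j i‖ ^ 2 * (l i * (Real.log (l i + ε * u j) - Real.log (u j + ε * l i))))
      (nhdsWithin 0 (Set.Ioi 0))
      (nhds (∑ i, ∑ j, ‖W j i‖ ^ 2 * (l i * (Real.log (l i) - Real.log (u j))))) := by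
    refine tendsto_finsetSum _ fun i _ => tendsto_finsetSum _ fun j _ => ?_
    by_cases hw : ‖W j i‖ ^ 2 = 0
    · simp only [hw, zero_mul]; exact tendsto_const_nhds
    · refine (wehrl_htendsto _ _ fun h => ?_).const_mul _
      exact (mul_eq_zero.1 (hlu i j h)).resolve_left hw
  refine le_of_tendsto_of_tendsto t1 t2 ?_
  filter_upwards [hev] with ε hε
  exact main ε hε.1 hε.2

theorem wehrl_spectral {n : Type*} [Fintype n] [DecidableEq n] (A : Matrix n n ℂ)
    (hA : A.IsHermitian) : ∃ U : Matrix n n ℂ, Uᴴ * U = 1 ∧ U * Uᴴ = 1 ∧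
      A = U * diagonal (fun i => (hA.eigenvalues i : ℂ)) * Uᴴ := by
  refine ⟨hA.eigenvectorUnitary, ?_, ?_, ?_⟩
  · rw [← star_eq_conjTranspose]; simp
  · rw [← star_eq_conjTranspose]; simp
  · conv_lhs => rw [hA.spectral_theorem]
    rw [Unitary.conjStarAlgAut_apply]
    rfl

theorem wehrl_quad {n : Type*} [Fintype n] [DecidableEq n] (A U : Matrix n n ℂ) (d : n → ℝ)
    (h : A = U * diagonal (fun i => (d i : ℂ)) * Uᴴ) (v : n → ℂ) :
    star v ⬝ᵥ A *ᵥ v = ((∑ i, d i * ‖(Uᴴ *ᵥ v) i‖ ^ 2 : ℝ) : ℂ) := by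
  rw [h, ← mulVec_mulVec, ← mulVec_mulVec, dotProduct_mulVec]
  have : star v ᵥ* U = star (Uᴴ *ᵥ v) := by
    rw [star_mulVec, conjTranspose_conjTranspose]
  rw [this]
  simp only [dotProduct, mulVec_diagonal, Pi.star_apply]
  push_cast
  refine Finset.sum_congr rfl fun i _ => ?_
  have h2 := Complex.mul_conj ((Uᴴ *ᵥ v) i)
  rw [Complex.normSq_eq_norm_sq] at h2
  push_cast at h2
  rw [← h2]
  simp only [RCLike.star_def]
  ring

theorem wehrl_norm_le_one {n : Type*} [Fintype n] (v : n → ℂ) (h : star v ⬝ᵥ v = 1) (i : n) :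
    ‖v i‖ ≤ 1 := by
  have h1 : ((∑ i, ‖v i‖ ^ 2 : ℝ) : ℂ) = ((1 : ℝ) : ℂ) := by
    rw [Complex.ofReal_one, ← h]
    simp only [dotProduct, Pi.star_apply]
    push_cast
    refine Finset.sum_congr rfl fun i _ => ?_
    have h2 := Complex.mul_conj (v i)
    rw [Complex.normSq_eq_norm_sq] at h2
    push_cast at h2
    rw [← h2, mul_comm]
    rfl
  have h2 := Complex.ofReal_injective h1
  have h3 : ‖v i‖ ^ 2 ≤ ∑ i, ‖v i‖ ^ 2 :=
    Finset.single_le_sum (f := fun i => ‖v i‖ ^ 2) (fun _ _ => by positivity) (Finset.mem_univ i)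
  rw [h2] at h3
  nlinarith [norm_nonneg (v i)]

theorem wehrl_rot_unit {n : Type*} [Fintype n] [DecidableEq n] (U : Matrix n n ℂ)
    (hU : U * Uᴴ = 1) (v : n → ℂ) (h : star v ⬝ᵥ v = 1) :
    star (Uᴴ *ᵥ v) ⬝ᵥ (Uᴴ *ᵥ v) = 1 := by
  rw [star_mulVec, conjTranspose_conjTranspose, dotProduct_mulVec, vecMul_vecMul, hU, vecMul_one, h]

theorem wehrl_quad_le_trace {n : Type*} [Fintype n] [DecidableEq n] (M : Matrix n n ℂ)
    (hM : M.PosSemidef) (w : n → ℂ) (hw : star w ⬝ᵥ w = 1) :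
    (star w ⬝ᵥ M *ᵥ w).re ≤ M.trace.re := by
  obtain ⟨U, h1, h2, h3⟩ := wehrl_spectral M hM.1
  rw [wehrl_quad M U _ h3, hM.1.trace_eq_sum_eigenvalues, Complex.ofReal_re, Complex.re_sum]
  refine Finset.sum_le_sum fun i _ => ?_
  have h4 := wehrl_norm_le_one _ (wehrl_rot_unit U h2 w hw) i
  have h5 := hM.eigenvalues_nonneg i
  simp only [Complex.coe_algebraMap, Complex.ofReal_re]
  have h6 : ‖(Uᴴ *ᵥ w) i‖ ^ 2 ≤ 1 := by nlinarith [norm_nonneg ((Uᴴ *ᵥ w) i)]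
  have := mul_le_mul_of_nonneg_left h6 h5
  simpa using this

theorem wehrl_rot_res {X n : Type*} [MeasurableSpace X] [Fintype n] [DecidableEq n]
    (m : Measure X) (v : X → n → ℂ)
    (hint : ∀ i j, Integrable (fun x => v x i * (starRingEnd ℂ) (v x j)) m)
    (hres : ∀ i j, (∫ x, v x i * (starRingEnd ℂ) (v x j) ∂m) = (1 : Matrix n n ℂ) i j)
    (U : Matrix n n ℂ) (hU : Uᴴ * U = 1) (i j : n) :
    (∫ x, (Uᴴ *ᵥ v x) i * (starRingEnd ℂ) ((Uᴴ *ᵥ v x) j) ∂m) = if i = j then 1 else 0 := by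
  have h1 : ∀ x, (Uᴴ *ᵥ v x) i * (starRingEnd ℂ) ((Uᴴ *ᵥ v x) j) =
      ∑ k, ∑ l, (Uᴴ i k * U l j) * (v x k * (starRingEnd ℂ) (v x l)) := by
    intro x
    simp only [mulVec, dotProduct, map_sum, Finset.sum_mul_sum, map_mul, conjTranspose_apply,
      RCLike.star_def, Complex.conj_conj]
    refine Finset.sum_congr rfl fun k _ => Finset.sum_congr rfl fun l _ => by ring
  simp only [h1]
  rw [integral_finsetSum _ fun k _ => integrable_finsetSum _ fun l _ => (hint k l).const_mul _]
  simp only [integral_finsetSum _ fun l _ => (hint _ l).const_mul _, integral_const_mul, hres]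
  have h2 := congrFun (congrFun hU i) j
  rw [mul_apply, one_apply] at h2
  rw [← h2]
  simp [one_apply]

theorem wehrl_int_trace {X n : Type*} [MeasurableSpace X] [Fintype n] [DecidableEq n]
    (m : Measure X) (v : X → n → ℂ)
    (hint : ∀ i j, Integrable (fun x => v x i * (starRingEnd ℂ) (v x j)) m)
    (hres : ∀ i j, (∫ x, v x i * (starRingEnd ℂ) (v x j) ∂m) = (1 : Matrix n n ℂ) i j)
    (M : Matrix n n ℂ) : ∫ x, (star (v x) ⬝ᵥ M *ᵥ v x).re ∂m = M.trace.re := by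
  have h1 : ∀ x, star (v x) ⬝ᵥ M *ᵥ v x =
      ∑ k, ∑ l, M k l * (v x l * (starRingEnd ℂ) (v x k)) := by
    intro x
    simp only [mulVec, dotProduct, Pi.star_apply, RCLike.star_def, Finset.mul_sum]
    refine Finset.sum_congr rfl fun k _ => Finset.sum_congr rfl fun l _ => by ring
  have hi : Integrable (fun x => star (v x) ⬝ᵥ M *ᵥ v x) m := by
    simp only [h1]
    exact integrable_finsetSum _ fun k _ => integrable_finsetSum _ fun l _ => (hint l k).const_mul _
  have h2 : ∫ x, (star (v x) ⬝ᵥ M *ᵥ v x).re ∂m = (∫ x, (star (v x) ⬝ᵥ M *ᵥ v x) ∂m).re :=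
    integral_re hi
  rw [h2]
  congr 1
  simp only [h1]
  have e : ∫ x, ∑ k, ∑ l, M k l * (v x l * (starRingEnd ℂ) (v x k)) ∂m =
      ∑ k, ∑ l, M k l * ∫ x, (v x l * (starRingEnd ℂ) (v x k)) ∂m := by
    rw [integral_finsetSum]
    · refine Finset.sum_congr rfl fun k _ => ?_
      rw [integral_finsetSum]
      · refine Finset.sum_congr rfl fun l _ => ?_
        rw [integral_const_mul]
      · exact fun l _ => (hint l k).const_mul _
    · exact fun k _ => integrable_finsetSum _ fun l _ => (hint l k).const_mul _
  rw [e]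
  simp [hres, one_apply, trace]

theorem wehrl_slice {n₁ n₂ : Type*} [Fintype n₁] [Fintype n₂] [DecidableEq n₁] [DecidableEq n₂]
    (ρ : Matrix (n₁ × n₂) (n₁ × n₂) ℂ) (hρ : ρ.PosSemidef) (u : n₁ → ℂ) :
    ∃ M : Matrix n₂ n₂ ℂ, M.PosSemidef ∧
      (∀ w : n₂ → ℂ, star (fun p : n₁ × n₂ => u p.1 * w p.2) ⬝ᵥ
            ρ *ᵥ (fun p : n₁ × n₂ => u p.1 * w p.2) = star w ⬝ᵥ M *ᵥ w) ∧
      M.trace = star u ⬝ᵥ ptraceSnd ρ *ᵥ u := by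
  set T : Matrix (n₁ × n₂) n₂ ℂ := Matrix.of fun p l => if p.2 = l then u p.1 else 0 with hT
  have hTa : ∀ p l, T p l = if p.2 = l then u p.1 else 0 := fun p l => rfl
  have hTw : ∀ w : n₂ → ℂ, T *ᵥ w = fun p : n₁ × n₂ => u p.1 * w p.2 := by
    intro w; ext p; simp [hTa, mulVec, dotProduct]
  refine ⟨Tᴴ * ρ * T, hρ.conjTranspose_mul_mul_same T, ?_, ?_⟩
  · intro w
    rw [← hTw, star_mulVec, ← mulVec_mulVec, ← mulVec_mulVec, dotProduct_mulVec (star w)]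
  · simp only [trace, diag_apply, mul_apply, hTa, conjTranspose_apply, dotProduct, mulVec, ptraceSnd,
      Pi.star_apply, of_apply, Fintype.sum_prod_type, Finset.sum_mul, Finset.mul_sum]
    simp only [apply_ite, star_zero, ite_mul, zero_mul, mul_zero]
    simp
    rw [Finset.sum_comm]
    conv_lhs =>
      enter [2, x]
      rw [Finset.sum_comm]
    rw [Finset.sum_comm]
    refine Finset.sum_congr rfl fun k _ => Finset.sum_congr rfl fun l _ =>
      Finset.sum_congr rfl fun l _ => by ring

theorem wehrl_slice' {n₁ n₂ : Type*} [Fintype n₁] [Fintype n₂] [DecidableEq n₁] [DecidableEq n₂]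
    (ρ : Matrix (n₁ × n₂) (n₁ × n₂) ℂ) (hρ : ρ.PosSemidef) (w : n₂ → ℂ) :
    ∃ M : Matrix n₁ n₁ ℂ, M.PosSemidef ∧
      (∀ u : n₁ → ℂ, star (fun p : n₁ × n₂ => u p.1 * w p.2) ⬝ᵥ
            ρ *ᵥ (fun p : n₁ × n₂ => u p.1 * w p.2) = star u ⬝ᵥ M *ᵥ u) ∧
      M.trace = star w ⬝ᵥ ptraceFst ρ *ᵥ w := by
  obtain ⟨M, h1, h2, h3⟩ := wehrl_slice (ρ.submatrix Prod.swap Prod.swap) (hρ.submatrix _) w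
  refine ⟨M, h1, ?_, ?_⟩
  · intro u
    rw [← h2 u]
    simp only [dotProduct, mulVec, Pi.star_apply, submatrix_apply]
    refine Fintype.sum_equiv (Equiv.prodComm n₁ n₂) _ _ fun p => ?_
    congr 1
    · simp [mul_comm]
    · refine Fintype.sum_equiv (Equiv.prodComm n₁ n₂) _ _ fun p' => ?_
      simp [mul_comm]
  · rw [h3]; rfl

theorem wehrl_entropy_eq {n : Type*} [Fintype n] [DecidableEq n] (A : Matrix n n ℂ)
    (h : A.IsHermitian) : entropy A = ∑ i, Real.negMulLog (h.eigenvalues i) := by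
  rw [entropy, dif_pos h]

theorem wehrl_classical {Ω₁ Ω₂ : Type*} [MeasurableSpace Ω₁] [MeasurableSpace Ω₂]
    (μ : Measure Ω₁) (ν : Measure Ω₂) [IsFiniteMeasure μ] [IsFiniteMeasure ν]
    (p : Ω₁ → Ω₂ → ℝ) (q₁ : Ω₁ → ℝ) (q₂ : Ω₂ → ℝ)
    (hpm : Measurable fun z : Ω₁ × Ω₂ => p z.1 z.2) (hq₁m : Measurable q₁) (hq₂m : Measurable q₂)
    (hp : ∀ a b, 0 ≤ p a b) (h1 : ∀ a b, p a b ≤ q₁ a) (h2 : ∀ a b, p a b ≤ q₂ b)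
    (hq₁ : ∀ a, q₁ a ≤ 1) (hq₂ : ∀ b, q₂ b ≤ 1)
    (i1 : ∀ a, ∫ b, p a b ∂ν = q₁ a) (i2 : ∀ b, ∫ a, p a b ∂μ = q₂ b) :
    (∫ a, Real.negMulLog (q₁ a) ∂μ) + (∫ b, Real.negMulLog (q₂ b) ∂ν)
      - (∫ a, ∫ b, Real.negMulLog (p a b) ∂ν ∂μ) =
    ∫ z, p z.1 z.2 * (Real.log (p z.1 z.2) - Real.log (q₁ z.1 * q₂ z.2)) ∂(μ.prod ν) := by
  have hp1 : ∀ a b, p a b ≤ 1 := fun a b => (h1 a b).trans (hq₁ a)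
  have I0 : Integrable (fun z : Ω₁ × Ω₂ => Real.negMulLog (p z.1 z.2)) (μ.prod ν) := by
    refine Integrable.of_bound (Measurable.aestronglyMeasurable ?_) 1
      (Filter.Eventually.of_forall fun z => ?_)
    · exact Real.continuous_negMulLog.measurable.comp hpm
    · rw [Real.negMulLog, norm_mul, norm_neg, Real.norm_eq_abs, Real.norm_eq_abs,
        abs_of_nonneg (hp _ _)]
      exact wehrl_selflog _ (hp _ _) (hp1 _ _)
  have I1 : Integrable (fun z : Ω₁ × Ω₂ => p z.1 z.2 * Real.log (q₁ z.1)) (μ.prod ν) := by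
    refine Integrable.of_bound (Measurable.aestronglyMeasurable ?_) 1
      (Filter.Eventually.of_forall fun z => ?_)
    · fun_prop
    · rw [norm_mul, Real.norm_eq_abs, Real.norm_eq_abs, abs_of_nonneg (hp _ _)]
      exact (mul_le_mul_of_nonneg_right (h1 z.1 z.2) (abs_nonneg _)).trans
        (wehrl_selflog _ ((hp _ _).trans (h1 z.1 z.2)) (hq₁ _))
  have I2 : Integrable (fun z : Ω₁ × Ω₂ => p z.1 z.2 * Real.log (q₂ z.2)) (μ.prod ν) := by
    refine Integrable.of_bound (Measurable.aestronglyMeasurable ?_) 1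
      (Filter.Eventually.of_forall fun z => ?_)
    · fun_prop
    · rw [norm_mul, Real.norm_eq_abs, Real.norm_eq_abs, abs_of_nonneg (hp _ _)]
      exact (mul_le_mul_of_nonneg_right (h2 z.1 z.2) (abs_nonneg _)).trans
        (wehrl_selflog _ ((hp _ _).trans (h2 z.1 z.2)) (hq₂ _))
  have e0 : ∀ z : Ω₁ × Ω₂, p z.1 z.2 * (Real.log (p z.1 z.2) - Real.log (q₁ z.1 * q₂ z.2)) =
      -(Real.negMulLog (p z.1 z.2)) - p z.1 z.2 * Real.log (q₁ z.1)
        - p z.1 z.2 * Real.log (q₂ z.2) := by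
    intro z
    rcases (hp z.1 z.2).eq_or_lt with h | h
    · simp [← h]
    · rw [Real.log_mul (h.trans_le (h1 _ _)).ne' (h.trans_le (h2 _ _)).ne', Real.negMulLog]
      ring
  simp only [e0]
  have I01 : Integrable (fun z : Ω₁ × Ω₂ => -(Real.negMulLog (p z.1 z.2)) -
    p z.1 z.2 * Real.log (q₁ z.1)) (μ.prod ν) := I0.neg.sub I1
  have I0n : Integrable (fun z : Ω₁ × Ω₂ => -(Real.negMulLog (p z.1 z.2))) (μ.prod ν) := I0.neg
  rw [integral_sub I01 I2, integral_sub I0n I1, integral_neg, integral_prod _ I0,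
    integral_prod _ I1, integral_prod_symm _ I2]
  simp only [integral_mul_const, i1, i2, Real.negMulLog, neg_mul, integral_neg]
  ring

theorem wehrl_finite {Ω n : Type*} [Fintype n] [DecidableEq n] [MeasurableSpace Ω]
    (μ : Measure Ω) (φ : Ω → n → ℂ) (hφu : ∀ a, star (φ a) ⬝ᵥ φ a = 1)
    (hφint : ∀ i j, Integrable (fun a => φ a i * (starRingEnd ℂ) (φ a j)) μ) :
    IsFiniteMeasure μ := by
  have h : Integrable (fun a => ∑ i, φ a i * (starRingEnd ℂ) (φ a i)) μ :=
    integrable_finsetSum _ fun i _ => hφint i i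
  have e : (fun a => ∑ i, φ a i * (starRingEnd ℂ) (φ a i)) = fun _ => (1 : ℂ) := by
    ext a
    rw [← hφu a]
    simp only [dotProduct, Pi.star_apply, RCLike.star_def, mul_comm]
  rw [e] at h
  exact (integrable_const_iff_isFiniteMeasure one_ne_zero).1 h

theorem wehrl_col {n : Type*} [Fintype n] [DecidableEq n] (M A : Matrix n n ℂ) (k : n) :
    star (fun i => A i k) ⬝ᵥ M *ᵥ (fun i => A i k) = (Aᴴ * M * A) k k := by
  simp only [mul_apply, dotProduct, mulVec, conjTranspose_apply, Pi.star_apply, Finset.mul_sum,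
    Finset.sum_mul]
  rw [Finset.sum_comm]
  exact Finset.sum_congr rfl fun i _ => Finset.sum_congr rfl fun j _ => by ring

theorem wehrl_ptraceSnd_psd {n₁ n₂ : Type*} [Fintype n₁] [Fintype n₂] [DecidableEq n₁]
    [DecidableEq n₂] (ρ : Matrix (n₁ × n₂) (n₁ × n₂) ℂ) (hρ : ρ.PosSemidef) :
    (ptraceSnd ρ).PosSemidef := by
  have : ptraceSnd ρ = ∑ a, ρ.submatrix (fun i => (i, a)) (fun i => (i, a)) := by
    ext i j; simp [ptraceSnd, Matrix.sum_apply]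
  rw [this]
  exact posSemidef_sum _ fun a _ => hρ.submatrix _

theorem wehrl_ptraceFst_psd {n₁ n₂ : Type*} [Fintype n₁] [Fintype n₂] [DecidableEq n₁]
    [DecidableEq n₂] (ρ : Matrix (n₁ × n₂) (n₁ × n₂) ℂ) (hρ : ρ.PosSemidef) :
    (ptraceFst ρ).PosSemidef := by
  have : ptraceFst ρ = ∑ a, ρ.submatrix (fun i => (a, i)) (fun i => (a, i)) := by
    ext i j; simp [ptraceFst, Matrix.sum_apply]
  rw [this]
  exact posSemidef_sum _ fun a _ => hρ.submatrix _

theorem wehrl_meas {X n : Type*} [MeasurableSpace X] [Fintype n] (v : X → n → ℂ)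
    (hv : ∀ i, Measurable fun x => v x i) (M : Matrix n n ℂ) :
    Measurable fun x => (star (v x) ⬝ᵥ M *ᵥ v x).re := by
  have h : Measurable fun x => star (v x) ⬝ᵥ M *ᵥ v x := by
    simp only [dotProduct, mulVec, Pi.star_apply, RCLike.star_def]
    refine Finset.measurable_sum _ fun i _ => Measurable.mul ?_ ?_
    · exact Complex.continuous_conj.measurable.comp (hv i)
    · exact Finset.measurable_sum _ fun j _ => (hv j).const_mul _
  exact Complex.measurable_re.comp h

theorem wehrl_sum_cols {n : Type*} [Fintype n] [DecidableEq n] (M B : Matrix n n ℂ)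
    (hB : B * Bᴴ = 1) :
    ∑ l, star (fun i => B i l) ⬝ᵥ M *ᵥ (fun i => B i l) = M.trace := by
  simp only [wehrl_col]
  have : (Bᴴ * M * B).trace = M.trace := by
    rw [trace_mul_comm, ← Matrix.mul_assoc, hB, Matrix.one_mul]
  rw [← this]; rfl

theorem wehrl_diag {n : Type*} [Fintype n] [DecidableEq n] (M A : Matrix n n ℂ) (d : n → ℝ)
    (hA : Aᴴ * A = 1) (hM : M = A * diagonal (fun i => (d i : ℂ)) * Aᴴ) (k : n) :
    star (fun i => A i k) ⬝ᵥ M *ᵥ (fun i => A i k) = (d k : ℂ) := by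
  rw [wehrl_col, hM]
  have : Aᴴ * (A * diagonal (fun i => (d i : ℂ)) * Aᴴ) * A =
      (Aᴴ * A) * diagonal (fun i => (d i : ℂ)) * (Aᴴ * A) := by
    simp only [Matrix.mul_assoc]
  rw [this, hA, Matrix.one_mul, Matrix.mul_one, diagonal_apply_eq]


set_option maxHeartbeats 4000000

/-- **Quantum mutual information bounds Wehrl mutual information**:
`S^W[ρ₁] + S^W[ρ₂] − S^W[ρ₁₂] ≤ S[ρ₁] + S[ρ₂] − S[ρ₁₂]`. -/
theorem wehrl_mutual_info_le_quantum_mutual_info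
    {n₁ n₂ : Type*} [Fintype n₁] [Fintype n₂]
    [DecidableEq n₁] [DecidableEq n₂]
    {Ω₁ Ω₂ : Type*} [MeasurableSpace Ω₁] [MeasurableSpace Ω₂]
    (μ : Measure Ω₁) (ν : Measure Ω₂)
    (φ : Ω₁ → n₁ → ℂ) (θ : Ω₂ → n₂ → ℂ)
    (hφm : ∀ i, Measurable fun a => φ a i)
    (hθm : ∀ i, Measurable fun b => θ b i)
    (hφu : ∀ a, star (φ a) ⬝ᵥ φ a = 1)
    (hθu : ∀ b, star (θ b) ⬝ᵥ θ b = 1)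
    (hφint : ∀ i j, Integrable (fun a => φ a i * (starRingEnd ℂ) (φ a j)) μ)
    (hθint : ∀ i j, Integrable (fun b => θ b i * (starRingEnd ℂ) (θ b j)) ν)
    (hφres : ∀ i j, (∫ a, φ a i * (starRingEnd ℂ) (φ a j) ∂μ) =
      (1 : Matrix n₁ n₁ ℂ) i j)
    (hθres : ∀ i j, (∫ b, θ b i * (starRingEnd ℂ) (θ b j) ∂ν) =
      (1 : Matrix n₂ n₂ ℂ) i j)
    (ρ : Matrix (n₁ × n₂) (n₁ × n₂) ℂ)
    (hρ : ρ.PosSemidef) (hρtr : ρ.trace = 1) :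
    wehrlEntropy μ φ (ptraceSnd ρ) + wehrlEntropy ν θ (ptraceFst ρ)
      - (∫ a, ∫ b, Real.negMulLog
          ((star (fun p : n₁ × n₂ => φ a p.1 * θ b p.2) ⬝ᵥ
            ρ *ᵥ (fun p : n₁ × n₂ => φ a p.1 * θ b p.2)).re) ∂ν ∂μ)
    ≤ entropy (ptraceSnd ρ) + entropy (ptraceFst ρ) - entropy ρ := by
  have : IsFiniteMeasure μ := wehrl_finite μ φ hφu hφint
  have : IsFiniteMeasure ν := wehrl_finite ν θ hθu hθint
  have hρ1 := wehrl_ptraceSnd_psd ρ hρ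
  have hρ2 := wehrl_ptraceFst_psd ρ hρ
  rw [wehrl_entropy_eq _ hρ.1, wehrl_entropy_eq _ hρ1.1, wehrl_entropy_eq _ hρ2.1]
  obtain ⟨U, hU1, hU2, hU⟩ := wehrl_spectral ρ hρ.1
  obtain ⟨A, hA1, hA2, hA⟩ := wehrl_spectral _ hρ1.1
  obtain ⟨B, hB1, hB2, hB⟩ := wehrl_spectral _ hρ2.1
  set l := hρ.1.eigenvalues with hl_def
  set α := hρ1.1.eigenvalues with hα_def
  set β := hρ2.1.eigenvalues with hβ_def
  have hl : ∀ i, 0 ≤ l i := hρ.eigenvalues_nonneg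
  have hα : ∀ i, 0 ≤ α i := hρ1.eigenvalues_nonneg
  have hβ : ∀ i, 0 ≤ β i := hρ2.eigenvalues_nonneg
  -- the tensor vector
  set T : (n₁ → ℂ) → (n₂ → ℂ) → (n₁ × n₂ → ℂ) := fun u w p => u p.1 * w p.2 with hT
  set P : (n₁ → ℂ) → (n₂ → ℂ) → ℝ := fun u w => (star (T u w) ⬝ᵥ ρ *ᵥ (T u w)).re with hP
  set Q₁ : (n₁ → ℂ) → ℝ := fun u => (star u ⬝ᵥ ptraceSnd ρ *ᵥ u).re with hQ₁
  set Q₂ : (n₂ → ℂ) → ℝ := fun w => (star w ⬝ᵥ ptraceFst ρ *ᵥ w).re with hQ₂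
  have hP0 : ∀ u w, 0 ≤ P u w := fun u w => hρ.re_dotProduct_nonneg _
  have hPQ1 : ∀ u w, star w ⬝ᵥ w = 1 → P u w ≤ Q₁ u := by
    intro u w hw
    obtain ⟨M, h1, h2, h3⟩ := wehrl_slice ρ hρ u
    simp only [hP, hQ₁, hT]
    rw [h2, ← h3]
    exact wehrl_quad_le_trace M h1 w hw
  have hPQ2 : ∀ u w, star u ⬝ᵥ u = 1 → P u w ≤ Q₂ w := by
    intro u w hw
    obtain ⟨M, h1, h2, h3⟩ := wehrl_slice' ρ hρ w
    simp only [hP, hQ₂, hT]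
    rw [h2, ← h3]
    exact wehrl_quad_le_trace M h1 u hw
  have hI1 : ∀ u, ∫ b, P u (θ b) ∂ν = Q₁ u := by
    intro u
    obtain ⟨M, h1, h2, h3⟩ := wehrl_slice ρ hρ u
    simp only [hP, hQ₁, hT, h2]
    rw [← h3]
    exact wehrl_int_trace ν θ hθint hθres M
  have hI2 : ∀ w, ∫ a, P (φ a) w ∂μ = Q₂ w := by
    intro w
    obtain ⟨M, h1, h2, h3⟩ := wehrl_slice' ρ hρ w
    simp only [hP, hQ₂, hT, h2]
    rw [← h3]
    exact wehrl_int_trace μ φ hφint hφres M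
  set r : n₁ → n₂ → ℝ := fun k l => P (fun i => A i k) (fun i => B i l) with hr
  have hr1 : ∀ k, ∑ l, r k l = α k := by
    intro k
    obtain ⟨M, h1, h2, h3⟩ := wehrl_slice ρ hρ (fun i => A i k)
    have e : ∀ l, r k l = (star (fun i => B i l) ⬝ᵥ M *ᵥ (fun i => B i l)).re := fun l =>
      congrArg Complex.re (h2 (fun i => B i l))
    simp only [e]
    rw [← Complex.re_sum, wehrl_sum_cols M B hB2, h3, wehrl_diag _ A α hA1 hA, Complex.ofReal_re]
  have hr2 : ∀ l, ∑ k, r k l = β l := by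
    intro l
    obtain ⟨M, h1, h2, h3⟩ := wehrl_slice' ρ hρ (fun i => B i l)
    have e : ∀ k, r k l = (star (fun i => A i k) ⬝ᵥ M *ᵥ (fun i => A i k)).re := fun k =>
      congrArg Complex.re (h2 (fun i => A i k))
    simp only [e]
    rw [← Complex.re_sum, wehrl_sum_cols M A hA2, h3, wehrl_diag _ B β hB1 hB, Complex.ofReal_re]
  have hr0 : ∀ k l, 0 ≤ r k l := fun k l => hP0 (fun i => A i k) (fun i => B i l)
  have hrα : ∀ k l, r k l ≤ α k := fun k l => by
    rw [← hr1 k]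
    exact Finset.single_le_sum (f := fun l => r k l) (fun _ _ => hr0 _ _) (Finset.mem_univ l)
  have hrβ : ∀ k l, r k l ≤ β l := fun k l => by
    rw [← hr2 l]
    exact Finset.single_le_sum (f := fun k => r k l) (fun _ _ => hr0 _ _) (Finset.mem_univ k)
  have htr1 : (ptraceSnd ρ).trace.re = 1 := by
    have : (ptraceSnd ρ).trace = ρ.trace := by
      simp [trace, ptraceSnd, Fintype.sum_prod_type]
    rw [this, hρtr, Complex.one_re]
  have htr2 : (ptraceFst ρ).trace.re = 1 := by
    have : (ptraceFst ρ).trace = ρ.trace := by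
      simp only [trace, ptraceFst, Fintype.sum_prod_type, diag_apply, of_apply]
      rw [Finset.sum_comm]
    rw [this, hρtr, Complex.one_re]
  have hQ₁1 : ∀ a, Q₁ (φ a) ≤ 1 := fun a => by
    rw [← htr1]; exact wehrl_quad_le_trace _ hρ1 _ (hφu a)
  have hQ₂1 : ∀ b, Q₂ (θ b) ≤ 1 := fun b => by
    rw [← htr2]; exact wehrl_quad_le_trace _ hρ2 _ (hθu b)
  -- product family
  set v : Ω₁ × Ω₂ → n₁ × n₂ → ℂ := fun z => T (φ z.1) (θ z.2) with hv
  have hvm : ∀ i, Measurable fun z => v z i := by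
    intro i
    exact ((hφm i.1).comp measurable_fst).mul ((hθm i.2).comp measurable_snd)
  have hve : ∀ i j, (fun z => v z i * (starRingEnd ℂ) (v z j)) = fun z : Ω₁ × Ω₂ =>
      (φ z.1 i.1 * (starRingEnd ℂ) (φ z.1 j.1)) * (θ z.2 i.2 * (starRingEnd ℂ) (θ z.2 j.2)) := by
    intro i j; ext z; simp only [hv, hT, map_mul]; ring
  have hvint : ∀ i j, Integrable (fun z => v z i * (starRingEnd ℂ) (v z j)) (μ.prod ν) := by
    intro i j; rw [hve]; exact (hφint i.1 j.1).mul_prod (hθint i.2 j.2)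
  have hvres : ∀ i j, (∫ z, v z i * (starRingEnd ℂ) (v z j) ∂(μ.prod ν)) =
      (1 : Matrix (n₁ × n₂) (n₁ × n₂) ℂ) i j := by
    intro i j; rw [hve]
    rw [integral_prod_mul (fun a => φ a i.1 * (starRingEnd ℂ) (φ a j.1))
      (fun b => θ b i.2 * (starRingEnd ℂ) (θ b j.2)), hφres, hθres]
    simp only [one_apply, Prod.ext_iff]
    by_cases h1 : i.1 = j.1 <;> by_cases h2 : i.2 = j.2 <;> simp [h1, h2]
  have hvu : ∀ z, star (v z) ⬝ᵥ v z = 1 := by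
    intro z
    have e : star (v z) ⬝ᵥ v z = (star (φ z.1) ⬝ᵥ φ z.1) * (star (θ z.2) ⬝ᵥ θ z.2) := by
      simp only [dotProduct, Fintype.sum_prod_type, Finset.sum_mul_sum, hv, hT, Pi.star_apply,
        star_mul']
      exact Finset.sum_congr rfl fun i _ => Finset.sum_congr rfl fun j _ => by ring
    rw [e, hφu, hθu, one_mul]
  set V : Matrix (n₁ × n₂) (n₁ × n₂) ℂ := A ⊗ₖ B with hV
  have hV1 : Vᴴ * V = 1 := by
    rw [hV, conjTranspose_kronecker, ← mul_kronecker_mul, hA1, hB1, one_kronecker_one]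
  have hV2 : V * Vᴴ = 1 := by
    rw [hV, conjTranspose_kronecker, ← mul_kronecker_mul, hA2, hB2, one_kronecker_one]
  set W : Matrix (n₁ × n₂) (n₁ × n₂) ℂ := Vᴴ * U with hW
  have hWc : ∀ i, ∑ j, ‖W j i‖ ^ 2 = 1 := by
    intro i
    have h1 : Wᴴ * W = 1 := by
      rw [hW, conjTranspose_mul, conjTranspose_conjTranspose]
      calc Uᴴ * V * (Vᴴ * U) = Uᴴ * (V * Vᴴ) * U := by simp only [Matrix.mul_assoc]
        _ = 1 := by rw [hV2, Matrix.mul_one, hU1]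
    have h2 := congrFun (congrFun h1 i) i
    rw [mul_apply, one_apply_eq] at h2
    have h3 : ((∑ j, ‖W j i‖ ^ 2 : ℝ) : ℂ) = ((1 : ℝ) : ℂ) := by
      rw [Complex.ofReal_one, ← h2]
      push_cast
      refine Finset.sum_congr rfl fun j _ => ?_
      have h4 := Complex.conj_mul' (W j i)
      rw [← h4, conjTranspose_apply, RCLike.star_def]
    exact Complex.ofReal_injective h3
  have hWr : ∀ j : n₁ × n₂, ∑ i, l i * ‖W j i‖ ^ 2 = r j.1 j.2 := by
    intro j
    simp only [hr, hP]
    rw [wehrl_quad ρ U l hU, Complex.ofReal_re]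
    refine Finset.sum_congr rfl fun i _ => ?_
    congr 2
    rw [← norm_star (W j i)]
    congr 1
    simp only [hW, hT, mul_apply, mulVec, dotProduct, star_sum, star_mul', conjTranspose_apply,
      star_star, hV, kroneckerMap_apply]
    exact Finset.sum_congr rfl fun x _ => by ring
  have hWψ : ∀ z i, (Uᴴ *ᵥ v z) i = ∑ j, (starRingEnd ℂ) (W j i) * (Vᴴ *ᵥ v z) j := by
    intro z i
    have h1 : Uᴴ *ᵥ v z = Wᴴ *ᵥ (Vᴴ *ᵥ v z) := by
      rw [hW, conjTranspose_mul, conjTranspose_conjTranspose, mulVec_mulVec, Matrix.mul_assoc, hV2,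
        Matrix.mul_one]
    rw [h1]
    rfl
  have hmv : ∀ (N : Matrix (n₁ × n₂) (n₁ × n₂) ℂ) (i), Measurable fun z => (N *ᵥ v z) i := by
    intro N i
    simp only [mulVec, dotProduct]
    exact Finset.measurable_sum _ fun j _ => (hvm j).const_mul _
  have hpsum : ∀ z : Ω₁ × Ω₂, P (φ z.1) (θ z.2) = ∑ i, l i * ‖(Uᴴ *ᵥ v z) i‖ ^ 2 := by
    intro z
    simp only [hP]
    rw [wehrl_quad ρ U l hU, Complex.ofReal_re]
  have hqsum : ∀ z : Ω₁ × Ω₂, Q₁ (φ z.1) * Q₂ (θ z.2) =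
      ∑ j : n₁ × n₂, (α j.1 * β j.2) * ‖(Vᴴ *ᵥ v z) j‖ ^ 2 := by
    intro z
    simp only [hQ₁, hQ₂]
    rw [wehrl_quad _ A α hA, wehrl_quad _ B β hB, Complex.ofReal_re, Complex.ofReal_re,
      Finset.sum_mul_sum, Fintype.sum_prod_type]
    refine Finset.sum_congr rfl fun k _ => Finset.sum_congr rfl fun l _ => ?_
    have h1 : (Vᴴ *ᵥ v z) (k, l) = (Aᴴ *ᵥ φ z.1) k * (Bᴴ *ᵥ θ z.2) l := by
      simp only [mulVec, dotProduct, Fintype.sum_prod_type, Finset.sum_mul_sum, hv, hT, hV,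
        conjTranspose_apply, kroneckerMap_apply, star_mul']
      exact Finset.sum_congr rfl fun i _ => Finset.sum_congr rfl fun j _ => by ring
    rw [h1, norm_mul]
    ring
  have hpz1 : ∀ z : Ω₁ × Ω₂, P (φ z.1) (θ z.2) ≤ Q₁ (φ z.1) := fun z => hPQ1 _ _ (hθu _)
  have hpz2 : ∀ z : Ω₁ × Ω₂, P (φ z.1) (θ z.2) ≤ Q₂ (θ z.2) := fun z => hPQ2 _ _ (hφu _)
  have hmass : ∫ z : Ω₁ × Ω₂, P (φ z.1) (θ z.2) ∂(μ.prod ν) = ∑ i, ∑ j, ‖W j i‖ ^ 2 * l i := by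
    have h1 : ∫ z : Ω₁ × Ω₂, P (φ z.1) (θ z.2) ∂(μ.prod ν) = ρ.trace.re :=
      wehrl_int_trace (μ.prod ν) v hvint hvres ρ
    rw [h1, hρ.1.trace_eq_sum_eigenvalues, Complex.re_sum]
    refine Finset.sum_congr rfl fun i _ => ?_
    rw [← Finset.sum_mul, hWc, one_mul]
    exact Complex.ofReal_re _
  have hdpi := wehrl_dpi (μ.prod ν) (fun z => Uᴴ *ᵥ v z) (hmv Uᴴ)
    (fun z => wehrl_norm_le_one _ (wehrl_rot_unit U hU2 _ (hvu z)))
    (wehrl_rot_res _ v hvint hvres U hU1)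
    (fun z => Vᴴ *ᵥ v z) (hmv Vᴴ)
    (fun z => wehrl_norm_le_one _ (wehrl_rot_unit V hV2 _ (hvu z)))
    (wehrl_rot_res _ v hvint hvres V hV1)
    (fun j i => W j i) hWψ l hl (fun j => α j.1 * β j.2) (fun j => mul_nonneg (hα _) (hβ _))
    (fun z => P (φ z.1) (θ z.2)) (fun z => Q₁ (φ z.1) * Q₂ (θ z.2)) hpsum hqsum
    (fun z => (hpz1 z).trans (hQ₁1 _))
    (fun z => mul_le_one₀ (hQ₁1 _) ((hP0 _ _).trans (hpz2 z)) (hQ₂1 _))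
    (fun z hz => by
      rcases mul_eq_zero.1 hz with h | h
      · exact le_antisymm (h ▸ hpz1 z) (hP0 _ _)
      · exact le_antisymm (h ▸ hpz2 z) (hP0 _ _))
    2 (fun z => by
      have hp := hP0 (φ z.1) (θ z.2)
      have h1 := hpz1 z
      have h2 := hpz2 z
      rcases hp.eq_or_lt with h | h
      · simp [← h]
      · rw [Real.log_mul (h.trans_le h1).ne' (h.trans_le h2).ne']
        have a1 := wehrl_selflog _ (hp.trans h1) (hQ₁1 z.1)
        have a2 := wehrl_selflog _ (hp.trans h2) (hQ₂1 z.2)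
        have b1 := mul_le_mul_of_nonneg_right h1 (abs_nonneg (Real.log (Q₁ (φ z.1))))
        have b2 := mul_le_mul_of_nonneg_right h2 (abs_nonneg (Real.log (Q₂ (θ z.2))))
        have c := mul_le_mul_of_nonneg_left
          (abs_add_le (Real.log (Q₁ (φ z.1))) (Real.log (Q₂ (θ z.2)))) hp
        linarith)
    (fun i j hj => by
      have h0 : r j.1 j.2 = 0 := by
        rcases mul_eq_zero.1 hj with h | h
        · exact le_antisymm (h ▸ hrα j.1 j.2) (hr0 _ _)
        · exact le_antisymm (h ▸ hrβ j.1 j.2) (hr0 _ _)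
      rw [← hWr j] at h0
      rw [mul_comm]
      exact (Finset.sum_eq_zero_iff_of_nonneg
        (fun i _ => mul_nonneg (hl i) (by positivity))).1 h0 i (Finset.mem_univ i))
    hmass
  have hcl := wehrl_classical μ ν (fun a b => P (φ a) (θ b)) (fun a => Q₁ (φ a))
    (fun b => Q₂ (θ b)) (wehrl_meas v hvm ρ) (wehrl_meas φ hφm _) (wehrl_meas θ hθm _)
    (fun a b => hP0 _ _) (fun a b => hpz1 (a, b)) (fun a b => hpz2 (a, b)) hQ₁1 hQ₂1
    (fun a => hI1 _) (fun b => hI2 _)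
  have hfin : ∑ i, ∑ j : n₁ × n₂, ‖W j i‖ ^ 2 * (l i * (Real.log (l i) - Real.log (α j.1 * β j.2)))
      = ∑ i, Real.negMulLog (α i) + ∑ i, Real.negMulLog (β i) - ∑ i, Real.negMulLog (l i) := by
    have e1 : ∑ i, ∑ j : n₁ × n₂, ‖W j i‖ ^ 2 *
        (l i * (Real.log (l i) - Real.log (α j.1 * β j.2))) =
        ∑ i, (∑ j, ‖W j i‖ ^ 2) * (l i * Real.log (l i)) -
        ∑ j : n₁ × n₂, (∑ i, l i * ‖W j i‖ ^ 2) * Real.log (α j.1 * β j.2) := by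
      simp only [Finset.sum_mul]
      rw [Finset.sum_comm (s := Finset.univ) (t := Finset.univ)
        (f := fun (j : n₁ × n₂) i => l i * ‖W j i‖ ^ 2 * Real.log (α j.1 * β j.2)),
        ← Finset.sum_sub_distrib]
      refine Finset.sum_congr rfl fun i _ => ?_
      rw [← Finset.sum_sub_distrib]
      exact Finset.sum_congr rfl fun j _ => by ring
    have e2 : ∀ j : n₁ × n₂, r j.1 j.2 * Real.log (α j.1 * β j.2) =
        r j.1 j.2 * Real.log (α j.1) + r j.1 j.2 * Real.log (β j.2) := by
      intro j
      rcases (hr0 j.1 j.2).eq_or_lt with h | h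
      · simp [← h]
      · rw [Real.log_mul (h.trans_le (hrα _ _)).ne' (h.trans_le (hrβ _ _)).ne']; ring
    rw [e1]
    simp only [hWc, hWr, e2, one_mul]
    have e3 : ∑ j : n₁ × n₂, r j.1 j.2 * Real.log (α j.1) = ∑ k, α k * Real.log (α k) := by
      rw [Fintype.sum_prod_type]
      exact Finset.sum_congr rfl fun k _ => by
        have h := Finset.sum_mul Finset.univ (fun x => r k x) (Real.log (α k))
        exact h.symm.trans (congrArg (fun t => t * Real.log (α k)) (hr1 k))
    have e4 : ∑ j : n₁ × n₂, r j.1 j.2 * Real.log (β j.2) = ∑ k, β k * Real.log (β k) := by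
      rw [Fintype.sum_prod_type_right]
      exact Finset.sum_congr rfl fun k _ => by
        have h := Finset.sum_mul Finset.univ (fun x => r x k) (Real.log (β k))
        exact h.symm.trans (congrArg (fun t => t * Real.log (β k)) (hr2 k))
    rw [Finset.sum_add_distrib, e3, e4]
    simp only [Real.negMulLog, neg_mul, Finset.sum_neg_distrib]
    ring
  rw [hfin] at hdpi
  unfold wehrlEntropy
  exact hcl.le.trans hdpi
end

section
/- Convexity of Wehrl minus quantum entropy: Let H be a finite-dimensional complex Hilbert space, (Ω,μ) a measure space, and a ↦ φ_a ∈ H a measurable family of unit vectors with ∫_Ω |φ_a⟩⟨φ_a| dμ(a) = id_H (Bochner integral). Define the Wehrl entropy S^W[ρ] = ∫_Ω φ( ⟨φ_a, ρ φ_a⟩ ) dμ(a) for density matrices ρ on H, where φ(x) = −x ln x (with φ(0)=0). Then the map ρ ↦ S^W[ρ] − S[ρ] is convex on the set of density matrices on H: for density matrices A, B and t ∈ [0,1], S^W[tA+(1−t)B] − S[tA+(1−t)B] ≤ t( S^W[A] − S[A] ) + (1−t)( S^W[B] − S[B] ). -/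
open Matrix Kronecker Real
open scoped ComplexOrder

open MeasureTheory

lemma wq_scalar (w a m : ℝ) (ha : 0 ≤ a) (hm : 0 ≤ m) (h0 : m = 0 → w * a = 0) :
    IntervalIntegrable (fun u : ℝ => w * (a * (a - m) / ((1 - u) * a + u * m))) volume 0 1 ∧
    ∫ u in (0:ℝ)..1, w * (a * (a - m) / ((1 - u) * a + u * m))
      = w * (a * (Real.log a - Real.log m)) := by
  rcases eq_or_ne (w * a) 0 with h | h
  · have e : (fun u : ℝ => w * (a * (a - m) / ((1 - u) * a + u * m))) = fun _ => 0 := by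
      funext u
      rw [← mul_div_assoc, ← mul_assoc, h]; simp
    rw [e, ← mul_assoc, h]; simp
  · have hm' : 0 < m := lt_of_le_of_ne hm (fun e => h (h0 e.symm))
    have ha' : 0 < a := lt_of_le_of_ne ha (fun e => h (by rw [← e]; simp))
    have hD : ∀ u ∈ Set.uIcc (0:ℝ) 1, 0 < (1 - u) * a + u * m := by
      intro u hu
      rw [Set.uIcc_of_le zero_le_one] at hu
      rcases eq_or_lt_of_le hu.1 with e | e
      · rw [← e]; simpa
      · have := mul_pos e hm'
        have := mul_nonneg (sub_nonneg.2 hu.2) ha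
        linarith
    have hi : IntervalIntegrable (fun u : ℝ => w * (a * (a - m) / ((1 - u) * a + u * m))) volume 0 1 := by
      apply ContinuousOn.intervalIntegrable
      apply ContinuousOn.mul continuousOn_const
      apply ContinuousOn.div (by fun_prop) (by fun_prop)
      intro u hu; exact (hD u hu).ne'
    refine ⟨hi, ?_⟩
    rw [intervalIntegral.integral_eq_sub_of_hasDerivAt
      (f := fun u => w * (-a * Real.log ((1 - u) * a + u * m))) _ hi]
    · simp only [sub_self, sub_zero, zero_mul, one_mul, zero_add, add_zero]; ring
    · intro u hu
      have h1 : HasDerivAt (fun u : ℝ => (1 - u) * a + u * m) (-1 * a + 1 * m) u :=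
        (((hasDerivAt_id u).const_sub 1).mul_const a).add ((hasDerivAt_id u).mul_const m)
      have := ((h1.log (hD u hu).ne').const_mul (-a)).const_mul w
      refine this.congr_deriv ?_
      ring

lemma wq_pt (a m u : ℝ) (ha : 0 ≤ a) (hm : 0 ≤ m) (hu : 0 < u) (hu1 : u < 1) :
    a * (a - m) / ((1 - u) * a + u * m) = u⁻¹ * (a ^ 2 / ((1 - u) * a + u * m) - a) := by
  rcases eq_or_lt_of_le ha with e | e
  · rw [← e]; simp
  · have : 0 < (1 - u) * a + u * m := by
      have := mul_pos (sub_pos.2 hu1) e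
      have := mul_nonneg hu.le hm
      linarith
    generalize hD : (1 - u) * a + u * m = D at *
    field_simp
    rw [← hD]
    ring

lemma wq_bd (c p q u : ℝ) (hc : 0 < c) (hc1 : c ≤ 1) (hp : 0 ≤ p) (hq : 0 ≤ q) (h : c * p ≤ q)
    (hu : 0 ≤ u) (hu1 : u ≤ 1) :
    |p * (p - q) / ((1 - u) * p + u * q)| ≤ c⁻¹ * (p + q) := by
  have hD : c * p ≤ (1 - u) * p + u * q := by
    have h1 := mul_le_mul_of_nonneg_left h hu
    have h2 : (1 - u) * (c * p) ≤ (1 - u) * p :=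
      mul_le_mul_of_nonneg_left (by nlinarith) (by linarith)
    linarith
  rcases eq_or_lt_of_le hp with e | e
  · rw [← e]; simp; positivity
  · have hcp : 0 < c * p := mul_pos hc e
    have hD' := hcp.trans_le hD
    rw [abs_div, abs_of_pos hD', div_le_iff₀ hD', abs_mul, abs_of_pos e]
    have h3 : |p - q| ≤ p + q := by rw [abs_le]; constructor <;> linarith
    calc p * |p - q| ≤ p * (p + q) := by gcongr
      _ = c⁻¹ * (p + q) * (c * p) := by field_simp
      _ ≤ _ := by gcongr

lemma wq_classical {Ω κ : Type*} [MeasurableSpace Ω] [Fintype κ] (μ : Measure Ω) [IsFiniteMeasure μ]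
    (p q : Ω → ℝ) (hpm : Measurable p) (hqm : Measurable q)
    (hpi : Integrable p μ) (hqi : Integrable q μ)
    (hp : ∀ x, 0 ≤ p x) (hq : ∀ x, 0 ≤ q x) (c : ℝ) (hc : 0 < c) (hc1 : c ≤ 1)
    (hpq : ∀ x, c * p x ≤ q x)
    (w a m : κ → ℝ) (ha : ∀ k, 0 ≤ a k) (hm : ∀ k, 0 ≤ m k)
    (h0 : ∀ k, m k = 0 → w k * a k = 0)
    (htr : ∑ k, w k * a k = ∫ x, p x ∂μ)
    (hu : ∀ u : ℝ, 0 < u → u < 1 → 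
      Integrable (fun x => p x ^ 2 / ((1 - u) * p x + u * q x)) μ →
      ∫ x, p x ^ 2 / ((1 - u) * p x + u * q x) ∂μ ≤
      ∑ k, w k * (a k ^ 2 / ((1 - u) * a k + u * m k))) :
    Integrable (fun x => p x * (Real.log (p x) - Real.log (q x))) μ ∧
    ∫ x, p x * (Real.log (p x) - Real.log (q x)) ∂μ ≤
      ∑ k, w k * (a k * (Real.log (a k) - Real.log (m k))) := by
  let f : ℝ → Ω → ℝ := fun u x => p x * (p x - q x) / ((1 - u) * p x + u * q x)
  have hg : Integrable (fun x => c⁻¹ * (p x + q x)) μ := (hpi.add hqi).const_mul _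
  have hfm : Measurable (Function.uncurry f) := by
    have h1 : Measurable fun z : ℝ × Ω => p z.2 := hpm.comp measurable_snd
    have h2 : Measurable fun z : ℝ × Ω => q z.2 := hqm.comp measurable_snd
    have h3 : Measurable fun z : ℝ × Ω => z.1 := measurable_fst
    exact (h1.mul (h1.sub h2)).div (((measurable_const.sub h3).mul h1).add (h3.mul h2))
  have : IsFiniteMeasure (volume.restrict (Set.uIoc (0:ℝ) 1)) := by
    rw [Set.uIoc_of_le zero_le_one]; infer_instance
  have hfi : Integrable (Function.uncurry f) ((volume.restrict (Set.uIoc (0:ℝ) 1)).prod μ) := by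
    refine Integrable.mono' (hg.comp_snd _) hfm.aestronglyMeasurable ?_
    have : ∀ᵐ u ∂(volume.restrict (Set.uIoc (0:ℝ) 1)), u ∈ Set.uIoc (0:ℝ) 1 :=
      ae_restrict_mem measurableSet_uIoc
    have := (Measure.quasiMeasurePreserving_fst (μ := volume.restrict (Set.uIoc (0:ℝ) 1)) (ν := μ)).ae this
    filter_upwards [this] with z hz
    rw [Set.uIoc_of_le zero_le_one] at hz
    exact wq_bd c _ _ _ hc hc1 (hp _) (hq _) (hpq _) hz.1.le hz.2
  have hqp : ∀ x, q x = 0 → 1 * p x = 0 := by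
    intro x e
    have h1 := hpq x
    have h2 := hp x
    rw [e] at h1
    nlinarith
  have hfx : ∀ x, ∫ u in (0:ℝ)..1, f u x = p x * (Real.log (p x) - Real.log (q x)) := by
    intro x
    have := (wq_scalar 1 (p x) (q x) (hp x) (hq x) (hqp x)).2
    simpa using this
  have hI := hfi.integral_prod_right
  have hI2 : Integrable (fun x => p x * (Real.log (p x) - Real.log (q x))) μ := by
    refine hI.congr (Filter.Eventually.of_forall fun x => ?_)
    dsimp only
    rw [← hfx x, intervalIntegral.integral_of_le zero_le_one, Set.uIoc_of_le zero_le_one]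
    rfl
  refine ⟨hI2, ?_⟩
  have hsw := intervalIntegral_integral_swap hfi
  have hL := hfi.integral_prod_left
  simp_rw [hfx] at hsw
  rw [← hsw]
  have : ∑ k, w k * (a k * (Real.log (a k) - Real.log (m k))) =
      ∫ u in (0:ℝ)..1, ∑ k, w k * (a k * (a k - m k) / ((1 - u) * a k + u * m k)) := by
    rw [intervalIntegral.integral_finsetSum]
    · refine Finset.sum_congr rfl fun k _ => ?_
      rw [(wq_scalar (w k) (a k) (m k) (ha k) (hm k) (h0 k)).2]
    · intro k _
      exact (wq_scalar (w k) (a k) (m k) (ha k) (hm k) (h0 k)).1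
  rw [this]
  apply intervalIntegral.integral_mono_on_of_le_Ioo zero_le_one
  · rw [intervalIntegrable_iff]
    exact hL
  · have := IntervalIntegrable.sum (μ := volume) (a := (0:ℝ)) (b := 1) Finset.univ
      (f := fun k u => w k * (a k * (a k - m k) / ((1 - u) * a k + u * m k)))
      (fun k _ => (wq_scalar (w k) (a k) (m k) (ha k) (hm k) (h0 k)).1)
    refine Eq.mp ?_ this
    congr 1
    funext u
    simp
  · intro u ⟨hu0, hu1⟩
    have hfu : Integrable (f u) μ := by
      refine Integrable.mono' hg (hfm.comp measurable_prodMk_left).aestronglyMeasurable ?_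
      exact Filter.Eventually.of_forall fun x =>
        wq_bd c _ _ _ hc hc1 (hp _) (hq _) (hpq _) hu0.le hu1.le
    have e1 : ∀ x, p x ^ 2 / ((1 - u) * p x + u * q x) = u * f u x + p x := by
      intro x
      have := wq_pt (p x) (q x) u (hp x) (hq x) hu0 hu1
      simp only [f]
      rw [this]; field_simp; try ring
    have hi : Integrable (fun x => p x ^ 2 / ((1 - u) * p x + u * q x)) μ := by
      simp_rw [e1]
      exact (hfu.const_mul u).add hpi
    have key := hu u hu0 hu1 hi
    simp_rw [e1] at key
    rw [integral_add (hfu.const_mul u) hpi, integral_const_mul, ← htr] at key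
    have e2 : ∀ k, w k * (a k * (a k - m k) / ((1 - u) * a k + u * m k)) =
        u⁻¹ * (w k * (a k ^ 2 / ((1 - u) * a k + u * m k)) - w k * a k) := by
      intro k
      rw [wq_pt (a k) (m k) u (ha k) (hm k) hu0 hu1]; ring
    simp_rw [e2]
    rw [← Finset.mul_sum, Finset.sum_sub_distrib, le_inv_mul_iff₀ hu0]
    linarith

lemma wq_cs {n : Type*} [Fintype n] [DecidableEq n] (A M X : Matrix n n ℂ)
    (hA : A.PosSemidef) (hM : M.PosSemidef) (u : ℝ) (hu : 0 < u) (hu1 : u < 1)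
    (hX : (u : ℂ) • (M * X) + ((1 - u : ℝ) : ℂ) • (X * A) = A) (v : n → ℂ) :
    (star v ⬝ᵥ A *ᵥ v).re ^ 2 /
      ((1 - u) * (star v ⬝ᵥ A *ᵥ v).re + u * (star v ⬝ᵥ M *ᵥ v).re) ≤
    (star v ⬝ᵥ ((u : ℂ) • (Xᴴ * M * X) + ((1 - u : ℝ) : ℂ) • (X * A * Xᴴ)) *ᵥ v).re := by
  have hXM : ∀ s : ℝ, star (v - (s:ℂ) • X *ᵥ v) ⬝ᵥ M *ᵥ (v - (s:ℂ) • X *ᵥ v) =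
      star v ⬝ᵥ M *ᵥ v - s * (star v ⬝ᵥ (M * X) *ᵥ v) - s * (star v ⬝ᵥ (Xᴴ * M) *ᵥ v)
      + s ^ 2 * (star v ⬝ᵥ (Xᴴ * M * X) *ᵥ v) := by
    intro s
    simp only [star_sub, star_smul, star_mulVec, mulVec_sub, mulVec_smul, sub_dotProduct,
      dotProduct_sub, smul_dotProduct, dotProduct_smul, ← mulVec_mulVec, ← dotProduct_mulVec,
      smul_eq_mul]
    simp
    ring
  have hXA : ∀ s : ℝ, star (v - (s:ℂ) • Xᴴ *ᵥ v) ⬝ᵥ A *ᵥ (v - (s:ℂ) • Xᴴ *ᵥ v) =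
      star v ⬝ᵥ A *ᵥ v - s * (star v ⬝ᵥ (A * Xᴴ) *ᵥ v) - s * (star v ⬝ᵥ (X * A) *ᵥ v)
      + s ^ 2 * (star v ⬝ᵥ (X * A * Xᴴ) *ᵥ v) := by
    intro s
    simp only [star_sub, star_smul, star_mulVec, mulVec_sub, mulVec_smul, sub_dotProduct,
      dotProduct_sub, smul_dotProduct, dotProduct_smul, ← mulVec_mulVec, ← dotProduct_mulVec,
      smul_eq_mul]
    simp
    ring
  have hX' : (u : ℂ) • (Xᴴ * M) + ((1 - u : ℝ) : ℂ) • (A * Xᴴ) = A := by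
    have := congrArg conjTranspose hX
    simpa [conjTranspose_add, conjTranspose_smul, conjTranspose_mul, hA.1.eq, hM.1.eq] using this
  have e1 : (star v ⬝ᵥ A *ᵥ v) = u * (star v ⬝ᵥ (M * X) *ᵥ v) + ((1 - u : ℝ) : ℂ) * (star v ⬝ᵥ (X * A) *ᵥ v) := by
    conv_lhs => rw [← hX]
    simp only [add_mulVec, smul_mulVec, dotProduct_add, dotProduct_smul, smul_eq_mul]
  have e2 : (star v ⬝ᵥ A *ᵥ v) = u * (star v ⬝ᵥ (Xᴴ * M) *ᵥ v) + ((1 - u : ℝ) : ℂ) * (star v ⬝ᵥ (A * Xᴴ) *ᵥ v) := by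
    conv_lhs => rw [← hX']
    simp only [add_mulVec, smul_mulVec, dotProduct_add, dotProduct_smul, smul_eq_mul]
  have e3 : (star v ⬝ᵥ ((u : ℂ) • (Xᴴ * M * X) + ((1 - u : ℝ) : ℂ) • (X * A * Xᴴ)) *ᵥ v) =
      u * (star v ⬝ᵥ (Xᴴ * M * X) *ᵥ v) + ((1 - u : ℝ) : ℂ) * (star v ⬝ᵥ (X * A * Xᴴ) *ᵥ v) := by
    simp only [add_mulVec, smul_mulVec, dotProduct_add, dotProduct_smul, smul_eq_mul]
  have hp : 0 ≤ (star v ⬝ᵥ A *ᵥ v).re := hA.re_dotProduct_nonneg v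
  have hq : 0 ≤ (star v ⬝ᵥ M *ᵥ v).re := hM.re_dotProduct_nonneg v
  have r1 := congrArg Complex.re e1
  have r2 := congrArg Complex.re e2
  have r3 := congrArg Complex.re e3
  rw [Complex.add_re, Complex.re_ofReal_mul, Complex.re_ofReal_mul] at r1 r2 r3
  have main : ∀ s : ℝ, 0 ≤ ((1 - u) * (star v ⬝ᵥ A *ᵥ v).re + u * (star v ⬝ᵥ M *ᵥ v).re)
      - 2 * s * (star v ⬝ᵥ A *ᵥ v).re + s ^ 2 * 
      (star v ⬝ᵥ ((u : ℂ) • (Xᴴ * M * X) + ((1 - u : ℝ) : ℂ) • (X * A * Xᴴ)) *ᵥ v).re := by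
    intro s
    have a1 : 0 ≤ (star (v - (s:ℂ) • X *ᵥ v) ⬝ᵥ M *ᵥ (v - (s:ℂ) • X *ᵥ v)).re :=
      hM.re_dotProduct_nonneg _
    have a2 : 0 ≤ (star (v - (s:ℂ) • Xᴴ *ᵥ v) ⬝ᵥ A *ᵥ (v - (s:ℂ) • Xᴴ *ᵥ v)).re :=
      hA.re_dotProduct_nonneg _
    rw [hXM s, ← Complex.ofReal_pow, Complex.add_re, Complex.sub_re, Complex.sub_re,
      Complex.re_ofReal_mul, Complex.re_ofReal_mul, Complex.re_ofReal_mul] at a1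
    rw [hXA s, ← Complex.ofReal_pow, Complex.add_re, Complex.sub_re, Complex.sub_re,
      Complex.re_ofReal_mul, Complex.re_ofReal_mul, Complex.re_ofReal_mul] at a2
    have b1 := mul_nonneg hu.le a1
    have b2 := mul_nonneg (sub_pos.2 hu1).le a2
    rw [r3]
    linear_combination b1 + b2 + s * r1 + s * r2
  generalize (star v ⬝ᵥ ((u : ℂ) • (Xᴴ * M * X) + ((1 - u : ℝ) : ℂ) • (X * A * Xᴴ)) *ᵥ v).re = R at main
  clear r1 r2 r3 e1 e2 e3
  generalize (star v ⬝ᵥ A *ᵥ v).re = p at *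
  generalize (star v ⬝ᵥ M *ᵥ v).re = q at *
  have hd := discrim_le_zero (a := R) (b := -2 * p) (c := (1 - u) * p + u * q)
    (fun s => by have := main s; linarith)
  rw [discrim] at hd
  have hD0 : 0 ≤ (1 - u) * p + u * q := by
    have := mul_nonneg (sub_pos.2 hu1).le hp
    have := mul_nonneg hu.le hq
    linarith
  rcases eq_or_lt_of_le hD0 with e | e
  · rw [← e]
    simp
    have hp0 : p = 0 := by
      have h1 := mul_nonneg hu.le hq
      have : (1 - u) * p = 0 := le_antisymm (by linarith) (mul_nonneg (sub_pos.2 hu1).le hp)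
      rcases mul_eq_zero.1 this with h | h
      · linarith
      · exact h
    have := main 1
    rw [← e, hp0] at this
    linarith
  · rw [div_le_iff₀ e]
    linarith

lemma wq_trace {n Ω : Type*} [Fintype n] [DecidableEq n] [MeasurableSpace Ω] (μ : Measure Ω)
    (φ : Ω → n → ℂ)
    (hφint : ∀ i j, Integrable (fun a => φ a i * (starRingEnd ℂ) (φ a j)) μ)
    (hφres : ∀ i j, (∫ a, φ a i * (starRingEnd ℂ) (φ a j) ∂μ) =
      (1 : Matrix n n ℂ) i j) (K : Matrix n n ℂ) :
    Integrable (fun a => (star (φ a) ⬝ᵥ K *ᵥ (φ a)).re) μ ∧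
    ∫ a, (star (φ a) ⬝ᵥ K *ᵥ (φ a)).re ∂μ = K.trace.re := by
  have e : ∀ a, star (φ a) ⬝ᵥ K *ᵥ (φ a) =
      ∑ i, ∑ j, K i j * (φ a j * (starRingEnd ℂ) (φ a i)) := by
    intro a
    simp only [dotProduct, mulVec, Finset.mul_sum]
    refine Finset.sum_congr rfl fun i _ => Finset.sum_congr rfl fun j _ => ?_
    simp
    ring
  have hi : Integrable (fun a => star (φ a) ⬝ᵥ K *ᵥ (φ a)) μ := by
    simp_rw [e]
    exact integrable_finsetSum _ fun i _ => integrable_finsetSum _ fun j _ =>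
      (hφint j i).const_mul _
  refine ⟨hi.re, ?_⟩
  have := integral_re hi
  refine Eq.trans this ?_
  simp_rw [e]
  have h2 : ∫ a, ∑ i, ∑ j, K i j * (φ a j * (starRingEnd ℂ) (φ a i)) ∂μ = K.trace := by
    rw [integral_finsetSum Finset.univ (f := fun i a => ∑ j, K i j * (φ a j * (starRingEnd ℂ) (φ a i)))
      fun i _ => integrable_finsetSum _ fun j _ => (hφint j i).const_mul _]
    refine Finset.sum_congr rfl fun i _ => ?_
    rw [integral_finsetSum Finset.univ (f := fun j a => K i j * (φ a j * (starRingEnd ℂ) (φ a i)))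
      fun j _ => (hφint j i).const_mul _]
    simp_rw [integral_const_mul, hφres]
    simp [Matrix.one_apply]
  rw [h2]
  rfl

lemma wq_X {n : Type*} [Fintype n] [DecidableEq n] (A M U V : Matrix n n ℂ) (a m : n → ℝ)
    (ha : ∀ i, 0 ≤ a i) (hm : ∀ i, 0 ≤ m i)
    (hU : Uᴴ * U = 1) (hV : Vᴴ * V = 1) (hV' : V * Vᴴ = 1)
    (hA : A = U * diagonal (fun i => (a i : ℂ)) * Uᴴ)
    (hM : M = V * diagonal (fun i => (m i : ℂ)) * Vᴴ) (u : ℝ) (hu : 0 < u) (hu1 : u < 1) :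
    ∃ X : Matrix n n ℂ, (u : ℂ) • (M * X) + ((1 - u : ℝ) : ℂ) • (X * A) = A ∧
      (Xᴴ * A).trace.re = ∑ k : n × n, Complex.normSq ((Vᴴ * U) k.1 k.2) *
        (a k.2 ^ 2 / ((1 - u) * a k.2 + u * m k.1)) := by
  obtain ⟨W, hW⟩ : ∃ W, W = Vᴴ * U := ⟨_, rfl⟩
  rw [← hW]
  let Y : Matrix n n ℂ := Matrix.of fun j i =>
    W j i * ((a i / ((1 - u) * a i + u * m j) : ℝ) : ℂ)
  have hY : (u : ℂ) • (diagonal (fun i => (m i : ℂ)) * Y) +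
      ((1 - u : ℝ) : ℂ) • (Y * diagonal (fun i => (a i : ℂ))) =
      W * diagonal (fun i => (a i : ℂ)) := by
    ext j i
    simp only [Matrix.add_apply, Matrix.smul_apply, diagonal_mul, mul_diagonal, smul_eq_mul, Y, of_apply]
    have : (a i / ((1 - u) * a i + u * m j)) * ((1 - u) * a i + u * m j) = a i := by
      rcases eq_or_lt_of_le (ha i) with e | e
      · rw [← e]; simp
      · have h1 := mul_pos (sub_pos.2 hu1) e
        have h2 := mul_nonneg hu.le (hm j)
        exact div_mul_cancel₀ _ (by linarith)
    generalize a i / ((1 - u) * a i + u * m j) = r at *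
    have h3 : (r : ℂ) * ((1 - u) * a i + u * m j) = a i := by exact_mod_cast this
    push_cast
    linear_combination (W j i) * h3
  refine ⟨V * Y * Uᴴ, ?_, ?_⟩
  · have e1 : M * (V * Y * Uᴴ) = V * (diagonal (fun i => (m i : ℂ)) * Y) * Uᴴ := by
      rw [hM]
      calc _ = V * diagonal (fun i => (m i : ℂ)) * (Vᴴ * V) * Y * Uᴴ := by noncomm_ring
        _ = _ := by rw [hV]; noncomm_ring
    have e2 : (V * Y * Uᴴ) * A = V * (Y * diagonal (fun i => (a i : ℂ))) * Uᴴ := by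
      rw [hA]
      calc _ = V * Y * (Uᴴ * U) * diagonal (fun i => (a i : ℂ)) * Uᴴ := by noncomm_ring
        _ = _ := by rw [hU]; noncomm_ring
    have h3 := congrArg (fun Z => V * Z * Uᴴ) hY
    simp only [mul_add, add_mul, Matrix.mul_smul, Matrix.smul_mul] at h3
    rw [e1, e2, h3, hA, hW]
    calc _ = (V * Vᴴ) * U * diagonal (fun i => (a i : ℂ)) * Uᴴ := by noncomm_ring
      _ = _ := by rw [hV', one_mul]
  · have e1 : (V * Y * Uᴴ)ᴴ * A = U * (Yᴴ * (Vᴴ * U) * diagonal (fun i => (a i : ℂ)) * Uᴴ) := by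
      conv_lhs => rw [hA]
      simp only [conjTranspose_mul, conjTranspose_conjTranspose]
      noncomm_ring
    have e2 : Yᴴ * (Vᴴ * U) * diagonal (fun i => (a i : ℂ)) * Uᴴ * U =
        Yᴴ * (Vᴴ * U) * diagonal (fun i => (a i : ℂ)) := by
      rw [mul_assoc _ Uᴴ, hU, mul_one]
    rw [e1, trace_mul_comm, e2]
    rw [← hW]
    rw [Fintype.sum_prod_type, Finset.sum_comm]
    simp only [Matrix.trace, diag_apply, mul_diagonal, Complex.re_sum]
    refine Finset.sum_congr rfl fun i _ => ?_
    rw [mul_apply, Finset.sum_mul, Complex.re_sum]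
    refine Finset.sum_congr rfl fun j _ => ?_
    simp only [Y, conjTranspose_apply, of_apply, star_mul', Complex.star_def, Complex.conj_ofReal]
    have : (starRingEnd ℂ) (W j i) * ((a i / ((1 - u) * a i + u * m j) : ℝ) : ℂ) * W j i * (a i : ℂ)
      = ((Complex.normSq (W j i) * (a i ^ 2 / ((1 - u) * a i + u * m j)) : ℝ) : ℂ) := by
      rw [mul_right_comm _ _ (W j i), ← Complex.normSq_eq_conj_mul_self]
      push_cast
      ring
    rw [this, Complex.ofReal_re]

lemma wq_spec {n : Type*} [Fintype n] [DecidableEq n] (A : Matrix n n ℂ) (hA : A.IsHermitian) :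
    A = (hA.eigenvectorUnitary : Matrix n n ℂ) * diagonal (fun i => (hA.eigenvalues i : ℂ)) *
      (hA.eigenvectorUnitary : Matrix n n ℂ)ᴴ := by
  have := hA.spectral_theorem
  rw [Unitary.conjStarAlgAut_apply] at this
  exact this

lemma wq_diag {n : Type*} [Fintype n] [DecidableEq n] (A V : Matrix n n ℂ) (j : n) :
    (Vᴴ * A * V) j j = star (fun i => V i j) ⬝ᵥ A *ᵥ (fun i => V i j) := by
  rw [mul_assoc, mul_apply]
  simp only [dotProduct, mulVec, mul_apply, conjTranspose_apply, Pi.star_apply]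

lemma wq_W {n : Type*} [Fintype n] [DecidableEq n] (W : Matrix n n ℂ) (a : n → ℝ) (j : n) :
    ((W * diagonal (fun i => (a i : ℂ)) * Wᴴ) j j).re = ∑ i, Complex.normSq (W j i) * a i := by
  rw [mul_apply, Complex.re_sum]
  refine Finset.sum_congr rfl fun i _ => ?_
  rw [mul_diagonal, conjTranspose_apply, mul_right_comm, Complex.star_def, Complex.mul_conj,
    ← Complex.ofReal_mul, Complex.ofReal_re]

lemma wq_key {n Ω : Type*} [Fintype n] [DecidableEq n] [MeasurableSpace Ω] (μ : Measure Ω)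
    [IsFiniteMeasure μ] (φ : Ω → n → ℂ)
    (hφm : ∀ i, Measurable fun a => φ a i)
    (hφint : ∀ i j, Integrable (fun a => φ a i * (starRingEnd ℂ) (φ a j)) μ)
    (hφres : ∀ i j, (∫ a, φ a i * (starRingEnd ℂ) (φ a j) ∂μ) =
      (1 : Matrix n n ℂ) i j) (A M : Matrix n n ℂ)
    (hA : A.PosSemidef) (hM : M.PosSemidef) (c : ℝ) (hc : 0 < c) (hc1 : c ≤ 1)
    (hcM : ∀ v, c * (star v ⬝ᵥ A *ᵥ v).re ≤ (star v ⬝ᵥ M *ᵥ v).re) :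
    Integrable (fun x => (star (φ x) ⬝ᵥ A *ᵥ (φ x)).re *
      (Real.log (star (φ x) ⬝ᵥ A *ᵥ (φ x)).re - Real.log (star (φ x) ⬝ᵥ M *ᵥ (φ x)).re)) μ ∧
    ∫ x, (star (φ x) ⬝ᵥ A *ᵥ (φ x)).re *
      (Real.log (star (φ x) ⬝ᵥ A *ᵥ (φ x)).re - Real.log (star (φ x) ⬝ᵥ M *ᵥ (φ x)).re) ∂μ ≤
    - entropy A - ∑ j, (((hM.1.eigenvectorUnitary : Matrix n n ℂ)ᴴ * A *
      (hM.1.eigenvectorUnitary : Matrix n n ℂ)) j j).re * Real.log (hM.1.eigenvalues j) := by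
  have hAs := wq_spec A hA.1
  have hMs := wq_spec M hM.1
  have hU1 : (hA.1.eigenvectorUnitary : Matrix n n ℂ)ᴴ * (hA.1.eigenvectorUnitary : Matrix n n ℂ) = 1 :=
    Unitary.coe_star_mul_self _
  have hV1 : (hM.1.eigenvectorUnitary : Matrix n n ℂ)ᴴ * (hM.1.eigenvectorUnitary : Matrix n n ℂ) = 1 :=
    Unitary.coe_star_mul_self _
  have hV2 : (hM.1.eigenvectorUnitary : Matrix n n ℂ) * (hM.1.eigenvectorUnitary : Matrix n n ℂ)ᴴ = 1 :=
    Unitary.coe_mul_star_self _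
  have ha := hA.eigenvalues_nonneg
  have hm := hM.eigenvalues_nonneg
  have hent : entropy A = ∑ i, Real.negMulLog (hA.1.eigenvalues i) := by
    rw [entropy, dif_pos hA.1]
  generalize (hA.1.eigenvectorUnitary : Matrix n n ℂ) = U at *
  generalize (hM.1.eigenvectorUnitary : Matrix n n ℂ) = V at *
  generalize hA.1.eigenvalues = a at *
  generalize hM.1.eigenvalues = m at *
  obtain ⟨W, hW⟩ : ∃ W, W = Vᴴ * U := ⟨_, rfl⟩
  have hWc : ∀ i, ∑ j, Complex.normSq (W j i) = 1 := by
    intro i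
    have h1 : Wᴴ * W = 1 := by
      rw [hW, conjTranspose_mul, conjTranspose_conjTranspose]
      calc _ = Uᴴ * (V * Vᴴ) * U := by noncomm_ring
        _ = 1 := by rw [hV2, mul_one, hU1]
    have h2 := congrFun (congrFun h1 i) i
    rw [mul_apply, one_apply_eq] at h2
    have h3 := congrArg Complex.re h2
    rw [Complex.re_sum, Complex.one_re] at h3
    rw [← h3]
    refine Finset.sum_congr rfl fun j _ => ?_
    rw [conjTranspose_apply, Complex.star_def, ← Complex.normSq_eq_conj_mul_self, Complex.ofReal_re]
  have hVA : ∀ j, ((Vᴴ * A * V) j j).re = ∑ i, Complex.normSq (W j i) * a i := by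
    intro j
    rw [← wq_W, hW, conjTranspose_mul, conjTranspose_conjTranspose]
    conv_lhs => rw [hAs]
    congr 1
    refine congrFun (congrFun ?_ j) j
    noncomm_ring
  have hVM : Vᴴ * M * V = diagonal (fun i => (m i : ℂ)) := by
    rw [hMs]
    calc _ = (Vᴴ * V) * diagonal (fun i => (m i : ℂ)) * (Vᴴ * V) := by noncomm_ring
      _ = _ := by rw [hV1, one_mul, mul_one]
  have h0 : ∀ j i, m j = 0 → Complex.normSq (W j i) * a i = 0 := by
    intro j i hj
    have h1 := hcM (fun i => V i j)
    rw [← wq_diag, ← wq_diag, hVM, diagonal_apply_eq, hVA, hj, Complex.ofReal_re] at h1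
    have h2 : ∀ i ∈ Finset.univ, 0 ≤ Complex.normSq (W j i) * a i :=
      fun i _ => mul_nonneg (Complex.normSq_nonneg _) (ha i)
    have h3 : ∑ i, Complex.normSq (W j i) * a i = 0 :=
      le_antisymm (by by_contra h; push Not at h; nlinarith) (Finset.sum_nonneg h2)
    exact (Finset.sum_eq_zero_iff_of_nonneg h2).1 h3 i (Finset.mem_univ i)
  have hmeas : ∀ K : Matrix n n ℂ, Measurable fun x => (star (φ x) ⬝ᵥ K *ᵥ (φ x)).re := by
    intro K
    simp only [dotProduct, mulVec, Pi.star_apply]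
    refine Complex.measurable_re.comp (Finset.measurable_sum _ fun i _ => ?_)
    refine Measurable.mul ?_ (Finset.measurable_sum _ fun j _ => (hφm j).const_mul _)
    exact continuous_star.measurable.comp (hφm i)
  have htrA : A.trace.re = ∑ i, a i := by
    rw [hAs, trace_mul_comm, ← mul_assoc, hU1, one_mul, trace_diagonal, Complex.re_sum]
    rfl
  have T := wq_trace μ φ hφint hφres
  have R := wq_classical (κ := n × n) μ (fun x => (star (φ x) ⬝ᵥ A *ᵥ (φ x)).re)
    (fun x => (star (φ x) ⬝ᵥ M *ᵥ (φ x)).re) (hmeas A) (hmeas M) (T A).1 (T M).1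
    (fun x => hA.re_dotProduct_nonneg _) (fun x => hM.re_dotProduct_nonneg _) c hc hc1
    (fun x => hcM _) (fun k => Complex.normSq (W k.1 k.2)) (fun k => a k.2) (fun k => m k.1)
    (fun k => ha _) (fun k => hm _) (fun k => h0 _ _) ?_ ?_
  · refine ⟨R.1, R.2.trans (le_of_eq ?_)⟩
    rw [hent, ← Finset.sum_neg_distrib, Fintype.sum_prod_type]
    simp_rw [hVA, mul_sub, Finset.sum_sub_distrib]
    congr 1
    · rw [Finset.sum_comm]
      refine Finset.sum_congr rfl fun i _ => ?_
      rw [← Finset.sum_mul, hWc, Real.negMulLog]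
      ring
    · refine Finset.sum_congr rfl fun i _ => ?_
      rw [Finset.sum_mul]
      refine Finset.sum_congr rfl fun j _ => ?_
      ring
  · rw [(T A).2, htrA, Fintype.sum_prod_type, Finset.sum_comm]
    refine Finset.sum_congr rfl fun i _ => ?_
    dsimp only
    rw [← Finset.sum_mul, hWc, one_mul]
  · intro u hu0 hu1 hi
    obtain ⟨X, hX, hXt⟩ := wq_X A M U V a m ha hm hU1 hV1 hV2 hAs hMs u hu0 hu1
    rw [hW, ← hXt]
    have hT := T ((u : ℂ) • (Xᴴ * M * X) + ((1 - u : ℝ) : ℂ) • (X * A * Xᴴ))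
    have e : ((u : ℂ) • (Xᴴ * M * X) + ((1 - u : ℝ) : ℂ) • (X * A * Xᴴ)).trace = (Xᴴ * A).trace := by
      conv_rhs => rw [← hX]
      simp only [trace_add, trace_smul, mul_add, Matrix.mul_smul]
      rw [mul_assoc Xᴴ M X, trace_mul_comm (X * A) Xᴴ]
    rw [← e, ← hT.2]
    exact integral_mono hi hT.1 fun x => wq_cs A M X hA hM u hu0 hu1 hX (φ x)

lemma wq_ent_int {n Ω : Type*} [Fintype n] [DecidableEq n] [MeasurableSpace Ω] (μ : Measure Ω)
    [IsFiniteMeasure μ] (φ : Ω → n → ℂ)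
    (hφm : ∀ i, Measurable fun a => φ a i)
    (hφu : ∀ a, star (φ a) ⬝ᵥ φ a = 1) (A : Matrix n n ℂ) :
    Integrable (fun x => Real.negMulLog (star (φ x) ⬝ᵥ A *ᵥ (φ x)).re) μ := by
  have hmeas : Measurable fun x => (star (φ x) ⬝ᵥ A *ᵥ (φ x)).re := by
    simp only [dotProduct, mulVec, Pi.star_apply]
    refine Complex.measurable_re.comp (Finset.measurable_sum _ fun i _ => ?_)
    refine Measurable.mul ?_ (Finset.measurable_sum _ fun j _ => (hφm j).const_mul _)
    exact continuous_star.measurable.comp (hφm i)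
  have hn : ∀ x i, ‖φ x i‖ ≤ 1 := by
    intro x i
    have h := congrArg Complex.re (hφu x)
    simp only [dotProduct, Pi.star_apply, Complex.re_sum, Complex.one_re, Complex.star_def,
      ← Complex.normSq_eq_conj_mul_self, Complex.ofReal_re] at h
    have h2 := Finset.single_le_sum (f := fun i => Complex.normSq (φ x i))
      (fun i _ => Complex.normSq_nonneg _) (Finset.mem_univ i)
    rw [h, Complex.normSq_eq_norm_sq] at h2
    nlinarith [norm_nonneg (φ x i)]
  have hb : ∀ x, |(star (φ x) ⬝ᵥ A *ᵥ (φ x)).re| ≤ ∑ i, ∑ j, ‖A i j‖ := by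
    intro x
    refine (Complex.abs_re_le_norm _).trans ?_
    simp only [dotProduct, mulVec, Pi.star_apply]
    refine (norm_sum_le _ _).trans (Finset.sum_le_sum fun i _ => ?_)
    rw [norm_mul, norm_star]
    refine (mul_le_of_le_one_left (norm_nonneg _) (hn x i)).trans ?_
    refine (norm_sum_le _ _).trans (Finset.sum_le_sum fun j _ => ?_)
    rw [norm_mul]
    exact mul_le_of_le_one_right (norm_nonneg _) (hn x j)
  obtain ⟨C, hC⟩ := (isCompact_Icc (a := -(∑ i, ∑ j, ‖A i j‖)) (b := ∑ i, ∑ j, ‖A i j‖)).exists_bound_of_continuousOn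
    Real.continuous_negMulLog.continuousOn
  exact Integrable.of_bound (Real.continuous_negMulLog.measurable.comp hmeas).aestronglyMeasurable C
    (Filter.Eventually.of_forall fun x => hC _ (abs_le.1 (hb x)))

/-- **Convexity of Wehrl minus quantum entropy**: the map
`ρ ↦ S^W[ρ] − S[ρ]` is convex on density matrices. -/
theorem wehrl_minus_quantum_entropy_convex
    {n : Type*} [Fintype n] [DecidableEq n]
    {Ω : Type*} [MeasurableSpace Ω] (μ : Measure Ω)
    (φ : Ω → n → ℂ)
    (hφm : ∀ i, Measurable fun a => φ a i)
    (hφu : ∀ a, star (φ a) ⬝ᵥ φ a = 1)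
    (hφint : ∀ i j, Integrable (fun a => φ a i * (starRingEnd ℂ) (φ a j)) μ)
    (hφres : ∀ i j, (∫ a, φ a i * (starRingEnd ℂ) (φ a j) ∂μ) =
      (1 : Matrix n n ℂ) i j)
    (A B : Matrix n n ℂ)
    (hA : A.PosSemidef) (hAtr : A.trace = 1)
    (hB : B.PosSemidef) (hBtr : B.trace = 1)
    (t : ℝ) (ht0 : 0 ≤ t) (ht1 : t ≤ 1) :
    wehrlEntropy μ φ ((t : ℂ) • A + ((1 - t : ℝ) : ℂ) • B)
        - entropy ((t : ℂ) • A + ((1 - t : ℝ) : ℂ) • B)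
    ≤ t * (wehrlEntropy μ φ A - entropy A)
      + (1 - t) * (wehrlEntropy μ φ B - entropy B) := by
  rcases eq_or_lt_of_le ht0 with e | h0
  · rw [← e]; simp
  rcases eq_or_lt_of_le ht1 with e | h1
  · rw [e]; simp
  have h1' : 0 < 1 - t := sub_pos.2 h1
  have : IsFiniteMeasure μ := by
    have := (wq_trace μ φ hφint hφres 1).1
    simp only [one_mulVec, hφu, Complex.one_re] at this
    exact (integrable_const_iff_isFiniteMeasure one_ne_zero).1 this
  obtain ⟨M, hMdef⟩ : ∃ M, M = (t : ℂ) • A + ((1 - t : ℝ) : ℂ) • B := ⟨_, rfl⟩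
  rw [← hMdef]
  have hM : M.PosSemidef := by
    rw [hMdef]
    exact (hA.smul (by exact_mod_cast ht0)).add (hB.smul (by exact_mod_cast h1'.le))
  have hq : ∀ v, (star v ⬝ᵥ M *ᵥ v).re =
      t * (star v ⬝ᵥ A *ᵥ v).re + (1 - t) * (star v ⬝ᵥ B *ᵥ v).re := by
    intro v
    rw [hMdef]
    simp only [add_mulVec, smul_mulVec, dotProduct_add, dotProduct_smul, smul_eq_mul,
      Complex.add_re, Complex.re_ofReal_mul]
  have pA : ∀ v, 0 ≤ (star v ⬝ᵥ A *ᵥ v).re := fun v => hA.re_dotProduct_nonneg v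
  have pB : ∀ v, 0 ≤ (star v ⬝ᵥ B *ᵥ v).re := fun v => hB.re_dotProduct_nonneg v
  obtain ⟨iA, kA⟩ := wq_key μ φ hφm hφint hφres A M hA hM t h0 ht1
    (fun v => by rw [hq]; have := mul_nonneg h1'.le (pB v); linarith)
  obtain ⟨iB, kB⟩ := wq_key μ φ hφm hφint hφres B M hB hM (1 - t) h1' (by linarith)
    (fun v => by rw [hq]; have := mul_nonneg ht0 (pA v); linarith)
  have EA := wq_ent_int μ φ hφm hφu A
  have EB := wq_ent_int μ φ hφm hφu B
  have EM := wq_ent_int μ φ hφm hφu M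
  have hI : t * (∫ x, (star (φ x) ⬝ᵥ A *ᵥ (φ x)).re *
      (Real.log (star (φ x) ⬝ᵥ A *ᵥ (φ x)).re - Real.log (star (φ x) ⬝ᵥ M *ᵥ (φ x)).re) ∂μ) +
      (1 - t) * (∫ x, (star (φ x) ⬝ᵥ B *ᵥ (φ x)).re *
      (Real.log (star (φ x) ⬝ᵥ B *ᵥ (φ x)).re - Real.log (star (φ x) ⬝ᵥ M *ᵥ (φ x)).re) ∂μ) =
      wehrlEntropy μ φ M - t * wehrlEntropy μ φ A - (1 - t) * wehrlEntropy μ φ B := by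
    unfold wehrlEntropy
    simp_rw [← integral_const_mul]
    rw [← integral_add (iA.const_mul t) (iB.const_mul (1 - t)), ← integral_sub EM (EA.const_mul t),
      ← integral_sub (f := fun x => Real.negMulLog (star (φ x) ⬝ᵥ M *ᵥ (φ x)).re -
        t * Real.negMulLog (star (φ x) ⬝ᵥ A *ᵥ (φ x)).re) (EM.sub (EA.const_mul t)) (EB.const_mul (1 - t))]
    refine integral_congr_ae (Filter.Eventually.of_forall fun x => ?_)
    have := hq (φ x)
    simp only [Real.negMulLog]
    linear_combination (Real.log (star (φ x) ⬝ᵥ M *ᵥ (φ x)).re) * this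
  have hS : t * (∑ j, (((hM.1.eigenvectorUnitary : Matrix n n ℂ)ᴴ * A *
      (hM.1.eigenvectorUnitary : Matrix n n ℂ)) j j).re * Real.log (hM.1.eigenvalues j)) +
      (1 - t) * (∑ j, (((hM.1.eigenvectorUnitary : Matrix n n ℂ)ᴴ * B *
      (hM.1.eigenvectorUnitary : Matrix n n ℂ)) j j).re * Real.log (hM.1.eigenvalues j)) =
      - entropy M := by
    have hMs := wq_spec M hM.1
    have hV1 : (hM.1.eigenvectorUnitary : Matrix n n ℂ)ᴴ * (hM.1.eigenvectorUnitary : Matrix n n ℂ) = 1 :=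
      Unitary.coe_star_mul_self _
    rw [entropy, dif_pos hM.1, Finset.mul_sum, Finset.mul_sum, ← Finset.sum_add_distrib,
      ← Finset.sum_neg_distrib]
    generalize (hM.1.eigenvectorUnitary : Matrix n n ℂ) = V at *
    generalize hM.1.eigenvalues = m at *
    have hVM : Vᴴ * M * V = diagonal (fun i => (m i : ℂ)) := by
      rw [hMs]
      calc _ = (Vᴴ * V) * diagonal (fun i => (m i : ℂ)) * (Vᴴ * V) := by noncomm_ring
        _ = _ := by rw [hV1, one_mul, mul_one]
    refine Finset.sum_congr rfl fun j _ => ?_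
    have := hq (fun i => V i j)
    rw [← wq_diag, ← wq_diag, ← wq_diag, hVM, diagonal_apply_eq, Complex.ofReal_re] at this
    rw [Real.negMulLog]
    linear_combination (-Real.log (m j)) * this
  have f1 := mul_le_mul_of_nonneg_left kA ht0
  have f2 := mul_le_mul_of_nonneg_left kB h1'.le
  linear_combination f1 + f2 - hS - hI
end

section
/- The infimum of Wehrl minus quantum entropy is zero and is attained at the maximally mixed state: Let H be a finite-dimensional complex Hilbert space of dimension d ≥ 1, (Ω,μ) a measure space, and a ↦ φ_a ∈ H a measurable family of unit vectors with ∫_Ω |φ_a⟩⟨φ_a| dμ(a) = id_H (Bochner integral). Define S^W[ρ] = ∫_Ω φ( ⟨φ_a, ρ φ_a⟩ ) dμ(a) for density matrices ρ on H, where φ(x) = −x ln x (with φ(0)=0). Then S^W[ρ] − S[ρ] ≥ 0 for every density matrix ρ on H, and S^W[(1/d)·id_H] − S[(1/d)·id_H] = 0 (indeed S^W[(1/d)·id_H] = ln d = S[(1/d)·id_H]). -/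
open Matrix Kronecker Real
open scoped ComplexOrder

open MeasureTheory

theorem wehrl_aux_int {d : ℕ} {Ω : Type*} [MeasurableSpace Ω] (μ : Measure Ω)
    (φ : Ω → Fin d → ℂ)
    (hφint : ∀ i j, Integrable (fun a => φ a i * (starRingEnd ℂ) (φ a j)) μ)
    (hφres : ∀ i j, (∫ a, φ a i * (starRingEnd ℂ) (φ a j) ∂μ) =
      (1 : Matrix (Fin d) (Fin d) ℂ) i j) (A : Matrix (Fin d) (Fin d) ℂ) :
    Integrable (fun a => star (φ a) ⬝ᵥ A *ᵥ (φ a)) μ ∧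
    ∫ a, star (φ a) ⬝ᵥ A *ᵥ (φ a) ∂μ = A.trace := by
  have h : (fun a => star (φ a) ⬝ᵥ A *ᵥ (φ a)) =
      fun a => ∑ i, ∑ j, A i j * (φ a j * (starRingEnd ℂ) (φ a i)) := by
    funext a
    simp only [dotProduct, mulVec, Finset.mul_sum, Pi.star_apply, starRingEnd_apply]
    refine Finset.sum_congr rfl fun i _ => Finset.sum_congr rfl fun j _ => ?_
    ring
  have hi : ∀ i j, Integrable (fun a => A i j * (φ a j * (starRingEnd ℂ) (φ a i))) μ :=
    fun i j => (hφint j i).const_mul _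
  rw [h]
  refine ⟨integrable_finsetSum _ fun i _ => integrable_finsetSum _ fun j _ => hi i j, ?_⟩
  rw [integral_finsetSum _ fun i _ => integrable_finsetSum _ fun j _ => hi i j]
  simp_rw [integral_finsetSum _ fun j _ => hi _ j, integral_const_mul, hφres]
  simp [Matrix.one_apply, Matrix.trace]

theorem wehrl_aux_re {d : ℕ} {Ω : Type*} [MeasurableSpace Ω] (μ : Measure Ω)
    (φ : Ω → Fin d → ℂ)
    (hφint : ∀ i j, Integrable (fun a => φ a i * (starRingEnd ℂ) (φ a j)) μ)
    (hφres : ∀ i j, (∫ a, φ a i * (starRingEnd ℂ) (φ a j) ∂μ) =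
      (1 : Matrix (Fin d) (Fin d) ℂ) i j) (A : Matrix (Fin d) (Fin d) ℂ) :
    Integrable (fun a => (star (φ a) ⬝ᵥ A *ᵥ (φ a)).re) μ ∧
    ∫ a, (star (φ a) ⬝ᵥ A *ᵥ (φ a)).re ∂μ = A.trace.re := by
  obtain ⟨h1, h2⟩ := wehrl_aux_int μ φ hφint hφres A
  refine ⟨h1.re, ?_⟩
  rw [← h2]
  exact integral_re h1

theorem wehrl_aux_diag {d : ℕ} (U : Matrix (Fin d) (Fin d) ℂ) (l : Fin d → ℝ) (x : Fin d → ℂ) :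
    (star x ⬝ᵥ (U * diagonal (fun i => (l i : ℂ)) * Uᴴ) *ᵥ x).re =
      ∑ i, Complex.normSq ((Uᴴ *ᵥ x) i) * l i := by
  have : star x ⬝ᵥ (U * diagonal (fun i => (l i : ℂ)) * Uᴴ) *ᵥ x =
      star (Uᴴ *ᵥ x) ⬝ᵥ (diagonal (fun i => (l i : ℂ)) *ᵥ (Uᴴ *ᵥ x)) := by
    rw [star_mulVec, conjTranspose_conjTranspose, ← dotProduct_mulVec]
    simp [mulVec_mulVec, Matrix.mul_assoc]
  rw [this]
  simp only [dotProduct, mulVec_diagonal, Complex.re_sum]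
  refine Finset.sum_congr rfl fun i _ => ?_
  simp [Complex.normSq_apply]
  ring

theorem wehrl_minus_quantum_entropy_nonneg_and_attained
    {d : ℕ} (hd : 1 ≤ d)
    {Ω : Type*} [MeasurableSpace Ω] (μ : Measure Ω)
    (φ : Ω → Fin d → ℂ)
    (hφm : ∀ i, Measurable fun a => φ a i)
    (hφu : ∀ a, star (φ a) ⬝ᵥ φ a = 1)
    (hφint : ∀ i j, Integrable (fun a => φ a i * (starRingEnd ℂ) (φ a j)) μ)
    (hφres : ∀ i j, (∫ a, φ a i * (starRingEnd ℂ) (φ a j) ∂μ) =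
      (1 : Matrix (Fin d) (Fin d) ℂ) i j) :
    (∀ ρ : Matrix (Fin d) (Fin d) ℂ, ρ.PosSemidef → ρ.trace = 1 →
      0 ≤ wehrlEntropy μ φ ρ - entropy ρ)
    ∧ wehrlEntropy μ φ (((d : ℂ))⁻¹ • (1 : Matrix (Fin d) (Fin d) ℂ)) = Real.log d
    ∧ entropy (((d : ℂ))⁻¹ • (1 : Matrix (Fin d) (Fin d) ℂ)) = Real.log d := by
  have hd0 : (d : ℝ) ≠ 0 := by positivity
  have key := wehrl_aux_re μ φ hφint hφres
  have hone := key 1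
  simp only [one_mulVec, hφu, Complex.one_re, trace_one, Fintype.card_fin, Complex.natCast_re] at hone
  have hfin : IsFiniteMeasure μ := by
    rcases integrable_const_iff.1 hone.1 with h | h
    · exact absurd h one_ne_zero
    · exact h
  refine ⟨?_, ?_, ?_⟩
  · intro ρ hρ htr
    have hH := hρ.isHermitian
    set U : Matrix (Fin d) (Fin d) ℂ := hH.eigenvectorUnitary.1 with hU
    set l := hH.eigenvalues with hl
    have hUU : U * Uᴴ = 1 := by
      have := (Matrix.mem_unitaryGroup_iff).1 hH.eigenvectorUnitary.2
      simpa [star_eq_conjTranspose] using this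
    have hUU' : Uᴴ * U = 1 := mul_eq_one_comm.1 hUU
    have hspec : ρ = U * diagonal (fun i => (l i : ℂ)) * Uᴴ := by
      conv_lhs => rw [hH.spectral_theorem]
      simp [Unitary.conjStarAlgAut_apply, star_eq_conjTranspose, hU, hl, Function.comp_def]
    have hl0 : ∀ i, 0 ≤ l i := hρ.eigenvalues_nonneg
    have hl1 : ∑ i, l i = 1 := by
      have := hH.trace_eq_sum_eigenvalues
      rw [htr] at this
      apply_fun Complex.re at this
      simpa using this.symm
    have hl1' : ∀ i, l i ≤ 1 := fun i => by
      rw [← hl1]; exact Finset.single_le_sum (fun j _ => hl0 j) (Finset.mem_univ i)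
    have hq : ∀ a, (star (φ a) ⬝ᵥ ρ *ᵥ (φ a)).re =
        ∑ i, Complex.normSq ((Uᴴ *ᵥ φ a) i) * l i := fun a => by
      rw [← wehrl_aux_diag, ← hspec]
    have hp1 : ∀ a, ∑ i, Complex.normSq ((Uᴴ *ᵥ φ a) i) = 1 := fun a => by
      have := wehrl_aux_diag U (fun _ => 1) (φ a)
      simp [hUU, hφu] at this
      exact this.symm
    have hpint : ∀ i, Integrable (fun a => Complex.normSq ((Uᴴ *ᵥ φ a) i)) μ ∧
        ∫ a, Complex.normSq ((Uᴴ *ᵥ φ a) i) ∂μ = 1 := fun i => by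
      have h := key (U * diagonal (fun j => (((Pi.single i 1 : Fin d → ℝ) j : ℝ) : ℂ)) * Uᴴ)
      simp only [wehrl_aux_diag] at h
      rw [Matrix.trace_mul_comm, ← Matrix.mul_assoc, hUU', Matrix.one_mul, trace_diagonal] at h
      simpa [Pi.single_apply] using h
    have hpt : ∀ a, ∑ i, Complex.normSq ((Uᴴ *ᵥ φ a) i) * Real.negMulLog (l i) ≤
        Real.negMulLog ((star (φ a) ⬝ᵥ ρ *ᵥ (φ a)).re) := fun a => by
      rw [hq]
      have := Real.concaveOn_negMulLog.le_map_sum (t := Finset.univ)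
        (w := fun i => Complex.normSq ((Uᴴ *ᵥ φ a) i)) (p := l)
        (fun i _ => Complex.normSq_nonneg _) (hp1 a) (fun i _ => hl0 i)
      simpa using this
    have hq0 : ∀ a, 0 ≤ (star (φ a) ⬝ᵥ ρ *ᵥ (φ a)).re := fun a => by
      rw [hq]
      exact Finset.sum_nonneg fun i _ => mul_nonneg (Complex.normSq_nonneg _) (hl0 i)
    have hq1 : ∀ a, (star (φ a) ⬝ᵥ ρ *ᵥ (φ a)).re ≤ 1 := fun a => by
      rw [hq, ← hp1 a]
      exact Finset.sum_le_sum fun i _ => mul_le_of_le_one_right (Complex.normSq_nonneg _) (hl1' i)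
    have hint : Integrable (fun a => Real.negMulLog ((star (φ a) ⬝ᵥ ρ *ᵥ (φ a)).re)) μ := by
      refine Integrable.of_bound
        (Real.continuous_negMulLog.comp_aestronglyMeasurable (key ρ).1.aestronglyMeasurable) 1
        (Filter.Eventually.of_forall fun a => ?_)
      have h0 := Real.negMulLog_nonneg (hq0 a) (hq1 a)
      rw [Real.norm_of_nonneg h0]
      have := Real.one_sub_inv_le_log_of_pos (x := (star (φ a) ⬝ᵥ ρ *ᵥ (φ a)).re)
      rcases (hq0 a).eq_or_lt with h | h
      · rw [← h]; simp
      · have h2 := this h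
        have h3 := mul_le_mul_of_nonneg_left h2 h.le
        rw [mul_sub, mul_inv_cancel₀ h.ne'] at h3
        simp only [Real.negMulLog]
        linarith
    have hmono := integral_mono
      (integrable_finsetSum Finset.univ fun i _ => (hpint i).1.mul_const (Real.negMulLog (l i)))
      hint hpt
    rw [integral_finsetSum _ fun i _ => (hpint i).1.mul_const _] at hmono
    simp only [integral_mul_const, (hpint _).2, one_mul] at hmono
    rw [entropy, dif_pos hH, wehrlEntropy]
    linarith
  · have hc : ((d : ℂ))⁻¹.re = (d : ℝ)⁻¹ := by
      rw [← Complex.ofReal_natCast, ← Complex.ofReal_inv, Complex.ofReal_re]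
    have h2 := hone.2
    simp only [integral_const, smul_eq_mul, mul_one] at h2
    simp only [wehrlEntropy, smul_mulVec, one_mulVec, dotProduct_smul, hφu, smul_eq_mul, mul_one,
      hc, integral_const, h2, Real.negMulLog, Real.log_inv]
    field_simp
  · have hH : (((d : ℂ))⁻¹ • (1 : Matrix (Fin d) (Fin d) ℂ)).IsHermitian := by
      simp [Matrix.IsHermitian, conjTranspose_smul]
    have hev : ∀ i, hH.eigenvalues i = (d : ℝ)⁻¹ := fun i => by
      have h := hH.eigenvalues_eq i
      have hn : star (hH.eigenvectorBasis i).ofLp ⬝ᵥ (hH.eigenvectorBasis i).ofLp = 1 := by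
        have := hH.eigenvectorBasis.orthonormal.1 i
        have h2 := inner_self_eq_norm_sq_to_K (𝕜 := ℂ) (hH.eigenvectorBasis i)
        rw [this, EuclideanSpace.inner_eq_star_dotProduct, dotProduct_comm] at h2
        simpa using h2
      rw [h]
      simp only [smul_mulVec, one_mulVec, dotProduct_smul, hn, smul_eq_mul, mul_one]
      change ((d : ℂ))⁻¹.re = _
      rw [← Complex.ofReal_natCast, ← Complex.ofReal_inv, Complex.ofReal_re]
    rw [entropy, dif_pos hH]
    simp only [hev, Finset.sum_const, Finset.card_univ, Fintype.card_fin, nsmul_eq_mul,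
      Real.negMulLog, Real.log_inv]
    field_simp
end

section
/- The maximum of Wehrl minus quantum entropy is attained at a pure state: Let H be a finite-dimensional complex Hilbert space, (Ω,μ) a measure space, and a ↦ φ_a ∈ H a measurable family of unit vectors with ∫_Ω |φ_a⟩⟨φ_a| dμ(a) = id_H (Bochner integral). Define S^W[ρ] = ∫_Ω φ( ⟨φ_a, ρ φ_a⟩ ) dμ(a) for density matrices ρ on H, where φ(x) = −x ln x (with φ(0)=0). Then for every density matrix ρ on H there exists a unit vector ψ ∈ H such that S^W[|ψ⟩⟨ψ|] ≥ S^W[ρ] − S[ρ] (note S[|ψ⟩⟨ψ|] = 0). -/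
open Matrix Kronecker Real
open scoped ComplexOrder

open MeasureTheory

lemma negMulLog_add_le' {x y : ℝ} (hx : 0 ≤ x) (hy : 0 ≤ y) :
    Real.negMulLog (x + y) ≤ Real.negMulLog x + Real.negMulLog y := by
  rcases hx.eq_or_lt with rfl | hx
  · simp
  rcases hy.eq_or_lt with rfl | hy
  · simp
  have h1 : Real.log x ≤ Real.log (x + y) := Real.log_le_log hx (by linarith)
  have h2 : Real.log y ≤ Real.log (x + y) := Real.log_le_log hy (by linarith)
  simp only [Real.negMulLog]
  nlinarith [mul_le_mul_of_nonneg_left h1 hx.le, mul_le_mul_of_nonneg_left h2 hy.le]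

lemma negMulLog_sum_le' {n : Type*} (s : Finset n) (f : n → ℝ) (hf : ∀ i, 0 ≤ f i) :
    Real.negMulLog (∑ i ∈ s, f i) ≤ ∑ i ∈ s, Real.negMulLog (f i) := by
  classical
  induction s using Finset.induction_on with
  | empty => simp
  | insert a s ha ih =>
    rw [Finset.sum_insert ha, Finset.sum_insert ha]
    have := negMulLog_add_le' (hf a) (Finset.sum_nonneg fun i (_ : i ∈ s) => hf i)
    linarith

lemma negMulLog_le_one' {x : ℝ} (hx : 0 ≤ x) : Real.negMulLog x ≤ 1 := by
  rcases hx.eq_or_lt with rfl | hx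
  · simp
  have h := Real.one_sub_inv_le_log_of_pos hx
  have := mul_le_mul_of_nonneg_left h hx.le
  rw [mul_sub, mul_inv_cancel₀ hx.ne'] at this
  simp only [Real.negMulLog]
  linarith

lemma quad_rankone {n : Type*} [Fintype n] (x v : n → ℂ) :
    (star x ⬝ᵥ (Matrix.vecMulVec v (star v)) *ᵥ x) = (Complex.normSq (star v ⬝ᵥ x) : ℂ) := by
  rw [Matrix.vecMulVec_mulVec, dotProduct_smul, Complex.normSq_eq_conj_mul_self]
  have : star x ⬝ᵥ v = (starRingEnd ℂ) (star v ⬝ᵥ x) := by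
    simp [dotProduct, mul_comm]
  rw [this]
  simp [mul_comm]

lemma spectral_sum {n : Type*} [Fintype n] [DecidableEq n] {ρ : Matrix n n ℂ}
    (h : ρ.IsHermitian) :
    ρ = ∑ i, (h.eigenvalues i : ℂ) •
      Matrix.vecMulVec (⇑(h.eigenvectorBasis i)) (star ⇑(h.eigenvectorBasis i)) := by
  conv_lhs => rw [h.spectral_theorem]
  ext j k
  simp [Unitary.conjStarAlgAut_apply, Matrix.mul_apply, Matrix.sum_apply, Matrix.vecMulVec_apply,
    Matrix.diagonal_apply, Matrix.star_apply, h.eigenvectorUnitary_apply]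
  refine Finset.sum_congr rfl fun i _ => ?_
  ring

lemma eig_norm {n : Type*} [Fintype n] [DecidableEq n] {ρ : Matrix n n ℂ}
    (h : ρ.IsHermitian) (i : n) :
    star (⇑(h.eigenvectorBasis i)) ⬝ᵥ (⇑(h.eigenvectorBasis i)) = 1 := by
  have := h.eigenvectorBasis.orthonormal.1 i
  have h2 : inner ℂ (h.eigenvectorBasis i) (h.eigenvectorBasis i) = 1 := by
    rw [inner_self_eq_norm_sq_to_K, this]; simp
  rw [← h2, EuclideanSpace.inner_eq_star_dotProduct, dotProduct_comm]

lemma rank_one_le {n : Type*} [Fintype n] (v x : n → ℂ) (hv : star v ⬝ᵥ v = 1)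
    (hx : star x ⬝ᵥ x = 1) : Complex.normSq (star v ⬝ᵥ x) ≤ 1 := by
  have key : ∀ u : n → ℂ, star u ⬝ᵥ u = 1 → ‖(WithLp.toLp 2 u : EuclideanSpace ℂ n)‖ = 1 := by
    intro u hu
    have := EuclideanSpace.inner_eq_star_dotProduct (WithLp.toLp 2 u) (WithLp.toLp 2 u)
    rw [inner_self_eq_norm_sq_to_K, dotProduct_comm] at this
    simp only [hu] at this
    have h3 : ‖(WithLp.toLp 2 u : EuclideanSpace ℂ n)‖ ^ 2 = 1 := by
      have h4 : ((‖(WithLp.toLp 2 u : EuclideanSpace ℂ n)‖ : ℂ)) ^ 2 = 1 := this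
      exact_mod_cast h4
    nlinarith [norm_nonneg (WithLp.toLp 2 u : EuclideanSpace ℂ n)]
  have h := norm_inner_le_norm (𝕜 := ℂ) (WithLp.toLp 2 v : EuclideanSpace ℂ n) (WithLp.toLp 2 x)
  rw [key v hv, key x hx, EuclideanSpace.inner_eq_star_dotProduct, dotProduct_comm] at h
  rw [Complex.normSq_eq_norm_sq]
  simp only at h
  nlinarith [norm_nonneg (star v ⬝ᵥ x)]

/-- **The maximum of Wehrl minus quantum entropy is attained at a pure state**:
for every density matrix `ρ` there is a unit vector `ψ` with
`S^W[|ψ⟩⟨ψ|] ≥ S^W[ρ] − S[ρ]`. -/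
theorem wehrl_minus_quantum_entropy_le_pure_state
    {n : Type*} [Fintype n] [DecidableEq n]
    {Ω : Type*} [MeasurableSpace Ω] (μ : Measure Ω)
    (φ : Ω → n → ℂ)
    (hφm : ∀ i, Measurable fun a => φ a i)
    (hφu : ∀ a, star (φ a) ⬝ᵥ φ a = 1)
    (hφint : ∀ i j, Integrable (fun a => φ a i * (starRingEnd ℂ) (φ a j)) μ)
    (hφres : ∀ i j, (∫ a, φ a i * (starRingEnd ℂ) (φ a j) ∂μ) =
      (1 : Matrix n n ℂ) i j)
    (ρ : Matrix n n ℂ) (hρ : ρ.PosSemidef) (hρtr : ρ.trace = 1) :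
    ∃ ψ : n → ℂ, star ψ ⬝ᵥ ψ = 1 ∧
      wehrlEntropy μ φ ρ - entropy ρ ≤
        wehrlEntropy μ φ (Matrix.vecMulVec ψ (star ψ)) := by
  classical
  have hH := hρ.isHermitian
  set v : n → n → ℂ := fun i => ⇑(hH.eigenvectorBasis i) with hv
  set l := hH.eigenvalues with hl
  have hl0 : ∀ i, 0 ≤ l i := hρ.eigenvalues_nonneg
  have hl1 : ∑ i, l i = 1 := by
    have := hH.trace_eq_sum_eigenvalues
    rw [hρtr] at this
    simp only [Complex.coe_algebraMap] at this
    exact_mod_cast this.symm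
  have hvn : ∀ i, star (v i) ⬝ᵥ v i = 1 := fun i => eig_norm hH i
  set p : n → Ω → ℝ := fun i a => Complex.normSq (star (v i) ⬝ᵥ φ a) with hp
  have hp0 : ∀ i a, 0 ≤ p i a := fun i a => Complex.normSq_nonneg _
  have hp1 : ∀ i a, p i a ≤ 1 := fun i a => rank_one_le _ _ (hvn i) (hφu a)
  have hpm : ∀ i, Measurable (p i) := by
    intro i
    refine Complex.continuous_normSq.measurable.comp ?_
    simp only [dotProduct]
    exact Finset.measurable_sum _ fun j _ => (hφm j).const_mul _
  have hfin : IsFiniteMeasure μ := by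
    have : Integrable (fun a => ∑ i, φ a i * (starRingEnd ℂ) (φ a i)) μ :=
      integrable_finsetSum _ fun i _ => hφint i i
    have h2 : (fun a => ∑ i, φ a i * (starRingEnd ℂ) (φ a i)) = fun _ => (1 : ℂ) := by
      funext a
      rw [← hφu a]
      simp [dotProduct, mul_comm]
    rw [h2] at this
    exact (integrable_const_iff_isFiniteMeasure one_ne_zero).1 this
  have hpi : ∀ i, Integrable (p i) μ := fun i =>
    Integrable.of_bound (hpm i).aestronglyMeasurable 1 (Filter.Eventually.of_forall fun a => by
      rw [Real.norm_of_nonneg (hp0 i a)]; exact hp1 i a)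
  have hni : ∀ i, Integrable (fun a => Real.negMulLog (p i a)) μ := fun i =>
    Integrable.of_bound (Real.continuous_negMulLog.measurable.comp (hpm i)).aestronglyMeasurable 1
      (Filter.Eventually.of_forall fun a => by
      rw [Real.norm_of_nonneg (Real.negMulLog_nonneg (hp0 i a) (hp1 i a))]
      exact negMulLog_le_one' (hp0 i a))
  have hpint : ∀ i, ∫ a, p i a ∂μ = 1 := by
    intro i
    have e : ∀ a, (p i a : ℂ) = ∑ j, ∑ k, (star (v i) j * v i k) *
        (φ a j * (starRingEnd ℂ) (φ a k)) := by
      intro a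
      simp only [hp, ← Complex.mul_conj, dotProduct, map_sum, Finset.sum_mul_sum]
      refine Finset.sum_congr rfl fun j _ => Finset.sum_congr rfl fun k _ => ?_
      simp
      ring
    have : ((∫ a, p i a ∂μ : ℝ) : ℂ) = 1 := by
      rw [← integral_complex_ofReal]
      simp_rw [e]
      rw [integral_finsetSum _ fun j _ => integrable_finsetSum _ fun k _ =>
        (hφint j k).const_mul _]
      simp_rw [integral_finsetSum _ fun k _ => (hφint _ k).const_mul _, integral_const_mul, hφres]
      simp only [Matrix.one_apply, mul_ite, mul_one, mul_zero, Finset.sum_ite_eq, Finset.mem_univ,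
        if_true]
      exact hvn i
    exact_mod_cast this
  have hQ : ∀ a, (star (φ a) ⬝ᵥ ρ *ᵥ (φ a)).re = ∑ i, l i * p i a := by
    intro a
    have : star (φ a) ⬝ᵥ ρ *ᵥ (φ a) = ((∑ i, l i * p i a : ℝ) : ℂ) := by
      rw [spectral_sum hH, Matrix.sum_mulVec, dotProduct_sum]
      push_cast
      refine Finset.sum_congr rfl fun i _ => ?_
      rw [Matrix.smul_mulVec, dotProduct_smul, quad_rankone, smul_eq_mul]
    rw [this, Complex.ofReal_re]
  have hW : ∀ i, wehrlEntropy μ φ (Matrix.vecMulVec (v i) (star (v i))) =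
      ∫ a, Real.negMulLog (p i a) ∂μ := by
    intro i
    simp only [wehrlEntropy, quad_rankone, Complex.ofReal_re, hp]
  have hE : entropy ρ = ∑ i, Real.negMulLog (l i) := by
    simp only [entropy, dif_pos hH, hl]
  have hmain : wehrlEntropy μ φ ρ ≤ ∑ i, l i * (∫ a, Real.negMulLog (p i a) ∂μ) +
      ∑ i, Real.negMulLog (l i) := by
    have hg : ∀ i, Integrable (fun a => p i a * Real.negMulLog (l i) +
        l i * Real.negMulLog (p i a)) μ := fun i =>
      ((hpi i).mul_const _).add ((hni i).const_mul _)
    calc wehrlEntropy μ φ ρ = ∫ a, Real.negMulLog (∑ i, l i * p i a) ∂μ := by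
          simp only [wehrlEntropy, hQ]
      _ ≤ ∫ a, ∑ i, (p i a * Real.negMulLog (l i) + l i * Real.negMulLog (p i a)) ∂μ := by
          refine integral_mono_of_nonneg (Filter.Eventually.of_forall fun a => ?_)
            (integrable_finsetSum _ fun i _ => hg i) (Filter.Eventually.of_forall fun a => ?_)
          · refine Real.negMulLog_nonneg
              (Finset.sum_nonneg fun i _ => mul_nonneg (hl0 i) (hp0 i a)) ?_
            rw [← hl1]
            exact Finset.sum_le_sum fun i _ => mul_le_of_le_one_right (hl0 i) (hp1 i a)
          · refine (negMulLog_sum_le' _ _ fun i => mul_nonneg (hl0 i) (hp0 i a)).trans ?_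
            simp only [Real.negMulLog_mul]
            exact le_refl _
      _ = _ := by
          rw [integral_finsetSum _ fun i _ => hg i, ← Finset.sum_add_distrib]
          refine Finset.sum_congr rfl fun i _ => ?_
          rw [integral_add ((hpi i).mul_const _) ((hni i).const_mul _), integral_mul_const,
            integral_const_mul, hpint i]
          ring
  by_contra hcon
  push Not at hcon
  have hlt : ∀ i, ∫ a, Real.negMulLog (p i a) ∂μ < wehrlEntropy μ φ ρ - entropy ρ := fun i => by
    rw [← hW i]; exact hcon _ (hvn i)
  obtain ⟨i₀, -, hi₀⟩ : ∃ i ∈ Finset.univ, (0:ℝ) < l i := by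
    by_contra hc
    push Not at hc
    have := Finset.sum_nonpos hc
    linarith
  have : ∑ i, l i * (∫ a, Real.negMulLog (p i a) ∂μ) <
      ∑ i, l i * (wehrlEntropy μ φ ρ - entropy ρ) :=
    Finset.sum_lt_sum (fun i _ => mul_le_mul_of_nonneg_left (hlt i).le (hl0 i))
      ⟨i₀, Finset.mem_univ _, mul_lt_mul_of_pos_left (hlt i₀) hi₀⟩
  rw [← Finset.sum_mul, hl1, one_mul] at this
  linarith
end

section
/- Stronger subadditivity with a continuum of operators (finite-dimensional integral version): Let H₁, H₂, H₃ be finite-dimensional complex Hilbert spaces, ρ₁₂₃ a density matrix on H₁⊗H₂⊗H₃, (Ω,μ) a measure space, and α ↦ K^α a measurable family of operators on H₁⊗H₂ satisfying ∫_Ω K^{α*}K^α dμ(α) = id_{H₁⊗H₂} (Bochner integral of operator-valued functions). Set n^α = Tr[(K^α⊗id₃) ρ₁₂₃ (K^{α*}⊗id₃)], and for α with n^α > 0 set ρ₂₃^α = Tr₁[(K^α⊗id₃) ρ₁₂₃ (K^{α*}⊗id₃)]/n^α and ρ₂^α = Tr₃ ρ₂₃^α. Then S[ρ₁₂₃] −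 S[ρ₁₂] ≤ ∫_{{α : n^α>0}} n^α ( S[ρ₂₃^α] − S[ρ₂^α] ) dμ(α). -/
open Matrix Kronecker Real
open scoped ComplexOrder

open MeasureTheory

section helpers

/-- spectral data for a pair of positive matrices -/
structure SD (N : Type*) [Fintype N] [DecidableEq N] where
  V : Matrix N N ℂ
  F : Matrix N N ℂ
  p : N → ℝ
  q : N → ℝ
  hV : V * Vᴴ = 1
  hV' : Vᴴ * V = 1
  hF : F * Fᴴ = 1
  hF' : Fᴴ * F = 1
  p0 : ∀ i, 0 ≤ p i
  q0 : ∀ i, 0 ≤ q i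
  supp : ∀ i j, 0 < p i → (Fᴴ * V) j i ≠ 0 → 0 < q j

namespace SD
variable {N : Type*} [Fintype N] [DecidableEq N] (d : SD N)

noncomputable def ρ : Matrix N N ℂ := d.V * diagonal (fun i => (d.p i : ℂ)) * d.Vᴴ

noncomputable def σ : Matrix N N ℂ := d.F * diagonal (fun i => (d.q i : ℂ)) * d.Fᴴ

noncomputable def m (s : ℝ) (j i : N) : ℝ := (1 - s) * d.q j + s * d.p i

noncomputable def Zc (s : ℝ) : Matrix N N ℂ :=
  of fun j i => ((d.p i / d.m s j i : ℝ) : ℂ) * (d.Fᴴ * d.V) j i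

noncomputable def Z (s : ℝ) : Matrix N N ℂ := d.F * d.Zc s * d.Vᴴ

noncomputable def W (s : ℝ) : Matrix N N ℂ :=
  ((1 - s : ℝ) : ℂ) • ((d.Z s)ᴴ * d.σ * d.Z s) + (s : ℂ) • (d.Z s * d.ρ * (d.Z s)ᴴ)

noncomputable def M (s : ℝ) : Matrix N N ℂ :=
  (((1 - s : ℝ) : ℂ)⁻¹) • (d.W s - d.ρ)

noncomputable def R (s : ℝ) : ℝ :=
  ∑ i, ∑ j, ‖(d.Fᴴ * d.V) j i‖ ^ 2 * (d.p i * (d.p i - d.q j) / d.m s j i)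

noncomputable def D : ℝ :=
  ∑ i, ∑ j, ‖(d.Fᴴ * d.V) j i‖ ^ 2 * (d.p i * (Real.log (d.p i) - Real.log (d.q j)))

lemma m_ne {s : ℝ} (h0 : 0 < s) (h1 : s < 1) (i j : N) (hp : d.p i ≠ 0) : d.m s j i ≠ 0 := by
  have := d.p0 i
  have h2 : 0 < d.p i := lt_of_le_of_ne this (Ne.symm hp)
  have h3 := d.q0 j
  have : 0 < s * d.p i := mul_pos h0 h2
  have : 0 ≤ (1 - s) * d.q j := mul_nonneg (by linarith) h3
  unfold m
  linarith

lemma lyap {s : ℝ} (h0 : 0 < s) (h1 : s < 1) :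
    ((1 - s : ℝ) : ℂ) • (d.σ * d.Z s) + (s : ℂ) • (d.Z s * d.ρ) = d.ρ := by
  have e1 : d.σ * d.Z s = d.F * (diagonal (fun i => (d.q i : ℂ)) * d.Zc s) * d.Vᴴ := by
    rw [Z, σ]
    calc _ = d.F * diagonal (fun i => (d.q i : ℂ)) * (d.Fᴴ * d.F) * d.Zc s * d.Vᴴ := by
          simp only [Matrix.mul_assoc]
      _ = _ := by rw [d.hF']; simp only [Matrix.mul_assoc, Matrix.one_mul]
  have e2 : d.Z s * d.ρ = d.F * (d.Zc s * diagonal (fun i => (d.p i : ℂ))) * d.Vᴴ := by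
    rw [Z]; rw [ρ]
    calc _ = d.F * d.Zc s * (d.Vᴴ * d.V) * diagonal (fun i => (d.p i : ℂ)) * d.Vᴴ := by
          simp only [Matrix.mul_assoc]
      _ = _ := by rw [d.hV']; simp only [Matrix.mul_assoc, Matrix.one_mul]
  have e3 : ((1 - s : ℝ) : ℂ) • (diagonal (fun i => (d.q i : ℂ)) * d.Zc s)
      + (s : ℂ) • (d.Zc s * diagonal (fun i => (d.p i : ℂ)))
      = d.Fᴴ * d.V * diagonal (fun i => (d.p i : ℂ)) := by
    ext j i
    simp only [Matrix.add_apply, Matrix.smul_apply, diagonal_mul, mul_diagonal, smul_eq_mul, Zc, of_apply]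
    by_cases hp : d.p i = 0
    · simp [hp]
    · have hm := d.m_ne h0 h1 i j hp
      have : (1 - s) * (d.q j * (d.p i / d.m s j i)) + s * (d.p i / d.m s j i * d.p i) = d.p i := by
        have : d.m s j i = (1 - s) * d.q j + s * d.p i := rfl
        field_simp
        linear_combination -this
      have h := congrArg (fun x : ℝ => (x : ℂ)) this
      push_cast at h ⊢
      linear_combination ((d.Fᴴ * d.V) j i) * h
  have e4 : ((1 - s : ℝ) : ℂ) • (d.σ * d.Z s) + (s : ℂ) • (d.Z s * d.ρ) =
      d.F * (d.Fᴴ * d.V * diagonal (fun i => (d.p i : ℂ))) * d.Vᴴ := by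
    rw [e1, e2, ← e3]
    simp only [Matrix.mul_add, Matrix.add_mul, Matrix.smul_mul, Matrix.mul_smul]
  rw [e4]
  rw [ρ]
  calc _ = (d.F * d.Fᴴ) * d.V * diagonal (fun i => (d.p i : ℂ)) * d.Vᴴ := by
        simp only [Matrix.mul_assoc]
    _ = _ := by rw [d.hF, Matrix.one_mul]

lemma trZ (s : ℝ) : ((d.Z s)ᴴ * d.ρ).trace =
    ((∑ i, ∑ j, ‖(d.Fᴴ * d.V) j i‖ ^ 2 * (d.p i ^ 2 / d.m s j i) : ℝ) : ℂ) := by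
  have e : ((d.Z s)ᴴ * d.ρ).trace
      = ((d.Zc s)ᴴ * (d.Fᴴ * d.V * diagonal (fun i => (d.p i : ℂ)))).trace := by
    rw [Z]; rw [ρ]
    simp only [conjTranspose_mul, conjTranspose_conjTranspose]
    calc _ = (d.V * ((d.Zc s)ᴴ * (d.Fᴴ * d.V * diagonal (fun i => (d.p i : ℂ))) * d.Vᴴ)).trace := by
          simp only [Matrix.mul_assoc]
      _ = _ := by rw [Matrix.trace_mul_comm]; simp only [Matrix.mul_assoc, d.hV', Matrix.mul_one]
  rw [e, Matrix.trace]
  push_cast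
  refine Finset.sum_congr rfl fun i _ => ?_
  rw [Matrix.diag_apply, Matrix.mul_apply]
  refine Finset.sum_congr rfl fun j _ => ?_
  rw [conjTranspose_apply, mul_diagonal, Zc, of_apply, star_mul', ← Complex.mul_conj']
  simp
  ring

lemma colsum (i : N) : ∑ j, ‖(d.Fᴴ * d.V) j i‖ ^ 2 = 1 := by
  have h : ((d.Fᴴ * d.V)ᴴ * (d.Fᴴ * d.V)) i i = 1 := by
    simp only [conjTranspose_mul, conjTranspose_conjTranspose]
    rw [Matrix.mul_assoc, ← Matrix.mul_assoc d.F, d.hF, Matrix.one_mul, d.hV', Matrix.one_apply_eq]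
  rw [Matrix.mul_apply] at h
  have h2 : ((∑ j, ‖(d.Fᴴ * d.V) j i‖ ^ 2 : ℝ) : ℂ) = 1 := by
    rw [← h]; push_cast
    refine Finset.sum_congr rfl fun j _ => ?_
    rw [conjTranspose_apply, ← Complex.conj_mul']; rfl
  exact_mod_cast h2

lemma trρ : d.ρ.trace = ((∑ i, d.p i : ℝ) : ℂ) := by
  rw [ρ]
  rw [Matrix.mul_assoc, Matrix.trace_mul_comm, Matrix.mul_assoc, d.hV', Matrix.mul_one]
  simp [Matrix.trace]

lemma R_eq {s : ℝ} (h0 : 0 < s) (h1 : s < 1) :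
    ((d.Z s)ᴴ * d.ρ).trace - d.ρ.trace = (((1 - s) * d.R s : ℝ) : ℂ) := by
  rw [trZ, d.trρ, ← Complex.ofReal_sub]
  congr 1
  have : ∑ i, d.p i = ∑ i, ∑ j, ‖(d.Fᴴ * d.V) j i‖ ^ 2 * d.p i := by
    refine Finset.sum_congr rfl fun i _ => ?_
    rw [← Finset.sum_mul, colsum, one_mul]
  rw [this, R, Finset.mul_sum, ← Finset.sum_sub_distrib]
  refine Finset.sum_congr rfl fun i _ => ?_
  rw [Finset.mul_sum, ← Finset.sum_sub_distrib]
  refine Finset.sum_congr rfl fun j _ => ?_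
  by_cases hp : d.p i = 0
  · simp [hp]
  have hm := d.m_ne h0 h1 i j hp
  have h : d.m s j i = (1 - s) * d.q j + s * d.p i := rfl
  field_simp
  rw [h]; ring

lemma trW {s : ℝ} (h0 : 0 < s) (h1 : s < 1) : (d.W s).trace = ((d.Z s)ᴴ * d.ρ).trace := by
  conv_rhs => arg 1; arg 2; rw [← d.lyap h0 h1]
  rw [W]
  simp only [Matrix.mul_add, Matrix.trace_add, Matrix.mul_smul, Matrix.trace_smul]
  rw [Matrix.trace_mul_comm (d.Z s * d.ρ), Matrix.mul_assoc]

lemma trM {s : ℝ} (h0 : 0 < s) (h1 : s < 1) : (d.M s).trace = (d.R s : ℂ) := by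
  rw [M, Matrix.trace_smul, Matrix.trace_sub, d.trW h0 h1, d.R_eq h0 h1, smul_eq_mul]
  push_cast
  rw [← mul_assoc, inv_mul_cancel₀, one_mul]
  have : (1 - s) ≠ 0 := by linarith
  exact_mod_cast this

end SD

open intervalIntegral

lemma ii_sum {ι E : Type*} [Fintype ι] [NormedAddCommGroup E] {f : ι → ℝ → E}
    (h : ∀ i, IntervalIntegrable (f i) volume 0 1) :
    IntervalIntegrable (fun s => ∑ i, f i s) volume 0 1 := by
  have := IntervalIntegrable.sum (μ := volume) (a := (0:ℝ)) (b := 1) Finset.univ (f := f)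
    (fun i _ => h i)
  have e : (∑ i, f i) = fun s => ∑ i, f i s := by
    ext s
    simp
  rwa [e] at this

lemma lin_pos {p q s : ℝ} (hp : 0 < p) (hq : 0 < q) (hs : s ∈ Set.uIcc (0:ℝ) 1) :
    0 < (1 - s) * q + s * p := by
  rw [Set.uIcc_of_le zero_le_one] at hs
  obtain ⟨h0, h1⟩ := hs
  rcases h0.eq_or_lt with h | h
  · subst h; simpa using hq
  · have := mul_pos h hp
    have := mul_nonneg (sub_nonneg.2 h1) hq.le
    linarith

lemma scal_int {p q : ℝ} (hp : 0 < p) (hq : 0 < q) :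
    IntervalIntegrable (fun s => p * (p - q) / ((1 - s) * q + s * p)) volume 0 1 := by
  apply ContinuousOn.intervalIntegrable
  apply ContinuousOn.div (by fun_prop) (by fun_prop)
  intro s hs
  exact (lin_pos hp hq hs).ne'

lemma scal_integral {p q : ℝ} (hp : 0 < p) (hq : 0 < q) :
    ∫ s in (0:ℝ)..1, p * (p - q) / ((1 - s) * q + s * p) = p * (Real.log p - Real.log q) := by
  have := integral_eq_sub_of_hasDerivAt
    (f := fun s => p * Real.log ((1 - s) * q + s * p))
    (f' := fun s => p * (p - q) / ((1 - s) * q + s * p)) (a := 0) (b := 1) ?_ (scal_int hp hq)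
  · rw [this]; simp; ring
  · intro s hs
    have h := lin_pos hp hq hs
    have h1 : HasDerivAt (fun s : ℝ => (1 - s) * q + s * p) (p - q) s := by
      have := (((hasDerivAt_id s).const_sub 1).mul_const q).add ((hasDerivAt_id s).mul_const p)
      have e : -1 * q + 1 * p = p - q := by ring
      rw [e] at this
      exact this
    have h2 := (h1.log h.ne').const_mul p
    rwa [← mul_div_assoc] at h2

lemma mat_int {N : Type*} [Fintype N] (A B : Matrix N N ℂ) (f : ℝ → Matrix N N ℂ)
    (hf : ∀ i j, IntervalIntegrable (fun s => f s i j) volume 0 1) (i j : N) :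
    IntervalIntegrable (fun s => (A * f s * B) i j) volume 0 1 := by
  simp only [Matrix.mul_apply, Finset.sum_mul]
  refine ii_sum fun k => ?_
  refine ii_sum fun l => ?_
  exact ((hf l k).const_mul _).mul_const _

namespace SD
variable {N : Type*} [Fintype N] [DecidableEq N] (d : SD N)

lemma R_term_int (i j : N) : IntervalIntegrable
    (fun s => ‖(d.Fᴴ * d.V) j i‖ ^ 2 * (d.p i * (d.p i - d.q j) / d.m s j i)) volume 0 1 := by
  by_cases hU : (d.Fᴴ * d.V) j i = 0
  · simp [hU]
  by_cases hp : d.p i = 0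
  · simp [hp]
  have hp' : 0 < d.p i := lt_of_le_of_ne (d.p0 i) (Ne.symm hp)
  exact (scal_int hp' (d.supp i j hp' hU)).const_mul _

lemma R_int : IntervalIntegrable d.R volume 0 1 := by
  unfold R
  refine ii_sum fun i => ?_
  exact ii_sum fun j => d.R_term_int i j

lemma R_integral : ∫ s in (0:ℝ)..1, d.R s = d.D := by
  unfold R D
  rw [intervalIntegral.integral_finsetSum]
  · refine Finset.sum_congr rfl fun i _ => ?_
    rw [intervalIntegral.integral_finsetSum]
    · refine Finset.sum_congr rfl fun j _ => ?_
      rw [intervalIntegral.integral_const_mul]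
      by_cases hU : (d.Fᴴ * d.V) j i = 0
      · simp [hU]
      by_cases hp : d.p i = 0
      · simp [hp]
      have hp' : 0 < d.p i := lt_of_le_of_ne (d.p0 i) (Ne.symm hp)
      rw [← scal_integral hp' (d.supp i j hp' hU)]
      rfl
    · exact fun j _ => d.R_term_int i j
  · intro i _
    exact ii_sum fun j => d.R_term_int i j

noncomputable def A (s : ℝ) : Matrix N N ℂ := of fun i i' =>
  ∑ j, star ((d.Fᴴ * d.V) j i) * (d.Fᴴ * d.V) j i' *
    ((d.q j * d.p i * d.p i' / (d.m s j i * d.m s j i') : ℝ) : ℂ)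

noncomputable def B (s : ℝ) : Matrix N N ℂ := of fun j j' =>
  ∑ i, (d.Fᴴ * d.V) j i * star ((d.Fᴴ * d.V) j' i) *
    ((d.p i * (s * d.p i ^ 2 - s * d.p i * (d.q j + d.q j') - (1 - s) * (d.q j * d.q j'))
      / (d.m s j i * d.m s j' i) : ℝ) : ℂ)

lemma A_int (i i' : N) : IntervalIntegrable (fun s => d.A s i i') volume 0 1 := by
  simp only [A, of_apply]
  refine ii_sum fun j => ?_
  by_cases hq : d.q j = 0
  · simp [hq]
  by_cases hp : d.p i = 0
  · simp [hp]
  by_cases hp2 : d.p i' = 0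
  · simp [hp2]
  have hq' : 0 < d.q j := lt_of_le_of_ne (d.q0 j) (Ne.symm hq)
  have hp' : 0 < d.p i := lt_of_le_of_ne (d.p0 i) (Ne.symm hp)
  have hp2' : 0 < d.p i' := lt_of_le_of_ne (d.p0 i') (Ne.symm hp2)
  apply IntervalIntegrable.const_mul
  apply ContinuousOn.intervalIntegrable
  apply Complex.continuous_ofReal.comp_continuousOn
  unfold m
  apply ContinuousOn.div (by fun_prop) (by fun_prop)
  intro s hs
  exact (mul_pos (lin_pos hp' hq' hs) (lin_pos hp2' hq' hs)).ne'

lemma B_int (j j' : N) : IntervalIntegrable (fun s => d.B s j j') volume 0 1 := by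
  simp only [B, of_apply]
  refine ii_sum fun i => ?_
  by_cases hp : d.p i = 0
  · simp [hp]
  by_cases hU : (d.Fᴴ * d.V) j i = 0
  · simp [hU]
  by_cases hU' : (d.Fᴴ * d.V) j' i = 0
  · simp [hU']
  have hp' : 0 < d.p i := lt_of_le_of_ne (d.p0 i) (Ne.symm hp)
  have hq := d.supp i j hp' hU
  have hq' := d.supp i j' hp' hU'
  apply IntervalIntegrable.const_mul
  apply ContinuousOn.intervalIntegrable
  apply Complex.continuous_ofReal.comp_continuousOn
  unfold m
  apply ContinuousOn.div (by fun_prop) (by fun_prop)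
  intro s hs
  exact (mul_pos (lin_pos hp' hq hs) (lin_pos hp' hq' hs)).ne'

lemma M_eq {s : ℝ} (h0 : 0 < s) (h1 : s < 1) :
    d.M s = d.V * d.A s * d.Vᴴ + d.F * d.B s * d.Fᴴ := by
  have hs : (1 - s) ≠ 0 := by linarith
  have hs' : ((1 - s : ℝ) : ℂ) ≠ 0 := by exact_mod_cast hs
  have e1 : (d.Z s)ᴴ * d.σ * d.Z s = d.V * d.A s * d.Vᴴ := by
    have : d.A s = (d.Zc s)ᴴ * diagonal (fun i => (d.q i : ℂ)) * d.Zc s := by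
      ext i i'
      simp only [A, of_apply, Matrix.mul_apply (M := _ * _), mul_diagonal, conjTranspose_apply, Zc]
      refine Finset.sum_congr rfl fun j _ => ?_
      simp only [star_mul', Complex.star_def, Complex.conj_ofReal]
      push_cast
      ring
    rw [this, Z, σ]
    simp only [conjTranspose_mul, conjTranspose_conjTranspose]
    calc _ = d.V * (d.Zc s)ᴴ * (d.Fᴴ * d.F) * diagonal (fun i => (d.q i : ℂ)) * (d.Fᴴ * d.F) *
          d.Zc s * d.Vᴴ := by simp only [Matrix.mul_assoc]
      _ = _ := by rw [d.hF']; simp only [Matrix.mul_assoc, Matrix.one_mul]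
  have e2 : d.Z s * d.ρ * (d.Z s)ᴴ =
      d.F * (d.Zc s * diagonal (fun i => (d.p i : ℂ)) * (d.Zc s)ᴴ) * d.Fᴴ := by
    rw [Z, ρ]
    simp only [conjTranspose_mul, conjTranspose_conjTranspose]
    calc _ = d.F * d.Zc s * (d.Vᴴ * d.V) * diagonal (fun i => (d.p i : ℂ)) * (d.Vᴴ * d.V) *
          (d.Zc s)ᴴ * d.Fᴴ := by simp only [Matrix.mul_assoc]
      _ = _ := by rw [d.hV']; simp only [Matrix.mul_assoc, Matrix.one_mul]
  have e3 : d.ρ =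
      d.F * ((d.Fᴴ * d.V) * diagonal (fun i => (d.p i : ℂ)) * (d.Fᴴ * d.V)ᴴ) * d.Fᴴ := by
    rw [ρ]
    simp only [conjTranspose_mul, conjTranspose_conjTranspose]
    symm
    calc _ = (d.F * d.Fᴴ) * d.V * diagonal (fun i => (d.p i : ℂ)) * d.Vᴴ * (d.F * d.Fᴴ) := by
          simp only [Matrix.mul_assoc]
      _ = _ := by rw [d.hF, Matrix.one_mul, Matrix.mul_one]
  have e4 : (s : ℂ) • (d.Zc s * diagonal (fun i => (d.p i : ℂ)) * (d.Zc s)ᴴ)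
      - (d.Fᴴ * d.V) * diagonal (fun i => (d.p i : ℂ)) * (d.Fᴴ * d.V)ᴴ
      = ((1 - s : ℝ) : ℂ) • d.B s := by
    ext j j'
    simp only [Matrix.sub_apply, Matrix.smul_apply, B, of_apply, Matrix.mul_apply (M := _ * diagonal _),
      mul_diagonal, conjTranspose_apply (i := j'), Zc, smul_eq_mul]
    rw [Finset.mul_sum, Finset.mul_sum, ← Finset.sum_sub_distrib]
    refine Finset.sum_congr rfl fun i _ => ?_
    simp only [star_mul', Complex.star_def, Complex.conj_ofReal]
    by_cases hp : d.p i = 0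
    · simp [hp]
    have hm := d.m_ne h0 h1 i j hp
    have hm' := d.m_ne h0 h1 i j' hp
    have : s * ((d.p i / d.m s j i) * d.p i * (d.p i / d.m s j' i)) - d.p i =
      (1 - s) * (d.p i * (s * d.p i ^ 2 - s * d.p i * (d.q j + d.q j') - (1 - s) * (d.q j * d.q j'))
      / (d.m s j i * d.m s j' i)) := by
      field_simp
      simp only [m]
      ring
    have h := congrArg (fun x : ℝ => (x : ℂ)) this
    simp only [Complex.ofReal_sub, Complex.ofReal_mul s, Complex.ofReal_mul (1 - s),
      Complex.ofReal_mul (d.p i / d.m s j i * d.p i), Complex.ofReal_mul (d.p i / d.m s j i)] at h ⊢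
    linear_combination ((d.Fᴴ * d.V) j i * (starRingEnd ℂ) ((d.Fᴴ * d.V) j' i)) * h
  have e5 : (s : ℂ) • (d.Z s * d.ρ * (d.Z s)ᴴ) - d.ρ =
      ((1 - s : ℝ) : ℂ) • (d.F * d.B s * d.Fᴴ) := by
    rw [e2]; conv_lhs => rw [e3]
    rw [← Matrix.smul_mul, ← Matrix.mul_smul, ← Matrix.sub_mul, ← Matrix.mul_sub, e4,
      Matrix.mul_smul, Matrix.smul_mul]
  rw [M, W, add_sub_assoc, e5, e1, ← smul_add, smul_smul, inv_mul_cancel₀ hs', one_smul]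

lemma M_int (a b : N) : IntervalIntegrable (fun s => d.M s a b) volume 0 1 := by
  have h := (mat_int d.V d.Vᴴ d.A d.A_int a b).add (mat_int d.F d.Fᴴ d.B d.B_int a b)
  rw [intervalIntegrable_iff_integrableOn_Ioo_of_le zero_le_one] at h ⊢
  refine h.congr_fun ?_ measurableSet_Ioo
  intro s hs
  simp only [d.M_eq hs.1 hs.2, Matrix.add_apply, Pi.add_apply]

noncomputable def G : Matrix N N ℂ := of fun a b => ∫ s in (0:ℝ)..1, d.M s a b

lemma trG_int (C : Matrix N N ℂ) :
    IntervalIntegrable (fun s => (C * d.M s).trace.re) volume 0 1 := by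
  have : IntervalIntegrable (fun s => (C * d.M s).trace) volume 0 1 := by
    simp only [Matrix.trace, Matrix.diag_apply, Matrix.mul_apply]
    refine ii_sum fun k => ?_
    exact ii_sum fun l => (d.M_int _ _).const_mul _
  rw [intervalIntegrable_iff] at this ⊢
  exact this.re

lemma trG (C : Matrix N N ℂ) :
    (C * d.G).trace.re = ∫ s in (0:ℝ)..1, (C * d.M s).trace.re := by
  have h1 : (C * d.G).trace = ∫ s in (0:ℝ)..1, (C * d.M s).trace := by
    simp only [Matrix.trace, Matrix.diag_apply, Matrix.mul_apply]
    rw [intervalIntegral.integral_finsetSum]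
    · refine Finset.sum_congr rfl fun i _ => ?_
      rw [intervalIntegral.integral_finsetSum]
      · refine Finset.sum_congr rfl fun j _ => ?_
        rw [intervalIntegral.integral_const_mul]; rfl
      · exact fun j _ => (d.M_int _ _).const_mul _
    · intro i _
      exact ii_sum fun l => (d.M_int _ _).const_mul _
  have : IntervalIntegrable (fun s => (C * d.M s).trace) volume 0 1 := by
    simp only [Matrix.trace, Matrix.diag_apply, Matrix.mul_apply]
    refine ii_sum fun k => ?_
    exact ii_sum fun l => (d.M_int _ _).const_mul _
  rw [h1]
  exact (Complex.reCLM.intervalIntegral_comp_comm this).symm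

lemma trG_one : d.G.trace.re = d.D := by
  have := d.trG 1
  simp only [Matrix.one_mul] at this
  rw [this, ← R_integral]
  apply intervalIntegral.integral_congr_ae
  rw [Set.uIoc_of_le zero_le_one]
  have h1 : ∀ᵐ s : ℝ, s ≠ 1 := by simp [ae_iff]
  filter_upwards [h1] with s hs hs'
  rw [d.trM hs'.1 (lt_of_le_of_ne hs'.2 hs), Complex.ofReal_re]

end SD

lemma psd_tr {N : Type*} [Fintype N] [DecidableEq N] {ρ : Matrix N N ℂ} (h : ρ.PosSemidef)
    (B : Matrix N N ℂ) : 0 ≤ (B * ρ * Bᴴ).trace.re := by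
  have := (h.mul_mul_conjTranspose_same B).trace_nonneg
  exact (Complex.nonneg_iff.1 this).1

lemma tr_conj {N : Type*} [Fintype N] (B : Matrix N N ℂ) : Bᴴ.trace.re = B.trace.re := by
  rw [Matrix.trace_conjTranspose]; simp

lemma key_ineq {N N' : Type*} [Fintype N] [DecidableEq N] [Fintype N'] [DecidableEq N']
    (d : SD N) (d' : SD N') (hρ : d.ρ.PosSemidef) (hσ : d.σ.PosSemidef)
    (L : Matrix N' N' ℂ → Matrix N N ℂ) (K : Matrix N N ℂ)
    (h1 : ∀ X, (X * d'.ρ).trace = (L X * (K * d.ρ * Kᴴ)).trace)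
    (h2 : ∀ X, (X * d'.σ).trace = (L X * (K * d.σ * Kᴴ)).trace)
    (hmul : ∀ X Y, L (X * Y) = L X * L Y) (hstar : ∀ X, L Xᴴ = (L X)ᴴ) (hone : L 1 = 1)
    {s : ℝ} (h0 : 0 < s) (hs1 : s < 1) :
    d'.R s ≤ (Kᴴ * K * d.M s).trace.re := by
  have hR := d'.R_eq h0 hs1
  have hl' := d'.lyap h0 hs1
  have hl := d.lyap h0 hs1
  set X := d'.Z s
  set Z := d.Z s with hZ
  set Y := L X with hY
  have q1 : (Xᴴ * d'.ρ).trace = ((1 - s : ℝ) : ℂ) * (Yᴴ * K * d.σ * (Yᴴ * K)ᴴ).trace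
      + (s : ℂ) * (Y * K * d.ρ * (Y * K)ᴴ).trace := by
    conv_lhs => rw [← hl']
    rw [Matrix.mul_add, Matrix.trace_add, Matrix.mul_smul, Matrix.mul_smul, Matrix.trace_smul,
      Matrix.trace_smul, smul_eq_mul, smul_eq_mul]
    congr 2
    · rw [← Matrix.mul_assoc, Matrix.trace_mul_comm, ← Matrix.mul_assoc, h2, hmul, hstar, ← hY]
      rw [Matrix.mul_assoc Y, Matrix.trace_mul_comm Y]
      simp only [conjTranspose_mul, conjTranspose_conjTranspose, Matrix.mul_assoc]
    · rw [← Matrix.mul_assoc, h1, hmul, hstar, ← hY]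
      rw [Matrix.mul_assoc, Matrix.trace_mul_comm]
      simp only [conjTranspose_mul, Matrix.mul_assoc]
  have q2 : (Xᴴ * d'.ρ).trace = ((1 - s : ℝ) : ℂ) * (Yᴴ * K * d.σ * (K * Zᴴ)ᴴ).trace
      + (s : ℂ) * (K * Z * d.ρ * (Y * K)ᴴ).trace := by
    rw [h1, hstar, ← hY]
    conv_lhs => rw [← hl]
    rw [Matrix.mul_add, Matrix.add_mul, Matrix.mul_add, Matrix.trace_add]
    simp only [Matrix.mul_smul, Matrix.smul_mul, Matrix.trace_smul, smul_eq_mul]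
    congr 2
    · simp only [conjTranspose_mul, conjTranspose_conjTranspose, Matrix.mul_assoc]
    · rw [Matrix.trace_mul_comm]
      simp only [conjTranspose_mul, conjTranspose_conjTranspose, Matrix.mul_assoc]
  have p1 := psd_tr hσ (Yᴴ * K - K * Zᴴ)
  have p2 := psd_tr hρ (Y * K - K * Z)
  rw [conjTranspose_sub, Matrix.sub_mul, Matrix.sub_mul, Matrix.mul_sub, Matrix.mul_sub] at p1 p2
  have c1 : (K * Zᴴ * d.σ * (Yᴴ * K)ᴴ).trace.re = (Yᴴ * K * d.σ * (K * Zᴴ)ᴴ).trace.re := by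
    rw [← tr_conj]
    simp only [conjTranspose_mul, conjTranspose_conjTranspose, hσ.1.eq, Matrix.mul_assoc]
  have c2 : (Y * K * d.ρ * (K * Z)ᴴ).trace.re = (K * Z * d.ρ * (Y * K)ᴴ).trace.re := by
    rw [← tr_conj]
    simp only [conjTranspose_mul, conjTranspose_conjTranspose, hρ.1.eq, Matrix.mul_assoc]
  have w : (Kᴴ * K * d.W s).trace = ((1 - s : ℝ) : ℂ) * (K * Zᴴ * d.σ * (K * Zᴴ)ᴴ).trace
      + (s : ℂ) * (K * Z * d.ρ * (K * Z)ᴴ).trace := by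
    rw [SD.W, ← hZ, Matrix.mul_assoc, Matrix.trace_mul_comm, Matrix.mul_add, Matrix.add_mul,
      Matrix.trace_add]
    simp only [Matrix.mul_smul, Matrix.smul_mul, Matrix.trace_smul, smul_eq_mul]
    simp only [conjTranspose_mul, conjTranspose_conjTranspose, Matrix.mul_assoc]
  have t : d'.ρ.trace = (Kᴴ * K * d.ρ).trace := by
    have := h1 1
    rw [hone, Matrix.one_mul, Matrix.one_mul] at this
    rw [this, Matrix.trace_mul_comm, Matrix.mul_assoc]
  have hM : (1 - s) * (Kᴴ * K * d.M s).trace.re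
      = (Kᴴ * K * d.W s).trace.re - (Kᴴ * K * d.ρ).trace.re := by
    have hs' : (1 - s) ≠ 0 := by linarith
    rw [SD.M, Matrix.mul_smul, Matrix.trace_smul, Matrix.mul_sub, Matrix.trace_sub, smul_eq_mul,
      ← Complex.ofReal_inv, Complex.re_ofReal_mul, Complex.sub_re, ← mul_assoc,
      mul_inv_cancel₀ hs', one_mul]
  have q1r := congrArg Complex.re q1
  have q2r := congrArg Complex.re q2
  have wr := congrArg Complex.re w
  have hRr := congrArg Complex.re hR
  simp only [Complex.add_re, Complex.re_ofReal_mul, Complex.sub_re, Matrix.trace_sub,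
    Complex.ofReal_re] at *
  rw [t] at hRr
  have hs0 : 0 < 1 - s := by linarith
  have m1 := mul_nonneg hs0.le p1
  have m2 := mul_nonneg h0.le p2
  rw [c1] at m1
  rw [c2] at m2
  have : (1 - s) * d'.R s ≤ (1 - s) * (Kᴴ * K * d.M s).trace.re := by
    rw [hM, wr]
    linarith
  exact le_of_mul_le_mul_left this hs0

lemma D_le {N N' : Type*} [Fintype N] [DecidableEq N] [Fintype N'] [DecidableEq N']
    (d : SD N) (d' : SD N') (hρ : d.ρ.PosSemidef) (hσ : d.σ.PosSemidef)
    (L : Matrix N' N' ℂ → Matrix N N ℂ) (K : Matrix N N ℂ)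
    (h1 : ∀ X, (X * d'.ρ).trace = (L X * (K * d.ρ * Kᴴ)).trace)
    (h2 : ∀ X, (X * d'.σ).trace = (L X * (K * d.σ * Kᴴ)).trace)
    (hmul : ∀ X Y, L (X * Y) = L X * L Y) (hstar : ∀ X, L Xᴴ = (L X)ᴴ) (hone : L 1 = 1) :
    d'.D ≤ (Kᴴ * K * d.G).trace.re := by
  rw [d.trG, ← d'.R_integral]
  exact integral_mono_on_of_le_Ioo zero_le_one d'.R_int (d.trG_int _)
    fun s hs => key_ineq d d' hρ hσ L K h1 h2 hmul hstar hone hs.1 hs.2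

lemma ptraceSnd_herm {A C : Type*} [Fintype C]
    {ρ : Matrix (A × C) (A × C) ℂ} (h : ρ.IsHermitian) : (ptraceSnd ρ).IsHermitian := by
  ext i j
  simp only [conjTranspose_apply, ptraceSnd, of_apply, star_sum]
  exact Finset.sum_congr rfl fun c _ => h.apply _ _

lemma exists_SD {A C : Type*} [Fintype A] [DecidableEq A] [Fintype C] [DecidableEq C]
    {ρ : Matrix (A × C) (A × C) ℂ} (h : ρ.PosSemidef) :
    ∃ d : SD (A × C), d.ρ = ρ ∧ d.σ = ptraceSnd ρ ⊗ₖ (1 : Matrix C C ℂ) ∧ d.σ.PosSemidef ∧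
      d.D = -(entropy ρ - entropy (ptraceSnd ρ)) := by
  have hA := ptraceSnd_herm h.1
  set V : Matrix (A × C) (A × C) ℂ := (h.1.eigenvectorUnitary : Matrix (A × C) (A × C) ℂ) with hVd
  set F₀ : Matrix A A ℂ := (hA.eigenvectorUnitary : Matrix A A ℂ) with hFd
  set F : Matrix (A × C) (A × C) ℂ := F₀ ⊗ₖ (1 : Matrix C C ℂ) with hF
  set p := h.1.eigenvalues
  set q := hA.eigenvalues
  have V1 : V * Vᴴ = 1 := Unitary.mul_star_self_of_mem h.1.eigenvectorUnitary.2
  have V2 : Vᴴ * V = 1 := Unitary.star_mul_self_of_mem h.1.eigenvectorUnitary.2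
  have f1 : F₀ * F₀ᴴ = 1 := Unitary.mul_star_self_of_mem hA.eigenvectorUnitary.2
  have f2 : F₀ᴴ * F₀ = 1 := Unitary.star_mul_self_of_mem hA.eigenvectorUnitary.2
  have Fs : Fᴴ = F₀ᴴ ⊗ₖ (1 : Matrix C C ℂ) := by
    rw [hF, conjTranspose_kronecker, conjTranspose_one]
  have F1 : F * Fᴴ = 1 := by
    rw [Fs, hF, ← mul_kronecker_mul, f1, Matrix.one_mul, one_kronecker_one]
  have F2 : Fᴴ * F = 1 := by
    rw [Fs, hF, ← mul_kronecker_mul, f2, Matrix.one_mul, one_kronecker_one]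
  have hρ : ρ = V * diagonal (fun i => (p i : ℂ)) * Vᴴ := by
    have := h.1.spectral_theorem
    rw [Unitary.conjStarAlgAut_apply] at this
    exact this
  have hρA : ptraceSnd ρ = F₀ * diagonal (fun i => (q i : ℂ)) * F₀ᴴ := by
    have := hA.spectral_theorem
    rw [Unitary.conjStarAlgAut_apply] at this
    exact this
  have diagJ : ∀ J, (Fᴴ * ρ * F) J J = ((∑ i, p i * ‖(Fᴴ * V) J i‖ ^ 2 : ℝ) : ℂ) := by
    intro J
    have : Fᴴ * ρ * F = (Fᴴ * V) * diagonal (fun i => (p i : ℂ)) * (Fᴴ * V)ᴴ := by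
      conv_lhs => rw [hρ]
      simp only [conjTranspose_mul, conjTranspose_conjTranspose, Matrix.mul_assoc]
    rw [this, Matrix.mul_apply]
    push_cast
    refine Finset.sum_congr rfl fun i _ => ?_
    rw [mul_diagonal, conjTranspose_apply, ← Complex.mul_conj']
    simp only [Complex.star_def]
    ring
  have qsum : ∀ a, q a = ∑ c, ∑ i, p i * ‖(Fᴴ * V) (a, c) i‖ ^ 2 := by
    intro a
    have e1 : (F₀ᴴ * ptraceSnd ρ * F₀) a a = (q a : ℂ) := by
      rw [hρA]
      have : F₀ᴴ * (F₀ * diagonal (fun i => (q i : ℂ)) * F₀ᴴ) * F₀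
          = (F₀ᴴ * F₀) * diagonal (fun i => (q i : ℂ)) * (F₀ᴴ * F₀) := by
        simp only [Matrix.mul_assoc]
      rw [this, f2, Matrix.one_mul, Matrix.mul_one, diagonal_apply_eq]
    have e2 : (F₀ᴴ * ptraceSnd ρ * F₀) a a = ∑ c, (Fᴴ * ρ * F) (a, c) (a, c) := by
      rw [Fs, hF]
      simp only [Matrix.mul_apply, ptraceSnd, of_apply, Fintype.sum_prod_type, kroneckerMap_apply,
        Matrix.one_apply, mul_ite, ite_mul, mul_one, one_mul, zero_mul, mul_zero,
        Finset.sum_ite_eq, Finset.sum_ite_eq', Finset.mem_univ, if_true, Finset.mul_sum,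
        Finset.sum_mul]
      rw [Finset.sum_comm_cycle]
    rw [e1] at e2
    simp only [diagJ] at e2
    exact_mod_cast e2
  have p0 : ∀ i, 0 ≤ p i := h.eigenvalues_nonneg
  have term0 : ∀ J i, 0 ≤ p i * ‖(Fᴴ * V) J i‖ ^ 2 := fun J i => mul_nonneg (p0 i) (by positivity)
  have q0 : ∀ a, 0 ≤ q a := fun a => by
    rw [qsum]
    exact Finset.sum_nonneg fun c _ => Finset.sum_nonneg fun i _ => term0 _ _
  have supp : ∀ i (J : A × C), 0 < p i → (Fᴴ * V) J i ≠ 0 → 0 < q J.1 := by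
    intro i J hp hU
    rw [qsum]
    have : 0 < p i * ‖(Fᴴ * V) J i‖ ^ 2 := mul_pos hp (by positivity)
    refine lt_of_lt_of_le this ?_
    refine le_trans ?_ (Finset.single_le_sum
      (f := fun c => ∑ i, p i * ‖(Fᴴ * V) (J.1, c) i‖ ^ 2)
      (fun c _ => Finset.sum_nonneg fun i _ => term0 _ _) (Finset.mem_univ J.2))
    exact Finset.single_le_sum (f := fun i => p i * ‖(Fᴴ * V) J i‖ ^ 2) (fun i _ => term0 _ _)
      (Finset.mem_univ i)
  let d : SD (A × C) := ⟨V, F, p, fun J => q J.1, V1, V2, F1, F2, p0, fun J => q0 _, supp⟩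
  have hdσ : d.σ = F * diagonal (fun J : A × C => (q J.1 : ℂ)) * Fᴴ := rfl
  refine ⟨d, hρ.symm, ?_, ?_, ?_⟩
  · have : diagonal (fun J : A × C => (q J.1 : ℂ))
        = diagonal (fun i => (q i : ℂ)) ⊗ₖ (1 : Matrix C C ℂ) := by
      rw [← diagonal_one, diagonal_kronecker_diagonal]; simp
    rw [hdσ, this, Fs, hF, ← mul_kronecker_mul, ← mul_kronecker_mul, ← hρA]
    simp
  · rw [hdσ]
    apply PosSemidef.mul_mul_conjTranspose_same
    rw [posSemidef_diagonal_iff]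
    intro J
    exact_mod_cast q0 J.1
  · have eD : d.D = ∑ i, ∑ J : A × C,
      ‖(Fᴴ * V) J i‖ ^ 2 * (p i * (Real.log (p i) - Real.log (q J.1))) := rfl
    have e1 : entropy ρ = ∑ i, Real.negMulLog (p i) := by rw [entropy, dif_pos h.1]
    have e2 : entropy (ptraceSnd ρ) = ∑ i, Real.negMulLog (q i) := by rw [entropy, dif_pos hA]
    have e3 : ∑ i, ∑ J : A × C, ‖(Fᴴ * V) J i‖ ^ 2 * (p i * Real.log (p i))
        = - ∑ i, Real.negMulLog (p i) := by
      rw [← Finset.sum_neg_distrib]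
      refine Finset.sum_congr rfl fun i _ => ?_
      rw [← Finset.sum_mul]
      have := d.colsum i
      change ∑ J, ‖(Fᴴ * V) J i‖ ^ 2 = 1 at this
      rw [this, Real.negMulLog]; ring
    have e4 : ∑ i, ∑ J : A × C, ‖(Fᴴ * V) J i‖ ^ 2 * (p i * Real.log (q J.1))
        = - ∑ i, Real.negMulLog (q i) := by
      rw [Finset.sum_comm, Fintype.sum_prod_type, ← Finset.sum_neg_distrib]
      refine Finset.sum_congr rfl fun a _ => ?_
      rw [Real.negMulLog, neg_mul, neg_neg]
      conv_rhs => arg 1; rw [qsum a]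
      simp only [Finset.sum_mul]
      refine Finset.sum_congr rfl fun c _ => Finset.sum_congr rfl fun i _ => ?_
      ring
    rw [eD, e1, e2]
    simp only [mul_sub, Finset.sum_sub_distrib]
    rw [e3, e4]; ring

section lift
variable {n₁ n₂ n₃ : Type*} [Fintype n₁] [Fintype n₂] [Fintype n₃]
    [DecidableEq n₁] [DecidableEq n₂] [DecidableEq n₃]

noncomputable def liftX (n₁ : Type*) [DecidableEq n₁] {n₂ n₃ : Type*}
    (X : Matrix (n₂ × n₃) (n₂ × n₃) ℂ) :
    Matrix ((n₁ × n₂) × n₃) ((n₁ × n₂) × n₃) ℂ :=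
  of fun P Q => if P.1.1 = Q.1.1 then X (P.1.2, P.2) (Q.1.2, Q.2) else 0

lemma liftX_tr (X : Matrix (n₂ × n₃) (n₂ × n₃) ℂ)
    (T : Matrix ((n₁ × n₂) × n₃) ((n₁ × n₂) × n₃) ℂ) :
    (X * ptraceFst₃ T).trace = (liftX n₁ X * T).trace := by
  simp only [Matrix.trace, Matrix.diag_apply, Matrix.mul_apply, ptraceFst₃, liftX, of_apply,
    Fintype.sum_prod_type, Finset.mul_sum, ite_mul, zero_mul]
  have : ∀ (x : n₁) (a : n₂) (c : n₃), (∑ y : n₁, ∑ b : n₂, ∑ e : n₃,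
      if x = y then X (a, c) (b, e) * T ((y, b), e) ((x, a), c) else 0) =
      ∑ b : n₂, ∑ e : n₃, X (a, c) (b, e) * T ((x, b), e) ((x, a), c) := by
    intro x a c
    rw [Finset.sum_eq_single x]
    · simp
    · intro y _ hy
      simp [Ne.symm hy]
    · simp
  simp only [this]
  symm
  rw [Finset.sum_comm]
  refine Finset.sum_congr rfl fun a _ => ?_
  rw [Finset.sum_comm]
  refine Finset.sum_congr rfl fun c _ => ?_
  rw [Finset.sum_comm]
  refine Finset.sum_congr rfl fun b _ => ?_
  rw [Finset.sum_comm]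

lemma liftX_mul (X Y : Matrix (n₂ × n₃) (n₂ × n₃) ℂ) :
    liftX n₁ (X * Y) = liftX n₁ X * liftX n₁ Y := by
  ext ⟨⟨x, a⟩, c⟩ ⟨⟨y, b⟩, e⟩
  simp only [Matrix.mul_apply, liftX, of_apply, Fintype.sum_prod_type, ite_mul, zero_mul]
  rw [Finset.sum_eq_single x]
  · by_cases h : x = y <;> simp [h]
  · intro z _ hz
    simp [Ne.symm hz]
  · simp

lemma liftX_star (X : Matrix (n₂ × n₃) (n₂ × n₃) ℂ) :
    liftX n₁ Xᴴ = (liftX n₁ X)ᴴ := by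
  ext ⟨⟨x, a⟩, c⟩ ⟨⟨y, b⟩, e⟩
  simp only [liftX, of_apply, conjTranspose_apply]
  by_cases h : x = y
  · simp [h]
  · simp [h, Ne.symm h]

lemma liftX_one : liftX n₁ (1 : Matrix (n₂ × n₃) (n₂ × n₃) ℂ) = 1 := by
  ext ⟨⟨x, a⟩, c⟩ ⟨⟨y, b⟩, e⟩
  simp only [liftX, of_apply, Matrix.one_apply, Prod.mk.injEq]
  by_cases h : x = y <;> simp [h]

lemma ptraceFst₃_psd {T : Matrix ((n₁ × n₂) × n₃) ((n₁ × n₂) × n₃) ℂ} (h : T.PosSemidef) :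
    (ptraceFst₃ T).PosSemidef := by
  have : ptraceFst₃ T = ∑ i : n₁, T.submatrix (fun p => ((i, p.1), p.2)) (fun p => ((i, p.1), p.2)) := by
    ext p q
    simp [ptraceFst₃, Matrix.sum_apply]
  rw [this]
  exact posSemidef_sum _ fun i _ => h.submatrix _

lemma ptraceSnd_conj {A C : Type*} [Fintype A] [Fintype C] [DecidableEq C]
    (K L : Matrix A A ℂ) (ρ : Matrix (A × C) (A × C) ℂ) :
    ptraceSnd ((K ⊗ₖ (1 : Matrix C C ℂ)) * ρ * (L ⊗ₖ (1 : Matrix C C ℂ))) =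
      K * ptraceSnd ρ * L := by
  ext a b
  simp only [Matrix.mul_apply, ptraceSnd, of_apply, Fintype.sum_prod_type, kroneckerMap_apply,
        Matrix.one_apply, mul_ite, ite_mul, mul_one, zero_mul, mul_zero,
        Finset.sum_ite_eq, Finset.sum_ite_eq', Finset.mem_univ, if_true, Finset.mul_sum,
        Finset.sum_mul]
  rw [Finset.sum_comm_cycle, Finset.sum_comm_cycle]

lemma sig_eq (K L : Matrix (n₁ × n₂) (n₁ × n₂) ℂ)
    (ρ : Matrix ((n₁ × n₂) × n₃) ((n₁ × n₂) × n₃) ℂ) :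
    ptraceSnd (ptraceFst₃ ((K ⊗ₖ (1 : Matrix n₃ n₃ ℂ)) * ρ * (L ⊗ₖ (1 : Matrix n₃ n₃ ℂ)))) ⊗ₖ
      (1 : Matrix n₃ n₃ ℂ) =
    ptraceFst₃ ((K ⊗ₖ (1 : Matrix n₃ n₃ ℂ)) * (ptraceSnd ρ ⊗ₖ (1 : Matrix n₃ n₃ ℂ)) *
      (L ⊗ₖ (1 : Matrix n₃ n₃ ℂ))) := by
  rw [← mul_kronecker_mul, ← mul_kronecker_mul, Matrix.mul_one, Matrix.mul_one, ← ptraceSnd_conj]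
  generalize (K ⊗ₖ (1 : Matrix n₃ n₃ ℂ)) * ρ * (L ⊗ₖ (1 : Matrix n₃ n₃ ℂ)) = T
  ext ⟨a, c⟩ ⟨b, e⟩
  simp only [kroneckerMap_apply, ptraceSnd, ptraceFst₃, of_apply]
  rw [Finset.sum_comm, Finset.sum_mul]

lemma pointwise_ineq {ρ : Matrix ((n₁ × n₂) × n₃) ((n₁ × n₂) × n₃) ℂ} (hρ : ρ.PosSemidef)
    (d : SD ((n₁ × n₂) × n₃)) (h1 : d.ρ = ρ) (h2 : d.σ = ptraceSnd ρ ⊗ₖ (1 : Matrix n₃ n₃ ℂ))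
    (h3 : d.σ.PosSemidef) (K : Matrix (n₁ × n₂) (n₁ × n₂) ℂ) :
    -(((Kᴴ * K) ⊗ₖ (1 : Matrix n₃ n₃ ℂ)) * d.G).trace.re ≤
      entropy (ptraceFst₃ ((K ⊗ₖ (1 : Matrix n₃ n₃ ℂ)) * ρ * (Kᴴ ⊗ₖ (1 : Matrix n₃ n₃ ℂ)))) -
      entropy (ptraceSnd (ptraceFst₃
        ((K ⊗ₖ (1 : Matrix n₃ n₃ ℂ)) * ρ * (Kᴴ ⊗ₖ (1 : Matrix n₃ n₃ ℂ))))) := by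
  have hK : (K ⊗ₖ (1 : Matrix n₃ n₃ ℂ))ᴴ = Kᴴ ⊗ₖ (1 : Matrix n₃ n₃ ℂ) := by
    rw [conjTranspose_kronecker, conjTranspose_one]
  have hT : ((K ⊗ₖ (1 : Matrix n₃ n₃ ℂ)) * ρ * (Kᴴ ⊗ₖ (1 : Matrix n₃ n₃ ℂ))).PosSemidef := by
    rw [← hK]; exact hρ.mul_mul_conjTranspose_same _
  obtain ⟨d', g1, g2, g3, g4⟩ := exists_SD (ptraceFst₃_psd hT)
  have := D_le d d' (h1 ▸ hρ) h3 (liftX n₁) (K ⊗ₖ (1 : Matrix n₃ n₃ ℂ))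
    (fun X => by rw [g1, liftX_tr, hK, h1])
    (fun X => by rw [g2, sig_eq, liftX_tr, hK, h2])
    liftX_mul liftX_star liftX_one
  rw [g4, hK, ← mul_kronecker_mul, Matrix.one_mul] at this
  linarith

lemma entropy_zero {N : Type*} [Fintype N] [DecidableEq N] :
    entropy (0 : Matrix N N ℂ) = 0 := by
  unfold entropy
  split_ifs with h
  · have : h.eigenvalues = 0 := h.eigenvalues_eq_zero_iff.2 rfl
    simp [this]
  · rfl

lemma tr_kron (B : Matrix (n₁ × n₂) (n₁ × n₂) ℂ)
    (G : Matrix ((n₁ × n₂) × n₃) ((n₁ × n₂) × n₃) ℂ) :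
    ((B ⊗ₖ (1 : Matrix n₃ n₃ ℂ)) * G).trace = ∑ a, ∑ b, B a b * ptraceSnd G b a := by
  simp only [Matrix.trace, Matrix.diag_apply, Matrix.mul_apply, ptraceSnd, of_apply,
    Fintype.sum_prod_type (α₁ := n₁ × n₂), kroneckerMap_apply, Matrix.one_apply, mul_ite, ite_mul,
    mul_one, zero_mul, mul_zero, Finset.sum_ite_eq, Finset.mem_univ, if_true, Finset.mul_sum]
  refine Finset.sum_congr rfl fun a _ => ?_
  rw [Finset.sum_comm]

end lift

end helpers

/-- **Stronger subadditivity with a continuum of operators**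
(finite-dimensional integral version):
`S[ρ₁₂₃] − S[ρ₁₂] ≤ ∫_{α : n^α>0} n^α (S[ρ₂₃^α] − S[ρ₂^α]) dμ(α)`.
(By the boundedness of the entropy and `∫ n^α dμ(α) = 1`, the integrand on the
right is integrable; this is recorded in the hypothesis `hwd`.) -/
theorem stronger_subadditivity_integral
    {n₁ n₂ n₃ : Type*} [Fintype n₁] [Fintype n₂] [Fintype n₃]
    [DecidableEq n₁] [DecidableEq n₂] [DecidableEq n₃]
    {Ω : Type*} [MeasurableSpace Ω] (μ : Measure Ω)
    (ρ : Matrix ((n₁ × n₂) × n₃) ((n₁ × n₂) × n₃) ℂ)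
    (hρ : ρ.PosSemidef) (hρtr : ρ.trace = 1)
    (K : Ω → Matrix (n₁ × n₂) (n₁ × n₂) ℂ)
    (hKm : ∀ i j, Measurable fun α => K α i j)
    (hKint : ∀ i j, Integrable (fun α => ((K α)ᴴ * K α) i j) μ)
    (hKres : ∀ i j, (∫ α, ((K α)ᴴ * K α) i j ∂μ) =
      (1 : Matrix (n₁ × n₂) (n₁ × n₂) ℂ) i j)
    (n : Ω → ℝ)
    (hn : ∀ α, n α =
      (((K α ⊗ₖ (1 : Matrix n₃ n₃ ℂ)) * ρ *
        ((K α)ᴴ ⊗ₖ (1 : Matrix n₃ n₃ ℂ))).trace).re)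
    (ρ23 : Ω → Matrix (n₂ × n₃) (n₂ × n₃) ℂ)
    (hρ23 : ∀ α, 0 < n α → ρ23 α = ((n α : ℂ))⁻¹ •
      ptraceFst₃ ((K α ⊗ₖ (1 : Matrix n₃ n₃ ℂ)) * ρ *
        ((K α)ᴴ ⊗ₖ (1 : Matrix n₃ n₃ ℂ))))
    (ρ2 : Ω → Matrix n₂ n₂ ℂ)
    (hρ2 : ∀ α, 0 < n α → ρ2 α = ptraceSnd (ρ23 α))
    (hwd : IntegrableOn (fun α => n α * (entropy (ρ23 α) - entropy (ρ2 α)))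
      {α | 0 < n α} μ) :
    entropy ρ - entropy (ptraceSnd ρ) ≤
      ∫ α in {α | 0 < n α}, n α * (entropy (ρ23 α) - entropy (ρ2 α)) ∂μ := by
  obtain ⟨d, h1, h2, h3, h4⟩ := exists_SD hρ
  have hP := pointwise_ineq hρ d h1 h2 h3
  -- nonnegativity of the weights
  have hTpsd : ∀ α, ((K α ⊗ₖ (1 : Matrix n₃ n₃ ℂ)) * ρ *
      ((K α)ᴴ ⊗ₖ (1 : Matrix n₃ n₃ ℂ))).PosSemidef := by
    intro α
    have hK : (K α ⊗ₖ (1 : Matrix n₃ n₃ ℂ))ᴴ = (K α)ᴴ ⊗ₖ (1 : Matrix n₃ n₃ ℂ) := by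
      rw [conjTranspose_kronecker, conjTranspose_one]
    rw [← hK]; exact hρ.mul_mul_conjTranspose_same _
  have hn0 : ∀ α, 0 ≤ n α := by
    intro α
    rw [hn]
    exact (Complex.nonneg_iff.1 (hTpsd α).trace_nonneg).1
  have hnm : Measurable n := by
    have : n = fun α => (((K α ⊗ₖ (1 : Matrix n₃ n₃ ℂ)) * ρ *
        ((K α)ᴴ ⊗ₖ (1 : Matrix n₃ n₃ ℂ))).trace).re := funext hn
    rw [this]
    apply Complex.measurable_re.comp
    simp only [Matrix.trace, Matrix.diag_apply, Matrix.mul_apply, kroneckerMap_apply,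
      conjTranspose_apply]
    refine Finset.measurable_sum _ fun i _ => Finset.measurable_sum _ fun j _ => ?_
    refine Measurable.mul (Finset.measurable_sum _ fun k _ => ?_) ?_
    · exact ((hKm _ _).mul_const _).mul_const _
    · exact (Complex.continuous_conj.measurable.comp (hKm _ _)).mul_const _
  have hms : MeasurableSet {α | 0 < n α} := measurableSet_lt measurable_const hnm
  have hpos : ∀ α, 0 < n α →
      -((((K α)ᴴ * K α) ⊗ₖ (1 : Matrix n₃ n₃ ℂ)) * d.G).trace.re ≤
        n α * (entropy (ρ23 α) - entropy (ρ2 α)) := by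
    intro α hα
    have hs : (Real.sqrt (n α))⁻¹ * (Real.sqrt (n α))⁻¹ = (n α)⁻¹ := by
      rw [← mul_inv, Real.mul_self_sqrt hα.le]
    have hsc : (((Real.sqrt (n α))⁻¹ : ℝ) : ℂ) * (((Real.sqrt (n α))⁻¹ : ℝ) : ℂ) = (n α : ℂ)⁻¹ := by
      rw [← Complex.ofReal_mul, hs, Complex.ofReal_inv]
    have := hP ((((Real.sqrt (n α))⁻¹ : ℝ) : ℂ) • K α)
    have hst : star (((Real.sqrt (n α))⁻¹ : ℝ) : ℂ) = (((Real.sqrt (n α))⁻¹ : ℝ) : ℂ) := by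
      simp only [Complex.star_def, Complex.conj_ofReal]
    have e23 : ptraceFst₃ ((((n α : ℂ))⁻¹) • ((K α ⊗ₖ (1 : Matrix n₃ n₃ ℂ)) * ρ *
        ((K α)ᴴ ⊗ₖ (1 : Matrix n₃ n₃ ℂ)))) = ρ23 α := by
      rw [hρ23 α hα]
      ext p q
      simp [ptraceFst₃, Finset.mul_sum]
    simp only [conjTranspose_smul, hst, smul_kronecker, Matrix.smul_mul, Matrix.mul_smul,
      smul_smul, hsc] at this
    rw [e23, ← hρ2 α hα, Matrix.trace_smul, smul_eq_mul, ← Complex.ofReal_inv,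
      Complex.re_ofReal_mul] at this
    have h5 := mul_le_mul_of_nonneg_left this hα.le
    rwa [← mul_neg, ← mul_assoc, mul_inv_cancel₀ hα.ne', one_mul] at h5
  have hzero : ∀ α, ¬ 0 < n α →
      -((((K α)ᴴ * K α) ⊗ₖ (1 : Matrix n₃ n₃ ℂ)) * d.G).trace.re ≤ 0 := by
    intro α hα
    have h0 : n α = 0 := le_antisymm (not_lt.1 hα) (hn0 α)
    have hT0 : (K α ⊗ₖ (1 : Matrix n₃ n₃ ℂ)) * ρ * ((K α)ᴴ ⊗ₖ (1 : Matrix n₃ n₃ ℂ)) = 0 := by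
      rw [← (hTpsd α).trace_eq_zero_iff]
      apply Complex.ext
      · rw [← hn, h0]; rfl
      · exact (Complex.nonneg_iff.1 (hTpsd α).trace_nonneg).2.symm
    have := hP (K α)
    rw [hT0] at this
    have z1 : ptraceFst₃ (0 : Matrix ((n₁ × n₂) × n₃) ((n₁ × n₂) × n₃) ℂ) = 0 := by
      ext p q; simp [ptraceFst₃]
    have z2 : ptraceSnd (0 : Matrix (n₂ × n₃) (n₂ × n₃) ℂ) = 0 := by
      ext p q; simp [ptraceSnd]
    rwa [z1, z2, entropy_zero, entropy_zero, sub_zero] at this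
  have hint : Integrable (fun α => ((((K α)ᴴ * K α) ⊗ₖ (1 : Matrix n₃ n₃ ℂ)) * d.G).trace) μ := by
    simp only [tr_kron]
    exact integrable_finsetSum _ fun a _ => integrable_finsetSum _ fun b _ =>
      (hKint a b).mul_const _
  have hval : ∫ α, ((((K α)ᴴ * K α) ⊗ₖ (1 : Matrix n₃ n₃ ℂ)) * d.G).trace ∂μ = d.G.trace := by
    have e : d.G.trace = (((1 : Matrix (n₁ × n₂) (n₁ × n₂) ℂ) ⊗ₖ (1 : Matrix n₃ n₃ ℂ)) *
        d.G).trace := by rw [one_kronecker_one, Matrix.one_mul]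
    rw [e]
    simp only [tr_kron]
    rw [MeasureTheory.integral_finsetSum _ fun a _ => integrable_finsetSum _ fun b _ =>
      (hKint a b).mul_const _]
    refine Finset.sum_congr rfl fun a _ => ?_
    rw [MeasureTheory.integral_finsetSum _ fun b _ => (hKint a b).mul_const _]
    refine Finset.sum_congr rfl fun b _ => ?_
    rw [MeasureTheory.integral_mul_const, hKres]
  have hvalr : ∫ α, -((((K α)ᴴ * K α) ⊗ₖ (1 : Matrix n₃ n₃ ℂ)) * d.G).trace.re ∂μ =
      entropy ρ - entropy (ptraceSnd ρ) := by
    rw [MeasureTheory.integral_neg]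
    have := Complex.reCLM.integral_comp_comm hint
    simp only [Complex.reCLM_apply] at this
    rw [this, hval, d.trG_one, h4, neg_neg]
  rw [← hvalr, ← MeasureTheory.integral_indicator hms]
  refine MeasureTheory.integral_mono hint.re.neg ((integrable_indicator_iff hms).2 hwd) ?_
  intro α
  by_cases hα : 0 < n α
  · rw [Set.indicator_of_mem (show α ∈ {α | 0 < n α} from hα)]
    exact hpos α hα
  · rw [Set.indicator_of_notMem (show α ∉ {α | 0 < n α} from hα)]
    exact hzero α hα
end
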